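/- arXiv:1908.00567 — 2 statements merged into one kernel-verified Lean document; each statement's English description precedes it below -/
import Mathlib

section
/- Let Q be a finite acyclic quiver, 𝒬• = (Q¹,…,Q^ℓ) an admissible, ordered, Dynkin subquiver partition, β₁,…,β_r a Reineke order on Φ₊(𝒬•) with chosen vertices i(u) satisfying β_u(i(u)) = 1, γ a dimension vector, and m = (m₁,…,m_r) a 𝒬•-partition of γ. Then for all f_u ∈ 𝒜_{β_u,m_u} (u = 1,…,r), writing f_u = f_u(ω_{i(u),1},…,ω_{i(u),m_u}), one has ι*_m(f₁ * f₂ * ⋯ * f_r) = f₁(t_{1,1},…,t_{1,m₁}) · f₂(t_{2,1},…,t_{2,m₂}) ⋯ f_r(t_{r,1},…,t_{r,m_r}) · g_m, where g_m := ι*_m((1 ∈ ℋ_{m₁β₁}) * ⋯ * (1 ∈ ℋ_{m_rβ_r})) is a nonzero polynomial in the variables t_{u,v}, independent of f₁,…,f_r. -/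
open MvPolynomial
open scoped Classical

/-- A finite quiver with vertex set `Fin n`: a finite type of arrows together with
head and tail maps. -/
structure FinQuiver (n : ℕ) where
  Arr : Type
  [fintypeArr : Fintype Arr]
  hd : Arr → Fin n
  tl : Arr → Fin n

attribute [instance] FinQuiver.fintypeArr

variable {n : ℕ}

/-- `Q` is acyclic: there is no oriented cycle, i.e. no path
`a₁, …, a_{k+1}` (with `hd aₘ = tl aₘ₊₁`) whose final head equals its initial tail. -/
def FinQuiver.Acyclic (Q : FinQuiver n) : Prop :=
  ∀ (k : ℕ) (c : Fin (k + 1) → Q.Arr),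
    (∀ m : Fin k, Q.hd (c m.castSucc) = Q.tl (c m.succ)) →
    Q.hd (c (Fin.last k)) ≠ Q.tl (c 0)

/-- The Euler form `χ_Q` of the quiver `Q`. -/
def FinQuiver.euler (Q : FinQuiver n) (α β : Fin n → ℕ) : ℤ :=
  ∑ i : Fin n, (α i : ℤ) * β i - ∑ a : Q.Arr, (α (Q.tl a) : ℤ) * β (Q.hd a)

/-- The opposite antisymmetrization `⟨α,β⟩ = χ_Q(β,α) − χ_Q(α,β)`. -/
def FinQuiver.lam (Q : FinQuiver n) (α β : Fin n → ℕ) : ℤ :=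
  Q.euler β α - Q.euler α β

/-- The polynomial ring in the variables `ω_{i,j}`, `i ∈ Q₀`, `j ∈ ℕ` (0-indexed). -/
abbrev PolyQ (n : ℕ) := MvPolynomial (Fin n × ℕ) ℚ

/-- The permutation of the variables at vertex `i` induced by a permutation of `ℕ`. -/
def vertexPerm (i : Fin n) (σ : Equiv.Perm ℕ) : Fin n × ℕ → Fin n × ℕ :=
  fun p => if p.1 = i then (i, σ p.2) else p

/-- `f` is, for each vertex `i`, symmetric in the variables `ω_{i,0},…,ω_{i,γ i − 1}`. -/
def SymmIn (γ : Fin n → ℕ) (f : PolyQ n) : Prop :=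
  ∀ (i : Fin n) (σ : Equiv.Perm ℕ),
    (∀ j : ℕ, σ j ≠ j → j < γ i) → rename (vertexPerm i σ) f = f

lemma vars_smul_subset (c : ℚ) (f : PolyQ n) : (c • f).vars ⊆ f.vars := by
  rw [MvPolynomial.smul_eq_C_mul]
  refine (MvPolynomial.vars_mul _ _).trans ?_
  simp [MvPolynomial.vars_C]

/-- `ℋ_γ`: polynomials using only the variables `ω_{i,j}`, `j < γ i`, which are
symmetric at each vertex.  A `ℚ`-submodule of `PolyQ n`. -/
noncomputable def Hspace (γ : Fin n → ℕ) : Submodule ℚ (PolyQ n) where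
  carrier := {f | (∀ p ∈ f.vars, p.2 < γ p.1) ∧ SymmIn γ f}
  add_mem' := by
    rintro f g ⟨hf1, hf2⟩ ⟨hg1, hg2⟩
    refine ⟨fun p hp => ?_, fun i σ hσ => ?_⟩
    · rcases Finset.mem_union.mp (MvPolynomial.vars_add_subset f g hp) with h | h
      exacts [hf1 p h, hg1 p h]
    · rw [map_add, hf2 i σ hσ, hg2 i σ hσ]
  zero_mem' := by
    refine ⟨fun p hp => ?_, fun i σ hσ => map_zero _⟩
    simp [MvPolynomial.vars_0] at hp
  smul_mem' := by
    rintro c f ⟨hf1, hf2⟩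
    refine ⟨fun p hp => hf1 p (vars_smul_subset c f hp), fun i σ hσ => ?_⟩
    rw [map_smul, hf2 i σ hσ]

/-- Polynomials all of whose variables sit at vertex `i`. -/
noncomputable def onlyVertex (i : Fin n) : Submodule ℚ (PolyQ n) where
  carrier := {f | ∀ p ∈ f.vars, p.1 = i}
  add_mem' := by
    intro f g hf hg p hp
    rcases Finset.mem_union.mp (MvPolynomial.vars_add_subset f g hp) with h | h
    exacts [hf p h, hg p h]
  zero_mem' := by
    intro p hp
    simp [MvPolynomial.vars_0] at hp
  smul_mem' := by
    intro c f hf p hp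
    exact hf p (vars_smul_subset c f hp)

/-- `𝒜_{β,m}`: the subspace of `ℋ_{m·β}` of polynomials depending only on the
variables `ω_{i,0},…,ω_{i,m−1}` at the distinguished vertex `i`. -/
noncomputable def Aspace (β : Fin n → ℕ) (i : Fin n) (m : ℕ) : Submodule ℚ (PolyQ n) :=
  Hspace (fun v => m * β v) ⊓ onlyVertex i

/-- Substitute for the `j`-th variable at vertex `i` the variable `ω_{i,s}` where `s`
is the `j`-th element of `T i` in increasing order. -/
noncomputable def substAlong (T : Fin n → Finset ℕ) : PolyQ n →ₐ[ℚ] PolyQ n :=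
  aeval fun p : Fin n × ℕ => X (p.1, ((T p.1).sort (· ≤ ·)).getD p.2 0)

/-- The index set of the Kontsevich–Soibelman localization sum:
for each vertex, a `γ₁ i`-element subset of `{0,…,γ₁ i + γ₂ i − 1}`. -/
def shuffles (γ₁ γ₂ : Fin n → ℕ) : Finset (Fin n → Finset ℕ) :=
  Fintype.piFinset fun i => (Finset.range (γ₁ i + γ₂ i)).powerset.filter fun s => s.card = γ₁ i

def shuffleCompl (γ₁ γ₂ : Fin n → ℕ) (S : Fin n → Finset ℕ) : Fin n → Finset ℕ :=
  fun i => Finset.range (γ₁ i + γ₂ i) \ S i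

/-- The numerator factor attached to the arrow `a`:
`∏_{j' ∈ S̄_{h a}} ∏_{j ∈ S_{t a}} (ω_{h a, j'} − ω_{t a, j})`. -/
noncomputable def arrowFactor (Q : FinQuiver n) (γ₁ γ₂ : Fin n → ℕ)
    (S : Fin n → Finset ℕ) (a : Q.Arr) : PolyQ n :=
  ∏ j' ∈ shuffleCompl γ₁ γ₂ S (Q.hd a), ∏ j ∈ S (Q.tl a),
    (X (Q.hd a, j') - X (Q.tl a, j))

noncomputable def interactionNum (Q : FinQuiver n) (γ₁ γ₂ : Fin n → ℕ)
    (S : Fin n → Finset ℕ) : PolyQ n :=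
  ∏ a : Q.Arr, arrowFactor Q γ₁ γ₂ S a

noncomputable def interactionDen (γ₁ γ₂ : Fin n → ℕ) (S : Fin n → Finset ℕ) : PolyQ n :=
  ∏ i : Fin n, ∏ j' ∈ shuffleCompl γ₁ γ₂ S i, ∏ j ∈ S i, (X (i, j') - X (i, j))

/-- The Kontsevich–Soibelman localization sum, an element of the field of rational
functions (the fraction field of `PolyQ n`). -/
noncomputable def cohaMulRat (Q : FinQuiver n) (γ₁ γ₂ : Fin n → ℕ) (f₁ f₂ : PolyQ n) :
    FractionRing (PolyQ n) :=
  ∑ S ∈ shuffles γ₁ γ₂,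
    algebraMap (PolyQ n) (FractionRing (PolyQ n))
        (substAlong S f₁ * substAlong (shuffleCompl γ₁ γ₂ S) f₂ * interactionNum Q γ₁ γ₂ S) /
      algebraMap (PolyQ n) (FractionRing (PolyQ n)) (interactionDen γ₁ γ₂ S)

/-- The CoHA product `f₁ * f₂`: the unique polynomial representing the localization
sum (and `0` if the sum were not a polynomial, which never happens). -/
noncomputable def cohaMul (Q : FinQuiver n) (γ₁ γ₂ : Fin n → ℕ) (f₁ f₂ : PolyQ n) : PolyQ n :=
  if h : ∃ P : PolyQ n,
      algebraMap (PolyQ n) (FractionRing (PolyQ n)) P = cohaMulRat Q γ₁ γ₂ f₁ f₂ then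
    h.choose
  else 0

/-- Iterated, left-to-right, CoHA product of a list of dimension-vector/polynomial pairs.
Returns the total dimension vector together with the product. -/
noncomputable def cohaProd (Q : FinQuiver n) :
    List ((Fin n → ℕ) × PolyQ n) → (Fin n → ℕ) × PolyQ n
  | [] => (fun _ => 0, 1)
  | x :: xs => xs.foldl (fun acc y => (acc.1 + y.1, cohaMul Q acc.1 y.1 acc.2 y.2)) x

/-- Left-to-right CoHA product `f 0 * f 1 * ⋯ * f (r−1)` with `f u ∈ ℋ_{γ u}`. -/
noncomputable def cohaProdFin (Q : FinQuiver n) {r : ℕ} (γ : Fin r → Fin n → ℕ)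
    (f : Fin r → PolyQ n) : PolyQ n :=
  (cohaProd Q (List.ofFn fun u => (γ u, f u))).2

/-- The quiver with one vertex and no arrows. -/
def A1 : FinQuiver 1 := { Arr := Empty, hd := Empty.elim, tl := Empty.elim }

/-- `ψ_p = x₁ ^ p ∈ ℋ₁(A₁)`. -/
noncomputable def psi (p : ℕ) : PolyQ 1 := X ((0 : Fin 1), 0) ^ p

def oneDim : Fin 1 → ℕ := fun _ => 1

/-- The simple dimension vector `e_i`. -/
def simpleDim (i : Fin n) : Fin n → ℕ := fun v => if v = i then 1 else 0

/-- A subquiver of `Q`. -/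
structure Subquiver (Q : FinQuiver n) where
  verts : Finset (Fin n)
  arrows : Finset Q.Arr
  hd_mem : ∀ a ∈ arrows, Q.hd a ∈ verts
  tl_mem : ∀ a ∈ arrows, Q.tl a ∈ verts

def Subquiver.Full {Q : FinQuiver n} (Q' : Subquiver Q) : Prop :=
  ∀ a : Q.Arr, Q.hd a ∈ Q'.verts → Q.tl a ∈ Q'.verts → a ∈ Q'.arrows

/-- Adjacency in the underlying undirected graph of a subquiver. -/
def Subquiver.Adj {Q : FinQuiver n} (Q' : Subquiver Q) (x y : Fin n) : Prop :=
  ∃ a ∈ Q'.arrows, (Q.hd a = x ∧ Q.tl a = y) ∨ (Q.hd a = y ∧ Q.tl a = x)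

def Subquiver.Connected {Q : FinQuiver n} (Q' : Subquiver Q) : Prop :=
  ∀ x ∈ Q'.verts, ∀ y ∈ Q'.verts, Relation.ReflTransGen Q'.Adj x y

/-- The Euler form of the subquiver `Q'` (on `ℤ`-valued vectors). -/
def Subquiver.eulerZ {Q : FinQuiver n} (Q' : Subquiver Q) (α β : Fin n → ℤ) : ℤ :=
  ∑ i ∈ Q'.verts, α i * β i - ∑ a ∈ Q'.arrows, α (Q.tl a) * β (Q.hd a)

/-- Positive definiteness of the Tits form of `Q'` on vectors supported on `Q'`. -/
def Subquiver.PosDefTits {Q : FinQuiver n} (Q' : Subquiver Q) : Prop :=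
  ∀ β : Fin n → ℤ, (∀ i, i ∉ Q'.verts → β i = 0) → β ≠ 0 → 0 < Q'.eulerZ β β

/-- A connected full subquiver with positive definite Tits form. -/
def Subquiver.IsDynkin {Q : FinQuiver n} (Q' : Subquiver Q) : Prop :=
  Q'.Connected ∧ Q'.Full ∧ Q'.PosDefTits

/-- A positive root of `Q'`: a nonzero dimension vector supported on `Q'` with
Tits form equal to `1`. -/
def Subquiver.IsPosRoot {Q : FinQuiver n} (Q' : Subquiver Q) (β : Fin n → ℕ) : Prop :=
  (∀ i, i ∉ Q'.verts → β i = 0) ∧ β ≠ 0 ∧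
    Q'.eulerZ (fun i => (β i : ℤ)) (fun i => (β i : ℤ)) = 1

/-- A subquiver regarded as a quiver in its own right (on the ambient vertex set). -/
def Subquiver.toQuiver {Q : FinQuiver n} (Q' : Subquiver Q) : FinQuiver n :=
  { Arr := {a : Q.Arr // a ∈ Q'.arrows}, hd := fun a => Q.hd a.1, tl := fun a => Q.tl a.1 }

/-- An (ordered list) subquiver partition `𝒬• = (Q¹,…,Q^ℓ)`: nonempty connected
subquivers whose vertex sets partition `Q₀`. -/
structure SubqPartition (Q : FinQuiver n) (ℓ : ℕ) where
  part : Fin ℓ → Subquiver Q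
  nonempty' : ∀ j, (part j).verts.Nonempty
  connected' : ∀ j, (part j).Connected
  cover : ∀ i : Fin n, ∃! j, i ∈ (part j).verts

/-- The set `𝒬•₁` of arrows belonging to one of the parts. -/
noncomputable def SubqPartition.arrs {Q : FinQuiver n} {ℓ : ℕ} (P : SubqPartition Q ℓ) : Finset Q.Arr :=
  Finset.univ.biUnion fun j => (P.part j).arrows

/-- The partition is admissible and ordered: every arrow not inside a part goes from a
later part to an earlier part (head before tail). -/
def SubqPartition.Ordered {Q : FinQuiver n} {ℓ : ℕ} (P : SubqPartition Q ℓ) : Prop :=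
  ∀ a : Q.Arr, a ∉ P.arrs → ∀ i j : Fin ℓ,
    Q.hd a ∈ (P.part i).verts → Q.tl a ∈ (P.part j).verts → i < j

/-- Every part is a Dynkin subquiver. -/
def SubqPartition.Dynkin {Q : FinQuiver n} {ℓ : ℕ} (P : SubqPartition Q ℓ) : Prop :=
  ∀ j, (P.part j).IsDynkin

/-- `β : Fin r → (Fin n → ℕ)` is a Reineke-ordered enumeration of `Φ₊(𝒬•)`, with
`blk u` the part to which `β u` belongs: block-monotone, enumerating all positive roots
without repetition, and within each block `u < v → ⟨β u, β v⟩ ≥ 0`. -/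
def IsReinekeOrder {Q : FinQuiver n} {ℓ : ℕ} (P : SubqPartition Q ℓ) {r : ℕ}
    (β : Fin r → Fin n → ℕ) (blk : Fin r → Fin ℓ) : Prop :=
  Monotone blk ∧
  (∀ u, (P.part (blk u)).IsPosRoot (β u)) ∧
  Function.Injective β ∧
  (∀ j (b : Fin n → ℕ), (P.part j).IsPosRoot b → ∃ u, β u = b) ∧
  (∀ u v : Fin r, u < v → blk u = blk v → 0 ≤ Q.lam (β u) (β v))

set_option linter.all false

/-- product of `X - x k` -/
noncomputable def rootProd {A : Type} [CommRing A] (Y : Finset ℕ) (x : ℕ → A) : Polynomial A :=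
  ∏ k ∈ Y, (Polynomial.X - Polynomial.C (x k))

lemma rootProd_monic {A : Type} [CommRing A] (Y : Finset ℕ) (x : ℕ → A) :
    (rootProd Y x).Monic :=
  Polynomial.monic_prod_of_monic _ _ fun k _ => Polynomial.monic_X_sub_C _

lemma rootProd_natDegree {A : Type} [CommRing A] [Nontrivial A] (Y : Finset ℕ) (x : ℕ → A) :
    (rootProd Y x).natDegree = Y.card := by
  unfold rootProd
  rw [Polynomial.natDegree_prod_of_monic _ _ fun k _ => Polynomial.monic_X_sub_C _]
  simp

lemma rootProd_map {A B : Type} [CommRing A] [CommRing B] (f : A →+* B) (Y : Finset ℕ) (x : ℕ → A) :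
    (rootProd Y x).map f = rootProd Y (fun k => f (x k)) := by
  unfold rootProd
  rw [Polynomial.map_prod]
  simp

lemma rootProd_eval {A : Type} [CommRing A] (Y : Finset ℕ) (x : ℕ → A) (a : A) :
    (rootProd Y x).eval a = ∏ k ∈ Y, (a - x k) := by
  unfold rootProd
  rw [Polynomial.eval_prod]
  simp

lemma rootProd_congr {A : Type} [CommRing A] {Y : Finset ℕ} {x y : ℕ → A}
    (h : ∀ k ∈ Y, x k = y k) : rootProd Y x = rootProd Y y :=
  Finset.prod_congr rfl fun k hk => by rw [h k hk]

/-- Vandermonde product. -/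
noncomputable def vdm {A : Type} [CommRing A] (Y : Finset ℕ) (x : ℕ → A) : A :=
  ∏ k ∈ Y, ∏ l ∈ Y.filter (fun l => k < l), (x l - x k)

lemma monic_smul_eq_zero {A : Type} [CommRing A] {p : Polynomial A} (hp : p.Monic) {a : A}
    (h : Polynomial.C a * p = 0) : a = 0 := by
  have := congrArg (fun q => Polynomial.coeff q p.natDegree) h
  simpa [Polynomial.coeff_C_mul, hp.coeff_natDegree] using this

lemma adjoinRoot_inj {A : Type} [CommRing A] {p : Polynomial A} (hp : p.Monic)
    (h0 : 0 < p.natDegree) (q : Polynomial A) (hq : q.natDegree < p.natDegree)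
    (h : AdjoinRoot.mk p q = 0) : q = 0 := by
  rw [AdjoinRoot.mk_eq_zero] at h
  by_contra hne
  have := Polynomial.Monic.not_dvd_of_natDegree_lt hp hne hq
  exact this h

theorem splitRing (Y : Finset ℕ) : ∀ (A : Type) [CommRing A] (p : Polynomial A), p.Monic →
    p.natDegree = Y.card →
    ∃ (B : Type) (_ : CommRing B) (_ : Algebra A B) (x : ℕ → B),
      rootProd Y x = p.map (algebraMap A B) ∧
      Function.Injective (algebraMap A B) ∧
      ((∀ k : ℕ, k ≠ 0 → IsUnit (k : A)) →
        ∀ a : A, algebraMap A B a * vdm Y x = 0 → a = 0) := by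
  induction Y using Finset.induction_on_min with
  | empty =>
    intro A _ p hp hd
    refine ⟨A, inferInstance, Algebra.id A, fun _ => 0, ?_, ?_, ?_⟩
    · simp at hd
      have : p = 1 := by
        exact hp.natDegree_eq_zero.1 hd
      subst this
      simp [rootProd]
    · exact fun a b h => h
    · intro _ a h
      simpa [vdm] using h
  | insert k0 Y hk0 ih =>
    intro A _ p hp hd
    have hnot : k0 ∉ Y := fun h => lt_irrefl _ (hk0 k0 h)
    rw [Finset.card_insert_of_notMem hnot] at hd
    have hpos : 0 < p.natDegree := by omega
    have hnt : Nontrivial A := by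
      by_contra hn
      rw [not_nontrivial_iff_subsingleton] at hn
      have : p = 0 := Subsingleton.elim _ _
      rw [this] at hpos
      simp at hpos
    let A1 := AdjoinRoot p
    let y : A1 := AdjoinRoot.root p
    have hinj1 : Function.Injective (algebraMap A A1) := by
      rw [injective_iff_map_eq_zero]
      intro a ha
      have : AdjoinRoot.mk p (Polynomial.C a) = 0 := ha
      have := adjoinRoot_inj hp hpos _ (by simpa using hpos) this
      simpa using this
    have hnt1 : Nontrivial A1 := hinj1.nontrivial
    let pm : Polynomial A1 := p.map (algebraMap A A1)
    have hroot : pm.IsRoot y := AdjoinRoot.isRoot_root p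
    let h := pm /ₘ (Polynomial.X - Polynomial.C y)
    have hfac : (Polynomial.X - Polynomial.C y) * h = pm := Polynomial.mul_divByMonic_eq_iff_isRoot.2 hroot
    have hpm : pm.Monic := hp.map _
    have hh : h.Monic := by
      have := hpm
      rw [← hfac] at this
      exact (Polynomial.monic_X_sub_C y).of_mul_monic_left this
    have hdeg : h.natDegree = Y.card := by
      have h1 : pm.natDegree = p.natDegree := hp.natDegree_map _
      rw [← hfac, Polynomial.Monic.natDegree_mul (Polynomial.monic_X_sub_C y) hh,
        Polynomial.natDegree_X_sub_C] at h1
      omega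
    obtain ⟨B, iB, iAB, x, hx1, hx2, hx3⟩ := ih A1 h hh hdeg
    letI : Algebra A B := ((algebraMap A1 B).comp (algebraMap A A1)).toAlgebra
    have hab : ∀ a, algebraMap A B a = algebraMap A1 B (algebraMap A A1 a) := fun a => rfl
    have hYx : ∀ l ∈ Y, Function.update x k0 (algebraMap A1 B y) l = x l := fun l hl => by
      rw [Function.update_of_ne]
      rintro rfl
      exact hnot hl
    refine ⟨B, iB, inferInstance, Function.update x k0 (algebraMap A1 B y), ?_, ?_, ?_⟩
    · have : p.map (algebraMap A B) = pm.map (algebraMap A1 B) := by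
        rw [Polynomial.map_map]; rfl
      rw [this, ← hfac, Polynomial.map_mul, ← hx1]
      unfold rootProd
      rw [Finset.prod_insert hnot]
      congr 1
      · simp
      · exact rootProd_congr hYx
    · exact hx2.comp hinj1
    · intro hu a ha
      have hu1 : ∀ k : ℕ, k ≠ 0 → IsUnit (k : A1) := fun k hk => by
        have := (hu k hk).map (algebraMap A A1)
        simpa using this
      have hv : vdm (insert k0 Y) (Function.update x k0 (algebraMap A1 B y))
          = algebraMap A1 B (h.eval y) * (-1) ^ Y.card * vdm Y x := by
        unfold vdm
        rw [Finset.prod_insert hnot]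
        have e1 : (insert k0 Y).filter (fun l => k0 < l) = Y := by
          ext l
          simp only [Finset.mem_filter, Finset.mem_insert]
          constructor
          · rintro ⟨rfl | h, h2⟩
            · exact absurd h2 (lt_irrefl _)
            · exact h
          · exact fun h => ⟨Or.inr h, hk0 l h⟩
        have e2 : ∀ k ∈ Y, (insert k0 Y).filter (fun l => k < l) = Y.filter (fun l => k < l) := by
          intro k hk
          ext l
          simp only [Finset.mem_filter, Finset.mem_insert]
          constructor
          · rintro ⟨rfl | h, h2⟩
            · exact absurd (hk0 k hk) (by omega)
            · exact ⟨h, h2⟩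
          · exact fun h => ⟨Or.inr h.1, h.2⟩
        rw [e1]
        congr 1
        · have : algebraMap A1 B (h.eval y) = (rootProd Y x).eval (algebraMap A1 B y) := by
            rw [hx1, Polynomial.eval_map, Polynomial.eval₂_at_apply]
          rw [this, rootProd_eval, ← Finset.prod_const, ← Finset.prod_mul_distrib]
          refine Finset.prod_congr rfl fun l hl => ?_
          rw [hYx l hl]
          simp
        · refine Finset.prod_congr rfl fun k hk => ?_
          rw [e2 k hk]
          refine Finset.prod_congr rfl fun l hl => ?_
          rw [hYx l (Finset.mem_filter.1 hl).1, hYx k hk]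
      rw [hv, hab] at ha
      have ha2 : algebraMap A1 B (algebraMap A A1 a * h.eval y) * vdm Y x = 0 := by
        have : ((-1 : B) ^ Y.card) * ((-1) ^ Y.card) = 1 := by
          rw [← mul_pow]; simp
        calc _ = ((-1 : B) ^ Y.card) * (algebraMap A1 B (algebraMap A A1 a) *
              (algebraMap A1 B (h.eval y) * (-1) ^ Y.card * vdm Y x)) := by
                rw [map_mul]
                linear_combination -(algebraMap A1 B (algebraMap A A1 a)) * algebraMap A1 B (h.eval y) * vdm Y x * this
          _ = 0 := by rw [ha, mul_zero]
      have ha3 := hx3 hu1 _ ha2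
      have hder : h.eval y = pm.derivative.eval y := by
        rw [← hfac]
        simp
      have ha4 : AdjoinRoot.mk p (Polynomial.C a * p.derivative) = 0 := by
        rw [map_mul]
        rw [hder] at ha3
        have : AdjoinRoot.mk p p.derivative = pm.derivative.eval y := by
          change _ = (p.map (algebraMap A A1)).derivative.eval y
          rw [Polynomial.derivative_map, Polynomial.eval_map]
          rw [← Polynomial.aeval_def]
          exact (AdjoinRoot.aeval_eq _).symm
        rw [this]
        exact ha3
      have ha5 := adjoinRoot_inj hp hpos _ (by
        refine lt_of_le_of_lt (Polynomial.natDegree_C_mul_le _ _) ?_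
        exact Polynomial.natDegree_derivative_lt (by omega)) ha4
      have ha6 := congrArg (fun q => Polynomial.coeff q Y.card) ha5
      simp only [Polynomial.coeff_C_mul, Polynomial.coeff_derivative, Polynomial.coeff_zero] at ha6
      rw [← hd, hp.coeff_natDegree, one_mul] at ha6
      have := hu (Y.card + 1) (by omega)
      push_cast at this
      exact (IsUnit.mul_left_eq_zero this).1 ha6

lemma prod_sub_exists {R : Type} [CommRing R] (s : Finset ℕ) (f : ℕ → R) (T : R) :
    ∃ g, ∏ l ∈ s, (f l - T) = ∏ l ∈ s, f l + T * g := by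
  induction s using Finset.induction_on with
  | empty => exact ⟨0, by simp⟩
  | insert a s ha ih =>
    obtain ⟨g, hg⟩ := ih
    refine ⟨f a * g - ∏ l ∈ s, f l - T * g, ?_⟩
    rw [Finset.prod_insert ha, Finset.prod_insert ha, hg]
    ring

lemma lemE {A : Type} [CommRing A] (q : ℕ) (θ : ℕ → A) (T U : Polynomial A) (hU : U.Monic)
    (hd : U.natDegree < q) (h : rootProd (Finset.range q) θ ∣ T * U) :
    ∏ l ∈ Finset.range q, T.eval (θ l) = 0 := by
  rcases subsingleton_or_nontrivial A with hs | hs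
  · exact Subsingleton.elim _ _
  obtain ⟨g, hg⟩ := prod_sub_exists (Finset.range q) (fun l => Polynomial.C (T.eval (θ l))) T
  have h1 : rootProd (Finset.range q) θ ∣
      ∏ l ∈ Finset.range q, (Polynomial.C (T.eval (θ l)) - T) := by
    refine Finset.prod_dvd_prod_of_dvd _ _ fun l _ => ?_
    rw [← dvd_neg, neg_sub]
    exact Polynomial.X_sub_C_dvd_sub_C_eval
  rw [hg] at h1
  have h2 : rootProd (Finset.range q) θ ∣
      Polynomial.C (∏ l ∈ Finset.range q, T.eval (θ l)) * U := by
    have e : Polynomial.C (∏ l ∈ Finset.range q, T.eval (θ l)) * U =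
      (∏ l ∈ Finset.range q, Polynomial.C (T.eval (θ l)) + T * g) * U - T * U * g := by
      rw [map_prod]; ring
    rw [e]
    exact dvd_sub (Dvd.dvd.mul_right h1 _) (Dvd.dvd.mul_right h _)
  apply monic_smul_eq_zero hU
  by_contra hne
  refine Polynomial.Monic.not_dvd_of_natDegree_lt (rootProd_monic _ _) hne ?_ h2
  rw [rootProd_natDegree, Finset.card_range]
  exact lt_of_le_of_lt (Polynomial.natDegree_C_mul_le _ _) hd

theorem lemL (e q : ℕ) : ∀ (p : ℕ) (A : Type) [CommRing A] (c : A) (T U S P' : Polynomial A)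
    (θ : ℕ → A), U.Monic → P'.Monic → P'.natDegree = p + e →
    (p = 0 ∨ U.natDegree ≤ q + e) →
    Polynomial.C c * T * U = Polynomial.C c * S * rootProd (Finset.range q) θ * P' →
    (∀ (B : Type) [CommRing B] [Algebra A B] (y w : ℕ → B),
      rootProd (Finset.range p) y * rootProd (Finset.range e) w = P'.map (algebraMap A B) →
      algebraMap A B c * ∏ j ∈ Finset.range p, (U.map (algebraMap A B)).eval (y j) = 0) →
    c * ∏ l ∈ Finset.range q, T.eval (θ l) = 0 := by
  intro p
  induction p with
  | zero =>
    intro A _ c T U S P' θ hU hP hd _ _ H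
    obtain ⟨B, iB, iAB, w, hw1, hw2, _⟩ := splitRing (Finset.range e) A P' hP (by simpa using hd)
    have := H B w w (by simpa [rootProd] using hw1)
    simp only [Finset.range_zero, Finset.prod_empty, mul_one] at this
    have : c = 0 := hw2 (by rw [this, map_zero])
    rw [this, zero_mul]
  | succ p ih =>
    intro A _ c T U S P' θ hU hP hd hdU heq H
    rcases subsingleton_or_nontrivial A with hs | hs
    · exact Subsingleton.elim _ _
    have hdU' : U.natDegree ≤ q + e := by
      rcases hdU with h | h
      · omega
      · exact h
    have hpos : 0 < P'.natDegree := by omega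
    let A1 := AdjoinRoot P'
    let y : A1 := AdjoinRoot.root P'
    let φ := algebraMap A A1
    have hinj1 : Function.Injective φ := by
      rw [injective_iff_map_eq_zero]
      intro a ha
      have : AdjoinRoot.mk P' (Polynomial.C a) = 0 := ha
      have := adjoinRoot_inj hP hpos _ (by simpa using hpos) this
      simpa using this
    have hnt1 : Nontrivial A1 := hinj1.nontrivial
    have hmk : ∀ F : Polynomial A, AdjoinRoot.mk P' F = (F.map φ).eval y := by
      intro F
      rw [Polynomial.eval_map, ← Polynomial.aeval_def]
      exact (AdjoinRoot.aeval_eq _).symm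
    have hroot : (P'.map φ).IsRoot y := AdjoinRoot.isRoot_root P'
    obtain ⟨P1, hP1⟩ : ∃ P1, (Polynomial.X - Polynomial.C y) * P1 = P'.map φ :=
      ⟨_, Polynomial.mul_divByMonic_eq_iff_isRoot.2 hroot⟩
    have hP1m : P1.Monic := by
      have := hP.map φ
      rw [← hP1] at this
      exact (Polynomial.monic_X_sub_C y).of_mul_monic_left this
    have hP1d : P1.natDegree = p + e := by
      have h1 : (P'.map φ).natDegree = P'.natDegree := hP.natDegree_map _
      rw [← hP1, Polynomial.Monic.natDegree_mul (Polynomial.monic_X_sub_C y) hP1m,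
        Polynomial.natDegree_X_sub_C] at h1
      omega
    obtain ⟨Tt, hTt⟩ : (Polynomial.X - Polynomial.C (Polynomial.X : Polynomial A)) ∣
        T.map Polynomial.C - Polynomial.C T := by
      have := Polynomial.X_sub_C_dvd_sub_C_eval (a := (Polynomial.X : Polynomial A))
        (p := T.map Polynomial.C)
      rwa [Polynomial.eval_map, Polynomial.eval₂_C_X] at this
    let T1 : Polynomial A1 := Tt.map (AdjoinRoot.mk P')
    have hT1 : T.map φ - Polynomial.C (AdjoinRoot.mk P' T) =
        (Polynomial.X - Polynomial.C y) * T1 := by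
      have := congrArg (Polynomial.map (AdjoinRoot.mk P')) hTt
      rw [Polynomial.map_sub, Polynomial.map_mul, Polynomial.map_sub, Polynomial.map_map,
        Polynomial.map_C, Polynomial.map_X, Polynomial.map_C] at this
      exact this
    let c1 : A1 := φ c * AdjoinRoot.mk P' U
    have hc1T : c1 * AdjoinRoot.mk P' T = 0 := by
      have := congrArg (AdjoinRoot.mk P') heq
      rw [map_mul _ (_ * _) P', AdjoinRoot.mk_self, mul_zero, map_mul, map_mul] at this
      have e : AdjoinRoot.mk P' (Polynomial.C c) = φ c := rfl
      rw [e] at this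
      linear_combination this
    have heqm := congrArg (Polynomial.map φ) heq
    simp only [Polynomial.map_mul, Polynomial.map_C, ← hP1, rootProd_map] at heqm
    have key : Polynomial.C c1 * T1 * U.map φ =
        Polynomial.C c1 * S.map φ * rootProd (Finset.range q) (fun k => φ (θ k)) * P1 := by
      apply (Polynomial.monic_X_sub_C y).isRegular.left
      have h1 : Polynomial.C c1 * Polynomial.C (AdjoinRoot.mk P' T) = 0 := by
        rw [← map_mul, hc1T, map_zero]
      have h2 : Polynomial.C c1 = Polynomial.C (φ c) * Polynomial.C (AdjoinRoot.mk P' U) := by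
        rw [← map_mul]
      show (Polynomial.X - Polynomial.C y) * _ = (Polynomial.X - Polynomial.C y) * _
      linear_combination Polynomial.C (AdjoinRoot.mk P' U) * heqm
        - Polynomial.C c1 * U.map φ * hT1 - U.map φ * h1
        + (T.map φ * U.map φ - S.map φ * rootProd (Finset.range q) (fun k => φ (θ k)) * ((Polynomial.X - Polynomial.C y) * P1)) * h2
    have ihr := ih A1 c1 T1 (U.map φ) (S.map φ) P1 (fun k => φ (θ k)) (hU.map φ) hP1m hP1d
      (Or.inr (by rw [hU.natDegree_map]; exact hdU')) key ?_
    · have hR : ∀ l, T1.eval (φ (θ l)) = AdjoinRoot.mk P' (Tt.eval (Polynomial.C (θ l))) := by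
        intro l
        have : φ (θ l) = AdjoinRoot.mk P' (Polynomial.C (θ l)) := rfl
        rw [this, Polynomial.eval_map, Polynomial.eval₂_at_apply]
      simp only [hR] at ihr
      rw [← map_prod] at ihr
      have ihr2 : AdjoinRoot.mk P' (Polynomial.C c * U *
          ∏ l ∈ Finset.range q, Tt.eval (Polynomial.C (θ l))) = 0 := by
        rw [map_mul, map_mul]; exact ihr
      rw [AdjoinRoot.mk_eq_zero] at ihr2
      obtain ⟨g, hg⟩ := prod_sub_exists (Finset.range q) (fun l => Polynomial.C (T.eval (θ l))) T
      have hev : ∀ l, Polynomial.C (T.eval (θ l)) - T =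
          (-1) * (Polynomial.X - Polynomial.C (θ l)) * Tt.eval (Polynomial.C (θ l)) := by
        intro l
        have := congrArg (Polynomial.eval (Polynomial.C (θ l))) hTt
        rw [Polynomial.eval_sub, Polynomial.eval_mul, Polynomial.eval_sub, Polynomial.eval_map,
          Polynomial.eval₂_at_apply, Polynomial.eval_C, Polynomial.eval_X, Polynomial.eval_C] at this
        rw [this]; ring
      simp only [hev] at hg
      rw [Finset.prod_mul_distrib, Finset.prod_mul_distrib, Finset.prod_const, Finset.card_range,
        ← map_prod] at hg
      change _ * rootProd (Finset.range q) θ * _ = _ at hg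
      have hdv : rootProd (Finset.range q) θ * P' ∣
          Polynomial.C (c * ∏ l ∈ Finset.range q, T.eval (θ l)) * U := by
        have e1 : Polynomial.C (c * ∏ l ∈ Finset.range q, T.eval (θ l)) * U =
            (-1) ^ q * (rootProd (Finset.range q) θ * (Polynomial.C c * U *
              ∏ l ∈ Finset.range q, Tt.eval (Polynomial.C (θ l)))) -
            (rootProd (Finset.range q) θ * P') * (Polynomial.C c * S * g) := by
          rw [map_mul]
          linear_combination (-Polynomial.C c * U) * hg - g * heq
        rw [e1]
        exact dvd_sub (Dvd.dvd.mul_left (mul_dvd_mul_left _ ihr2) _) (Dvd.dvd.mul_right dvd_rfl _)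
      apply monic_smul_eq_zero hU
      by_contra hne
      refine Polynomial.Monic.not_dvd_of_natDegree_lt ((rootProd_monic _ _).mul hP) hne ?_ hdv
      rw [(rootProd_monic _ _).natDegree_mul hP, rootProd_natDegree, Finset.card_range, hd]
      refine lt_of_le_of_lt (Polynomial.natDegree_C_mul_le _ _) ?_
      omega
    · intro B iB iAB y' w hy
      letI : Algebra A B := ((algebraMap A1 B).comp φ).toAlgebra
      have hab : algebraMap A B = (algebraMap A1 B).comp φ := rfl
      have hc : ∀ j ∈ Finset.range p, Function.update y' p (algebraMap A1 B y) j = y' j := by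
        intro j hj
        rw [Function.update_of_ne]
        rintro rfl
        simp at hj
      have := H B (Function.update y' p (algebraMap A1 B y)) w ?_
      · rw [Finset.prod_range_succ, Function.update_self, Finset.prod_congr rfl (fun j hj => by rw [hc j hj])] at this
        simp only [hab, ← Polynomial.map_map] at this
        rw [Polynomial.eval_map (algebraMap A1 B), Polynomial.eval₂_at_apply, ← hmk] at this
        rw [map_mul]
        rw [RingHom.comp_apply] at this
        rw [← this]; ring
      · unfold rootProd at hy ⊢
        rw [Finset.prod_range_succ, Function.update_self, Finset.prod_congr rfl (fun j hj => by rw [hc j hj])]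
        rw [hab, ← Polynomial.map_map, ← hP1, Polynomial.map_mul, ← hy]
        simp
        ring

/-- The universal vanishing property. -/
def Vanish {E : Type} [Fintype E] (hd tl : E → Fin n) (K δ : Fin n → ℕ) : Prop :=
  ∀ (A : Type) [CommRing A] (S : Fin n → Polynomial A) (θ : Fin n → ℕ → A),
    (∀ j, S j * rootProd (Finset.range (δ j)) (θ j) = Polynomial.X ^ (K j + δ j)) →
    ∏ a, ∏ l ∈ Finset.range (δ (hd a)), (S (tl a)).eval (θ (hd a) l) = 0

section
variable {E : Type} [Fintype E] (hd tl : E → Fin n) (i : Fin n) (K δ : Fin n → ℕ)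

lemma vanish_split {A : Type} [CommRing A] (S : Fin n → Polynomial A) (θ : Fin n → ℕ → A) :
    ∏ a, ∏ l ∈ Finset.range (δ (hd a)), (S (tl a)).eval (θ (hd a) l) =
    (∏ a ∈ Finset.univ.filter (fun a => ¬ hd a = i),
      ∏ l ∈ Finset.range (δ (hd a)), (S (tl a)).eval (θ (hd a) l)) *
    ∏ l ∈ Finset.range (δ i),
      (∏ a ∈ Finset.univ.filter (fun a => hd a = i), S (tl a)).eval (θ i l) := by
  rw [← Finset.prod_filter_mul_prod_filter_not Finset.univ (fun a => hd a = i), mul_comm]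
  congr 1
  simp only [Polynomial.eval_prod]
  rw [Finset.prod_comm]
  refine Finset.prod_congr rfl fun a ha => ?_
  rw [(Finset.mem_filter.1 ha).2]

lemma vanish_TU {A : Type} [CommRing A] (S : Fin n → Polynomial A) (θ : Fin n → ℕ → A)
    (h : ∀ j, S j * rootProd (Finset.range (δ j)) (θ j) = Polynomial.X ^ (K j + δ j)) :
    (∏ a ∈ Finset.univ.filter (fun a => hd a = i), S (tl a)) *
    (∏ a ∈ Finset.univ.filter (fun a => hd a = i),
      rootProd (Finset.range (δ (tl a))) (θ (tl a))) =
    Polynomial.X ^ (∑ a ∈ Finset.univ.filter (fun a => hd a = i), (K (tl a) + δ (tl a))) := by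
  rw [← Finset.prod_mul_distrib, ← Finset.prod_pow_eq_pow_sum]
  exact Finset.prod_congr rfl fun a _ => h _

lemma vanish_Udeg {A : Type} [CommRing A] [Nontrivial A] (θ : Fin n → ℕ → A) :
    (∏ a ∈ Finset.univ.filter (fun a => hd a = i),
      rootProd (Finset.range (δ (tl a))) (θ (tl a))).natDegree =
    ∑ a ∈ Finset.univ.filter (fun a => hd a = i), δ (tl a) := by
  rw [Polynomial.natDegree_prod_of_monic _ _ fun a _ => rootProd_monic _ _]
  refine Finset.sum_congr rfl fun a _ => ?_
  rw [rootProd_natDegree, Finset.card_range]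

lemma vanish_Umonic {A : Type} [CommRing A] (θ : Fin n → ℕ → A) :
    (∏ a ∈ Finset.univ.filter (fun a => hd a = i),
      rootProd (Finset.range (δ (tl a))) (θ (tl a))).Monic :=
  Polynomial.monic_prod_of_monic _ _ fun a _ => rootProd_monic _ _

lemma vanish_direct
    (h1 : ∑ a ∈ Finset.univ.filter (fun a => hd a = i), δ (tl a) < δ i)
    (h2 : K i + δ i ≤ ∑ a ∈ Finset.univ.filter (fun a => hd a = i), (K (tl a) + δ (tl a))) :
    Vanish hd tl K δ := by
  intro A _ S θ h
  rcases subsingleton_or_nontrivial A with hs | hs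
  · exact Subsingleton.elim _ _
  rw [vanish_split hd tl i]
  apply mul_eq_zero_of_right
  refine lemE (δ i) (θ i) _ _ (vanish_Umonic hd tl i δ θ) ?_ ?_
  · rwa [vanish_Udeg]
  · rw [vanish_TU hd tl i K δ S θ h]
    refine dvd_trans ?_ (pow_dvd_pow _ h2)
    rw [← h i]
    exact Dvd.intro_left _ rfl

lemma vanish_reflect (K' δ' : Fin n → ℕ) (hsink : ∀ a, tl a ≠ i)
    (hK : ∀ j, j ≠ i → K' j = K j) (hδ : ∀ j, j ≠ i → δ' j = δ j)
    (hKi : K' i = (∑ a ∈ Finset.univ.filter (fun a => hd a = i), K (tl a)) - K i)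
    (hsum : K' i + δ' i + (K i + δ i) =
      ∑ a ∈ Finset.univ.filter (fun a => hd a = i), (K (tl a) + δ (tl a)))
    (hV : Vanish (fun a => if hd a = i then tl a else hd a)
      (fun a => if hd a = i then i else tl a) K' δ') :
    Vanish hd tl K δ := by
  intro A _ S θ h
  rcases subsingleton_or_nontrivial A with hs | hs
  · exact Subsingleton.elim _ _
  rw [vanish_split hd tl i]
  refine lemL (δ' i) (δ i) (K' i) A _ _ _ (S i) (Polynomial.X ^ (K' i + δ' i)) (θ i)
    (vanish_Umonic hd tl i δ θ) (Polynomial.monic_X_pow _) (Polynomial.natDegree_X_pow _) ?_ ?_ ?_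
  · rw [vanish_Udeg]
    rw [Finset.sum_add_distrib] at hsum
    omega
  · rw [mul_assoc, vanish_TU hd tl i K δ S θ h, mul_assoc (Polynomial.C _) (S i), h i, mul_assoc, ← pow_add,
      ← hsum]
    congr 2
    ring
  · intro B _ _ y w hyw
    rw [Polynomial.map_pow, Polynomial.map_X] at hyw
    let f := algebraMap A B
    have := hV B (Function.update (fun j => (S j).map f) i (rootProd (Finset.range (K' i)) y))
      (Function.update (fun j l => f (θ j l)) i w) ?_
    · rw [← Finset.prod_filter_mul_prod_filter_not Finset.univ (fun a => hd a = i)] at this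
      have e1 : ∀ a ∈ Finset.univ.filter (fun a => ¬ hd a = i),
        ∏ l ∈ Finset.range (δ' (if hd a = i then tl a else hd a)),
        Polynomial.eval (Function.update (fun j l => f (θ j l)) i w (if hd a = i then tl a else hd a) l)
          (Function.update (fun j => (S j).map f) i (rootProd (Finset.range (K' i)) y)
            (if hd a = i then i else tl a)) = f (∏ l ∈ Finset.range (δ (hd a)), (S (tl a)).eval (θ (hd a) l)) := by
        intro a ha
        have ha := (Finset.mem_filter.1 ha).2
        rw [if_neg ha, if_neg ha, Function.update_of_ne ha, Function.update_of_ne (hsink a), hδ _ ha,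
          map_prod]
        refine Finset.prod_congr rfl fun l _ => ?_
        rw [Polynomial.eval_map, Polynomial.eval₂_at_apply]
      have e2 : ∀ a ∈ Finset.univ.filter (fun a => hd a = i),
        ∏ l ∈ Finset.range (δ' (if hd a = i then tl a else hd a)),
        Polynomial.eval (Function.update (fun j l => f (θ j l)) i w (if hd a = i then tl a else hd a) l)
          (Function.update (fun j => (S j).map f) i (rootProd (Finset.range (K' i)) y)
            (if hd a = i then i else tl a)) = ∏ l ∈ Finset.range (δ (tl a)), ∏ j ∈ Finset.range (K' i),
              (f (θ (tl a) l) - y j) := by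
        intro a ha
        have ha := (Finset.mem_filter.1 ha).2
        rw [if_pos ha, if_pos ha, Function.update_of_ne (hsink a), Function.update_self, hδ _ (hsink a)]
        refine Finset.prod_congr rfl fun l _ => ?_
        rw [rootProd_eval]
      rw [Finset.prod_congr rfl e1, Finset.prod_congr rfl e2, ← map_prod] at this
      have e3 : ∏ j ∈ Finset.range (K' i), Polynomial.eval (y j) (Polynomial.map f
          (∏ a ∈ Finset.univ.filter (fun a => hd a = i),
            rootProd (Finset.range (δ (tl a))) (θ (tl a)))) =
          (∏ a ∈ Finset.univ.filter (fun a => hd a = i), ∏ l ∈ Finset.range (δ (tl a)),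
            ∏ j ∈ Finset.range (K' i), (-1)) *
          ∏ a ∈ Finset.univ.filter (fun a => hd a = i), ∏ l ∈ Finset.range (δ (tl a)),
            ∏ j ∈ Finset.range (K' i), (f (θ (tl a) l) - y j) := by
        simp only [Polynomial.map_prod, rootProd_map, Polynomial.eval_prod, rootProd_eval]
        rw [Finset.prod_comm, ← Finset.prod_mul_distrib]
        refine Finset.prod_congr rfl fun a _ => ?_
        rw [Finset.prod_comm, ← Finset.prod_mul_distrib]
        refine Finset.prod_congr rfl fun l _ => ?_
        rw [← Finset.prod_mul_distrib]
        refine Finset.prod_congr rfl fun j _ => ?_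
        ring
      change f _ * _ = 0
      rw [e3]
      linear_combination (∏ a ∈ Finset.univ.filter (fun a => hd a = i), ∏ l ∈ Finset.range (δ (tl a)),
            ∏ j ∈ Finset.range (K' i), (-1)) * this
    · intro j
      by_cases hj : j = i
      · subst hj
        rw [Function.update_self, Function.update_self, hyw]
      · rw [Function.update_of_ne hj, Function.update_of_ne hj, hK j hj, hδ j hj]
        have := congrArg (Polynomial.map f) (h j)
        rw [Polynomial.map_mul, rootProd_map, Polynomial.map_pow, Polynomial.map_X] at this
        exact this
end

/-- Euler form on integer vectors. -/
def chi {E : Type} [Fintype E] (hd tl : E → Fin n) (α β : Fin n → ℤ) : ℤ :=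
  ∑ i, α i * β i - ∑ a, α (tl a) * β (hd a)

/-- Complete ordered list of positive roots. -/
structure RootList {E : Type} [Fintype E] (hd tl : E → Fin n) (L : List (Fin n → ℤ)) : Prop where
  posdef : ∀ v, v ≠ 0 → 0 < chi hd tl v v
  nodup : L.Nodup
  pair : L.Pairwise (fun x y => chi hd tl x y ≤ 0 ∧ 0 ≤ chi hd tl y x)
  mem : ∀ v, v ∈ L ↔ (∀ i, 0 ≤ v i) ∧ chi hd tl v v = 1

/-- reflection -/
def refl1 {E : Type} [Fintype E] (hd tl : E → Fin n) (i : Fin n) (v : Fin n → ℤ) : Fin n → ℤ :=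
  Function.update v i (∑ a ∈ Finset.univ.filter (fun a => hd a = i), v (tl a) - v i)

section
variable {E : Type} [Fintype E] (hd tl : E → Fin n)

lemma chi_add_left (x y z : Fin n → ℤ) : chi hd tl (x + y) z = chi hd tl x z + chi hd tl y z := by
  simp only [chi, Pi.add_apply, add_mul, Finset.sum_add_distrib]; ring

lemma chi_add_right (x y z : Fin n → ℤ) : chi hd tl z (x + y) = chi hd tl z x + chi hd tl z y := by
  simp only [chi, Pi.add_apply, mul_add, Finset.sum_add_distrib]; ring

lemma chi_smul_left (c : ℤ) (y z : Fin n → ℤ) : chi hd tl (c • y) z = c * chi hd tl y z := by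
  simp only [chi, Pi.smul_apply, smul_eq_mul, mul_sub, Finset.mul_sum, mul_assoc]

lemma chi_neg_left (y z : Fin n → ℤ) : chi hd tl (-y) z = - chi hd tl y z := by
  have := chi_smul_left hd tl (-1) y z
  simpa using this

lemma chi_neg_right (y z : Fin n → ℤ) : chi hd tl y (-z) = - chi hd tl y z := by
  simp [chi]; ring

lemma chi_single_right (v : Fin n → ℤ) (i : Fin n) : chi hd tl v (Pi.single i 1) =
    v i - ∑ a ∈ Finset.univ.filter (fun a => hd a = i), v (tl a) := by
  simp [chi, Pi.single_apply, Finset.sum_filter]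

lemma chi_single_left (v : Fin n → ℤ) (i : Fin n) : chi hd tl (Pi.single i 1) v =
    v i - ∑ a ∈ Finset.univ.filter (fun a => tl a = i), v (hd a) := by
  simp [chi, Pi.single_apply, Finset.sum_filter]

lemma chi_expand_left (x y : Fin n → ℤ) :
    chi hd tl x y = ∑ j, x j * chi hd tl (Pi.single j 1) y := by
  simp only [chi_single_left, mul_sub, Finset.sum_sub_distrib]
  unfold chi
  congr 1
  rw [← Finset.sum_fiberwise Finset.univ tl]
  refine Finset.sum_congr rfl fun j _ => ?_
  rw [Finset.mul_sum]
  refine Finset.sum_congr rfl fun a ha => ?_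
  rw [(Finset.mem_filter.1 ha).2]

lemma chi_split (i : Fin n) (α β : Fin n → ℤ) : chi hd tl α β =
    ∑ j ∈ Finset.univ.erase i, α j * β j + α i * β i
    - ∑ a ∈ Finset.univ.filter (fun a => ¬ hd a = i), α (tl a) * β (hd a)
    - (∑ a ∈ Finset.univ.filter (fun a => hd a = i), α (tl a)) * β i := by
  unfold chi
  rw [← Finset.sum_filter_add_sum_filter_not Finset.univ (fun a => hd a = i), Finset.sum_mul,
    Finset.sum_erase_add _ _ (Finset.mem_univ i)]
  have : ∑ a ∈ Finset.univ.filter (fun a => hd a = i), α (tl a) * β (hd a) =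
    ∑ a ∈ Finset.univ.filter (fun a => hd a = i), α (tl a) * β i :=
    Finset.sum_congr rfl fun a ha => by rw [(Finset.mem_filter.1 ha).2]
  rw [this]; ring

lemma chi_split' (i : Fin n) (α β : Fin n → ℤ) :
    chi (fun a => if hd a = i then tl a else hd a) (fun a => if hd a = i then i else tl a) α β =
    ∑ j ∈ Finset.univ.erase i, α j * β j + α i * β i
    - ∑ a ∈ Finset.univ.filter (fun a => ¬ hd a = i), α (tl a) * β (hd a)
    - α i * (∑ a ∈ Finset.univ.filter (fun a => hd a = i), β (tl a)) := by
  unfold chi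
  rw [← Finset.sum_filter_add_sum_filter_not Finset.univ (fun a => hd a = i), Finset.mul_sum,
    Finset.sum_erase_add _ _ (Finset.mem_univ i)]
  have e1 : ∑ a ∈ Finset.univ.filter (fun a => hd a = i),
      α (if hd a = i then i else tl a) * β (if hd a = i then tl a else hd a) =
    ∑ a ∈ Finset.univ.filter (fun a => hd a = i), α i * β (tl a) :=
    Finset.sum_congr rfl fun a ha => by
      rw [if_pos (Finset.mem_filter.1 ha).2, if_pos (Finset.mem_filter.1 ha).2]
  have e2 : ∑ a ∈ Finset.univ.filter (fun a => ¬ hd a = i),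
      α (if hd a = i then i else tl a) * β (if hd a = i then tl a else hd a) =
    ∑ a ∈ Finset.univ.filter (fun a => ¬ hd a = i), α (tl a) * β (hd a) :=
    Finset.sum_congr rfl fun a ha => by
      rw [if_neg (Finset.mem_filter.1 ha).2, if_neg (Finset.mem_filter.1 ha).2]
  rw [e1, e2]; ring

variable (i : Fin n) (hsink : ∀ a, tl a ≠ i)

lemma refl1_ne (v : Fin n → ℤ) (j : Fin n) (h : j ≠ i) : refl1 hd tl i v j = v j :=
  Function.update_of_ne h _ _

lemma refl1_self (v : Fin n → ℤ) : refl1 hd tl i v i =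
    ∑ a ∈ Finset.univ.filter (fun a => hd a = i), v (tl a) - v i := Function.update_self ..

include hsink

lemma refl1_sum (v : Fin n → ℤ) :
    ∑ a ∈ Finset.univ.filter (fun a => hd a = i), refl1 hd tl i v (tl a) =
    ∑ a ∈ Finset.univ.filter (fun a => hd a = i), v (tl a) :=
  Finset.sum_congr rfl fun a _ => refl1_ne hd tl i v _ (hsink a)

lemma refl1_invol (v : Fin n → ℤ) : refl1 hd tl i (refl1 hd tl i v) = v := by
  ext j
  by_cases h : j = i
  · subst h
    rw [refl1_self, refl1_sum hd tl j hsink, refl1_self]; ring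
  · rw [refl1_ne _ _ _ _ _ h, refl1_ne _ _ _ _ _ h]

lemma refl1_single : refl1 hd tl i (Pi.single i 1) = - Pi.single i 1 := by
  ext j
  by_cases h : j = i
  · subst h
    rw [refl1_self, Finset.sum_eq_zero]
    · simp
    · intro a _; rw [Pi.single_eq_of_ne (hsink a)]
  · rw [refl1_ne _ _ _ _ _ h]; simp [h]

lemma chi_refl (α β : Fin n → ℤ) :
    chi (fun a => if hd a = i then tl a else hd a) (fun a => if hd a = i then i else tl a)
      (refl1 hd tl i α) (refl1 hd tl i β) = chi hd tl α β := by
  rw [chi_split', chi_split hd tl i, refl1_sum hd tl i hsink, refl1_self, refl1_self]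
  have e1 : ∑ j ∈ Finset.univ.erase i, refl1 hd tl i α j * refl1 hd tl i β j =
      ∑ j ∈ Finset.univ.erase i, α j * β j :=
    Finset.sum_congr rfl fun j hj => by
      rw [refl1_ne _ _ _ _ _ (Finset.ne_of_mem_erase hj), refl1_ne _ _ _ _ _ (Finset.ne_of_mem_erase hj)]
  have e2 : ∑ a ∈ Finset.univ.filter (fun a => ¬ hd a = i), refl1 hd tl i α (tl a) * refl1 hd tl i β (hd a)
      = ∑ a ∈ Finset.univ.filter (fun a => ¬ hd a = i), α (tl a) * β (hd a) :=
    Finset.sum_congr rfl fun a ha => by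
      rw [refl1_ne _ _ _ _ _ (hsink a), refl1_ne _ _ _ _ _ (Finset.mem_filter.1 ha).2]
  rw [e1, e2]; ring

lemma chi_single_left_sink (v : Fin n → ℤ) : chi hd tl (Pi.single i 1) v = v i := by
  rw [chi_single_left, Finset.filter_false_of_mem (fun a _ => hsink a)]
  simp

omit hsink

lemma rootList_single {L : List (Fin n → ℤ)} (h : RootList hd tl L) (j : Fin n) :
    Pi.single j 1 ∈ L ∧ ∀ a, tl a = j → hd a ≠ j := by
  have h0 : (0:ℤ) < chi hd tl (Pi.single j 1) (Pi.single j 1) := h.posdef _ (by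
    intro h; have := congrFun h j; simp at this)
  have key : ∀ a, tl a = j → hd a ≠ j := by
    intro a ha hb
    rw [chi_single_left] at h0
    have : (1:ℤ) ≤ ∑ a ∈ Finset.univ.filter (fun a => tl a = j), (Pi.single j 1 : Fin n → ℤ) (hd a) := by
      have := Finset.single_le_sum (f := fun a => (Pi.single j 1 : Fin n → ℤ) (hd a))
        (s := Finset.univ.filter (fun a => tl a = j)) (fun b _ => by
          by_cases h : hd b = j <;> simp [h]) (Finset.mem_filter.2 ⟨Finset.mem_univ a, ha⟩)
      simpa [hb] using this
    simp at h0 this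
    omega
  refine ⟨?_, key⟩
  rw [h.mem]
  refine ⟨fun k => ?_, ?_⟩
  · by_cases h : k = j
    · subst h; simp
    · simp [h]
  · rw [chi_single_left, Finset.sum_eq_zero]
    · simp
    · intro a ha
      rw [Pi.single_eq_of_ne (key a (Finset.mem_filter.1 ha).2)]

lemma rootList_last {L : List (Fin n → ℤ)} {x : Fin n → ℤ} (h : RootList hd tl (L ++ [x])) :
    ∃ i, x = Pi.single i 1 ∧ (∀ a, tl a ≠ i) := by
  have hx := (h.mem x).1 (by simp)
  have hp := (List.pairwise_append.1 h.pair).2.2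
  have h1 : ∃ i, x = Pi.single i 1 := by
    by_contra hne
    push Not at hne
    have : chi hd tl x x ≤ 0 := by
      rw [chi_expand_left]
      refine Finset.sum_nonpos fun j _ => ?_
      have hj := (rootList_single hd tl h j).1
      have hj2 : Pi.single j 1 ∈ L := by
        rcases List.mem_append.1 hj with h | h
        · exact h
        · exact absurd (List.mem_singleton.1 h).symm (hne j)
      exact mul_nonpos_of_nonneg_of_nonpos (hx.1 j) (hp _ hj2 x (by simp)).1
    omega
  obtain ⟨i, rfl⟩ := h1
  refine ⟨i, rfl, fun a ha => ?_⟩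
  have hne := (rootList_single hd tl h i).2 a ha
  have hj := (rootList_single hd tl h (hd a)).1
  have hj2 : Pi.single (hd a) 1 ∈ L := by
    rcases List.mem_append.1 hj with h | h
    · exact h
    · exfalso
      have h := congrFun (List.mem_singleton.1 h) i
      rw [Pi.single_eq_same, Pi.single_eq_of_ne hne.symm] at h
      omega
  have h2 := (hp _ hj2 _ (List.mem_singleton.2 rfl)).2
  rw [chi_single_left] at h2
  have : (1:ℤ) ≤ ∑ b ∈ Finset.univ.filter (fun b => tl b = i), (Pi.single (hd a) 1 : Fin n → ℤ) (hd b) := by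
    have := Finset.single_le_sum (f := fun b => (Pi.single (hd a) 1 : Fin n → ℤ) (hd b))
      (s := Finset.univ.filter (fun b => tl b = i)) (fun b _ => by
        by_cases h : hd b = hd a <;> simp [h]) (Finset.mem_filter.2 ⟨Finset.mem_univ a, ha⟩)
    simpa using this
  rw [Pi.single_eq_of_ne hne.symm] at h2
  omega

include hsink

lemma rootList_refl {L : List (Fin n → ℤ)} (h : RootList hd tl (L ++ [Pi.single i 1])) :
    RootList (fun a => if hd a = i then tl a else hd a) (fun a => if hd a = i then i else tl a)
      (Pi.single i 1 :: L.map (refl1 hd tl i)) := by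
  have hinv := refl1_invol hd tl i hsink
  have hchi := chi_refl hd tl i hsink
  have hs := refl1_single hd tl i hsink
  have hs' : refl1 hd tl i (-Pi.single i 1) = Pi.single i 1 := by rw [← hs, hinv]
  have hp := (List.pairwise_append.1 h.pair)
  have hL : ∀ w ∈ L, (∀ j, 0 ≤ w j) ∧ chi hd tl w w = 1 := fun w hw => (h.mem w).1 (by simp [hw])
  have hLi : ∀ w ∈ L, chi hd tl w (Pi.single i 1) ≤ 0 ∧ 0 ≤ chi hd tl (Pi.single i 1) w :=
    fun w hw => hp.2.2 w hw _ (by simp)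
  have hself : chi hd tl (Pi.single i 1) (Pi.single i 1) = 1 := ((h.mem _).1 (by simp)).2
  constructor
  · intro v hv
    rw [← hinv v, hchi]
    refine h.posdef _ fun h0 => hv ?_
    rw [← hinv v, h0]
    ext j
    by_cases hj : j = i
    · subst hj; rw [refl1_self]; simp
    · rw [refl1_ne _ _ _ _ _ hj]
  · rw [List.nodup_cons]
    refine ⟨?_, List.Nodup.map (Function.Involutive.injective hinv) (List.nodup_append.1 h.nodup).1⟩
    intro hm
    obtain ⟨w, hw, hw2⟩ := List.mem_map.1 hm
    have : w = -Pi.single i 1 := by rw [← hinv w, hw2, hs]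
    have := (hL w hw).1 i
    subst w
    simp at this
  · rw [List.pairwise_cons]
    constructor
    · intro x hx
      obtain ⟨w, hw, rfl⟩ := List.mem_map.1 hx
      have := hLi w hw
      have e1 := hchi (-Pi.single i 1) w
      have e2 := hchi w (-Pi.single i 1)
      rw [hs'] at e1 e2
      rw [e1, e2, chi_neg_left, chi_neg_right]
      omega
    · rw [List.pairwise_map]
      refine hp.1.imp ?_
      intro x y hxy
      rw [hchi, hchi]; exact hxy
  · intro v
    constructor
    · intro hv
      rcases List.mem_cons.1 hv with rfl | hv
      · constructor
        · intro j
          by_cases hj : j = i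
          · subst hj; simp
          · simp [hj]
        · have e1 := hchi (-Pi.single i 1) (-Pi.single i 1)
          rw [hs', chi_neg_left, chi_neg_right] at e1
          rw [e1, hself]; rfl
      · obtain ⟨w, hw, rfl⟩ := List.mem_map.1 hv
        rw [hchi]
        refine ⟨fun j => ?_, (hL w hw).2⟩
        by_cases hj : j = i
        · subst hj
          rw [refl1_self]
          have := (hLi w hw).1
          rw [chi_single_right] at this
          omega
        · rw [refl1_ne _ _ _ _ _ hj]; exact (hL w hw).1 j
    · rintro ⟨hv0, hv1⟩
      rw [← hinv v, hchi] at hv1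
      set w := refl1 hd tl i v with hw
      have hvw : v = refl1 hd tl i w := (hinv v).symm
      by_cases hwi : 0 ≤ w i
      · have : w ∈ L ++ [Pi.single i 1] := by
          rw [h.mem]
          refine ⟨fun j => ?_, hv1⟩
          by_cases hj : j = i
          · rw [hj]; exact hwi
          · rw [hw, refl1_ne _ _ _ _ _ hj]; exact hv0 j
        rcases List.mem_append.1 this with h1 | h1
        · rw [hvw]; exact List.mem_cons_of_mem _ (List.mem_map_of_mem h1)
        · exfalso
          rw [List.mem_singleton.1 h1, hs] at hvw
          have := hv0 i
          rw [hvw] at this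
          simp at this
      · have h1 : w + Pi.single i 1 = 0 := by
          by_contra hne
          have := h.posdef _ hne
          rw [chi_add_left, chi_add_right, chi_add_right, hv1, hself, chi_single_left_sink hd tl i hsink,
            chi_single_right, hw, refl1_sum hd tl i hsink, ← hw] at this
          have h2 : 0 ≤ ∑ a ∈ Finset.univ.filter (fun a => hd a = i), v (tl a) :=
            Finset.sum_nonneg fun a _ => hv0 _
          omega
        have h2 : w = -Pi.single i 1 := eq_neg_of_add_eq_zero_left h1
        rw [hvw, h2, hs']
        exact List.mem_cons_self
end

theorem root_vanish_aux : ∀ (N : ℕ) (L2 : List (Fin n → ℤ)), L2.length = N → ∀ (L1 : List (Fin n → ℤ)) (b : Fin n → ℤ) {E : Type} [Fintype E]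
    (hd tl : E → Fin n), RootList hd tl (L1 ++ b :: L2) → ∀ K δ : Fin n → ℕ,
    ∀ β : Fin n → ℤ, (β ∈ L1 ∨ (β = b ∧ K ≠ 0)) → (∀ j, (K j : ℤ) + δ j = β j) →
    0 < chi hd tl (fun j => (δ j : ℤ)) b → Vanish hd tl K δ := by
  intro N
  induction N with
  | zero =>
    intro L2 hlen L1 b E _ hd tl h K δ β hβ hs hpos
    rw [List.length_eq_zero_iff] at hlen
    subst hlen
    obtain ⟨i, rfl, hsink⟩ := rootList_last hd tl h
    rw [chi_single_right] at hpos
    rcases hβ with hβ | ⟨rfl, hK⟩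
    · have h1 := ((List.pairwise_append.1 h.pair).2.2 β hβ _ (List.mem_singleton.2 rfl)).1
      rw [chi_single_right] at h1
      simp only [← hs] at h1
      refine vanish_direct hd tl i K δ ?_ ?_
      · zify; omega
      · zify; omega
    · exfalso
      have h0 : 0 ≤ ∑ a ∈ Finset.univ.filter (fun a => hd a = i), (δ (tl a) : ℤ) :=
        Finset.sum_nonneg fun a _ => by positivity
      have h1 := hs i
      rw [Pi.single_eq_same] at h1
      apply hK
      ext j
      by_cases hj : j = i
      · subst hj; simp; omega
      · have := hs j
        rw [Pi.single_eq_of_ne hj] at this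
        simp; omega
  | succ N ih =>
    intro L2 hlen L1 b E _ hd tl h K δ β hβ hs hpos
    obtain ⟨L3, x, rfl⟩ : ∃ L3 x, L2 = L3 ++ [x] := by
      rcases List.eq_nil_or_concat L2 with h | ⟨L3, x, h⟩
      · rw [h] at hlen; simp at hlen
      · exact ⟨L3, x, by simpa using h⟩
    have hlen3 : L3.length = N := by simpa using hlen
    have h' : RootList hd tl ((L1 ++ b :: L3) ++ [x]) := by simpa using h
    obtain ⟨i, rfl, hsink⟩ := rootList_last hd tl h'
    have hmem : β ∈ L1 ++ b :: L3 := by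
      rcases hβ with h | h
      · simp [h]
      · simp [h.1]
    have hβi := ((List.pairwise_append.1 h'.pair).2.2 β hmem _ (List.mem_singleton.2 rfl)).1
    rw [chi_single_right] at hβi
    have hbroot := (h.mem b).1 (by simp)
    have hrefl := rootList_refl hd tl i hsink h'
    set τ := ∑ a ∈ Finset.univ.filter (fun a => hd a = i), K (tl a) with hτ
    set u := ∑ a ∈ Finset.univ.filter (fun a => hd a = i), δ (tl a) with hu
    have hβsum : ∑ a ∈ Finset.univ.filter (fun a => hd a = i), β (tl a) = (τ : ℤ) + u := by
      simp only [← hs, hτ, hu, Finset.sum_add_distrib]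
      push_cast; ring
    have hsi := hs i
    have hle : K i + δ i ≤ τ + u := by zify; omega
    by_cases hcase : u < δ i
    · refine vanish_direct hd tl i K δ hcase ?_
      rw [Finset.sum_add_distrib]; exact hle
    refine vanish_reflect hd tl i K δ (Function.update K i (τ - K i))
      (Function.update δ i (τ + u - K i - δ i - (τ - K i))) hsink
      (fun j hj => Function.update_of_ne hj _ _) (fun j hj => Function.update_of_ne hj _ _)
      (by rw [Function.update_self]) (by
        rw [Function.update_self, Function.update_self, Finset.sum_add_distrib, ← hτ, ← hu]; omega) ?_
    refine ih (L3.map (refl1 hd tl i)) (by simpa using hlen3) (Pi.single i 1 :: L1.map (refl1 hd tl i)) (refl1 hd tl i b)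
      _ _ (by simpa using hrefl) _ _ (refl1 hd tl i β) ?_ ?_ ?_
    · rcases hβ with h1 | ⟨h1, h2⟩
      · left; exact List.mem_cons_of_mem _ (List.mem_map_of_mem h1)
      · right
        refine ⟨by rw [h1], fun h0 => ?_⟩
        have hK0 : ∀ j, j ≠ i → K j = 0 := fun j hj => by
          have := congrFun h0 j
          rwa [Function.update_of_ne hj] at this
        have hKi : K i ≠ 0 := by
          intro hKi
          apply h2
          ext j
          by_cases hj : j = i
          · rw [hj, hKi]; rfl
          · exact hK0 j hj
        have hδ : (fun j => (δ j : ℤ)) = b + (-(K i : ℤ)) • Pi.single i 1 := by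
          ext j
          have := hs j
          by_cases hj : j = i
          · subst hj; simp; rw [← h1]; omega
          · have := hK0 j hj
            simp [hj]; rw [← h1]; omega
        rw [hδ, chi_add_left, chi_smul_left, hbroot.2, chi_single_left_sink hd tl i hsink, ← h1] at hpos
        have h3 : (1:ℤ) ≤ K i := by omega
        have h4 : (1:ℤ) ≤ β i := by omega
        nlinarith
    · intro j
      by_cases hj : j = i
      · subst hj
        rw [Function.update_self, Function.update_self, refl1_self, hβsum]
        omega
      · rw [Function.update_of_ne hj, Function.update_of_ne hj, refl1_ne _ _ _ _ _ hj]
        exact hs j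
    · have hδ : (fun j => ((Function.update δ i (τ + u - K i - δ i - (τ - K i)) j : ℕ) : ℤ)) =
          refl1 hd tl i ((fun j => (δ j : ℤ)) + ((K i - τ : ℕ) : ℤ) • Pi.single i 1) := by
        ext j
        by_cases hj : j = i
        · subst hj
          rw [refl1_self, Function.update_self]
          have : ∑ a ∈ Finset.univ.filter (fun a => hd a = j),
              ((fun j => (δ j : ℤ)) + ((K j - τ : ℕ) : ℤ) • (Pi.single j 1 : Fin n → ℤ) : Fin n → ℤ) (tl a) = (u : ℤ) := by
            rw [hu]; push_cast
            refine Finset.sum_congr rfl fun a _ => ?_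
            simp [hsink a]
          rw [this]
          simp
          omega
        · rw [refl1_ne _ _ _ _ _ hj, Function.update_of_ne hj]
          simp [hj]
      rw [hδ, chi_refl hd tl i hsink, chi_add_left, chi_smul_left, chi_single_left_sink hd tl i hsink]
      have := hbroot.1 i
      positivity

theorem root_vanish {E : Type} [Fintype E] (hd tl : E → Fin n) (L1 L2 : List (Fin n → ℤ))
    (b : Fin n → ℤ) (h : RootList hd tl (L1 ++ b :: L2)) (K δ : Fin n → ℕ) (β : Fin n → ℤ)
    (hβ : β ∈ L1 ∨ (β = b ∧ K ≠ 0)) (hs : ∀ j, (K j : ℤ) + δ j = β j)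
    (hpos : 0 < chi hd tl (fun j => (δ j : ℤ)) b) : Vanish hd tl K δ :=
  root_vanish_aux _ L2 rfl L1 b hd tl h K δ β hβ hs hpos

section
variable {Q : FinQuiver n} {ℓ r : ℕ} (P : SubqPartition Q ℓ)

/-- heads of part arrows -/
def pHd (a : {a : Q.Arr // a ∈ P.arrs}) : Fin n := Q.hd a.1
/-- tails of part arrows -/
def pTl (a : {a : Q.Arr // a ∈ P.arrs}) : Fin n := Q.tl a.1

lemma part_unique {i : Fin n} {j j' : Fin ℓ} (h : i ∈ (P.part j).verts) (h' : i ∈ (P.part j').verts) :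
    j = j' := (P.cover i).unique h h'

lemma chi_eq_sum_eulerZ (α β : Fin n → ℤ) :
    chi (pHd P) (pTl P) α β = ∑ j, (P.part j).eulerZ α β := by
  unfold chi Subquiver.eulerZ
  rw [Finset.sum_sub_distrib]
  congr 1
  · have : (Finset.univ : Finset (Fin n)) = Finset.univ.biUnion (fun j => (P.part j).verts) := by
      ext i
      simp only [Finset.mem_univ, Finset.mem_biUnion, true_and, true_iff]
      exact (P.cover i).exists
    rw [this, Finset.sum_biUnion]
    intro j _ j' _ hne
    rw [Function.onFun, Finset.disjoint_left]
    intro i hi hi'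
    exact hne (part_unique P hi hi')
  · have h1 : ∑ a : {a : Q.Arr // a ∈ P.arrs}, α (pTl P a) * β (pHd P a) =
        ∑ a ∈ P.arrs, α (Q.tl a) * β (Q.hd a) :=
      Finset.sum_coe_sort P.arrs (fun a => α (Q.tl a) * β (Q.hd a))
    rw [h1, SubqPartition.arrs, Finset.sum_biUnion]
    intro j _ j' _ hne
    rw [Function.onFun, Finset.disjoint_left]
    intro a ha ha'
    exact hne (part_unique P ((P.part j).hd_mem a ha) ((P.part j').hd_mem a ha'))

/-- restriction to a part -/
noncomputable def restr (j : Fin ℓ) (v : Fin n → ℤ) : Fin n → ℤ :=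
  fun i => if i ∈ (P.part j).verts then v i else 0

lemma eulerZ_restr (j : Fin ℓ) (v w : Fin n → ℤ) :
    (P.part j).eulerZ v w = (P.part j).eulerZ (restr P j v) (restr P j w) := by
  unfold Subquiver.eulerZ restr
  congr 1
  · refine Finset.sum_congr rfl fun i hi => ?_
    rw [if_pos hi, if_pos hi]
  · refine Finset.sum_congr rfl fun a ha => ?_
    rw [if_pos ((P.part j).tl_mem a ha), if_pos ((P.part j).hd_mem a ha)]

lemma eulerZ_zero_left (j : Fin ℓ) (v w : Fin n → ℤ) (h : ∀ i ∈ (P.part j).verts, v i = 0) :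
    (P.part j).eulerZ v w = 0 := by
  unfold Subquiver.eulerZ
  rw [Finset.sum_eq_zero, Finset.sum_eq_zero, sub_zero]
  · intro a ha; rw [h _ ((P.part j).tl_mem a ha), zero_mul]
  · intro a ha; rw [h _ ha, zero_mul]

lemma eulerZ_zero_right (j : Fin ℓ) (v w : Fin n → ℤ) (h : ∀ i ∈ (P.part j).verts, w i = 0) :
    (P.part j).eulerZ v w = 0 := by
  unfold Subquiver.eulerZ
  rw [Finset.sum_eq_zero, Finset.sum_eq_zero, sub_zero]
  · intro a ha; rw [h _ ((P.part j).hd_mem a ha), mul_zero]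
  · intro a ha; rw [h _ ha, mul_zero]

variable (hDyn : P.Dynkin)
include hDyn

lemma eulerZ_pos (j : Fin ℓ) (v : Fin n → ℤ) (i : Fin n) (hi : i ∈ (P.part j).verts) (hv : v i ≠ 0) :
    0 < (P.part j).eulerZ v v := by
  rw [eulerZ_restr]
  refine (hDyn j).2.2 _ (fun k hk => by simp [restr, hk]) ?_
  intro h
  have := congrFun h i
  simp [restr, hi] at this
  exact hv this

lemma eulerZ_nonneg (j : Fin ℓ) (v : Fin n → ℤ) : 0 ≤ (P.part j).eulerZ v v := by
  by_cases h : ∀ i ∈ (P.part j).verts, v i = 0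
  · rw [eulerZ_zero_left P j v v h]
  · push Not at h
    obtain ⟨i, hi, hv⟩ := h
    exact (eulerZ_pos P hDyn j v i hi hv).le

lemma chi_posdef (v : Fin n → ℤ) (hv : v ≠ 0) : 0 < chi (pHd P) (pTl P) v v := by
  rw [chi_eq_sum_eulerZ]
  obtain ⟨i, hi⟩ := Function.ne_iff.1 hv
  obtain ⟨j, hj, _⟩ := P.cover i
  exact Finset.sum_pos' (fun j _ => eulerZ_nonneg P hDyn j v) ⟨j, Finset.mem_univ _,
    eulerZ_pos P hDyn j v i hj hi⟩

omit hDyn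

lemma euler_eq_chi (j : Fin ℓ) (hfull : (P.part j).Full) (α β : Fin n → ℕ)
    (hα : ∀ i, i ∉ (P.part j).verts → α i = 0) (hβ : ∀ i, i ∉ (P.part j).verts → β i = 0) :
    Q.euler α β = chi (pHd P) (pTl P) (fun i => (α i : ℤ)) (fun i => (β i : ℤ)) := by
  unfold FinQuiver.euler chi
  congr 1
  have h1 : ∑ a : {a : Q.Arr // a ∈ P.arrs}, (α (pTl P a) : ℤ) * β (pHd P a) =
        ∑ a ∈ P.arrs, (α (Q.tl a) : ℤ) * β (Q.hd a) :=
      Finset.sum_coe_sort P.arrs (fun a => (α (Q.tl a) : ℤ) * β (Q.hd a))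
  rw [h1]
  symm
  refine Finset.sum_subset (Finset.subset_univ _) ?_
  intro a _ ha
  by_contra hne
  have h2 : Q.tl a ∈ (P.part j).verts := by
    by_contra h
    exact hne (by rw [hα _ h]; simp)
  have h3 : Q.hd a ∈ (P.part j).verts := by
    by_contra h
    exact hne (by rw [hβ _ h]; simp)
  exact ha (Finset.mem_biUnion.2 ⟨j, Finset.mem_univ _, hfull a h3 h2⟩)

include hDyn

lemma reineke_rootList (β : Fin r → Fin n → ℕ) (blk : Fin r → Fin ℓ) (hR : IsReinekeOrder P β blk) :
    RootList (pHd P) (pTl P) (List.ofFn fun u => fun i => (β u i : ℤ)) := by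
  obtain ⟨hmono, hroot, hinj, hall, hlam⟩ := hR
  have hq : ∀ u, chi (pHd P) (pTl P) (fun i => (β u i : ℤ)) (fun i => (β u i : ℤ)) = 1 := by
    intro u
    rw [chi_eq_sum_eulerZ, Finset.sum_eq_single (blk u)]
    · exact (hroot u).2.2
    · intro j _ hj
      refine eulerZ_zero_left P j _ _ fun i hi => ?_
      rw [(hroot u).1 i]
      · rfl
      · intro h; exact hj (part_unique P hi h)
    · simp
  constructor
  · exact chi_posdef P hDyn
  · rw [List.nodup_ofFn]
    intro u v h
    apply hinj
    ext i
    have : (β u i : ℤ) = β v i := congrFun h i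
    exact_mod_cast this
  · rw [List.pairwise_ofFn]
    intro u v huv
    by_cases hb : blk u = blk v
    · have h1 := hlam u v huv hb
      have hfull := (hDyn (blk u)).2.1
      rw [FinQuiver.lam, euler_eq_chi P (blk u) hfull _ _ (hb ▸ (hroot v).1) (hroot u).1,
        euler_eq_chi P (blk u) hfull _ _ (hroot u).1 (hb ▸ (hroot v).1)] at h1
      set x : Fin n → ℤ := fun i => (β u i : ℤ) with hx
      set y : Fin n → ℤ := fun i => (β v i : ℤ) with hy
      have hxx := hq u
      have hyy := hq v
      rw [← hx] at hxx
      rw [← hy] at hyy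
      have hne : β u ≠ β v := fun h => huv.ne (hinj h)
      have p1 : 0 < chi (pHd P) (pTl P) (x + y) (x + y) := by
        apply chi_posdef P hDyn
        intro h
        apply (hroot u).2.1
        ext i
        have := congrFun h i
        simp [hx, hy] at this
        simp; omega
      have p2 : 0 < chi (pHd P) (pTl P) (x + -y) (x + -y) := by
        apply chi_posdef P hDyn
        intro h
        apply hne
        ext i
        have := congrFun h i
        simp [hx, hy] at this
        omega
      simp only [chi_add_left, chi_add_right, chi_neg_left, chi_neg_right, hxx, hyy] at p1 p2
      constructor <;> omega
    · have hz : ∀ u v, blk u ≠ blk v →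
          chi (pHd P) (pTl P) (fun i => (β u i : ℤ)) (fun i => (β v i : ℤ)) = 0 := by
        intro u v hb
        rw [chi_eq_sum_eulerZ]
        refine Finset.sum_eq_zero fun j _ => ?_
        by_cases hj : j = blk u
        · refine eulerZ_zero_right P j _ _ fun i hi => ?_
          rw [(hroot v).1 i]
          · rfl
          · intro h; exact hb (hj ▸ (part_unique P hi h))
        · refine eulerZ_zero_left P j _ _ fun i hi => ?_
          rw [(hroot u).1 i]
          · rfl
          · intro h; exact hj (part_unique P hi h)
      rw [hz u v hb, hz v u (Ne.symm hb)]
      exact ⟨le_rfl, le_rfl⟩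
  · intro v
    rw [List.mem_ofFn]
    constructor
    · rintro ⟨u, rfl⟩
      exact ⟨fun i => by positivity, hq u⟩
    · rintro ⟨hv0, hv1⟩
      have hvne : v ≠ 0 := by
        rintro rfl
        simp [chi] at hv1
      obtain ⟨i, hi⟩ := Function.ne_iff.1 hvne
      obtain ⟨j, hj, _⟩ := P.cover i
      have hjpos := eulerZ_pos P hDyn j v i hj hi
      rw [chi_eq_sum_eulerZ, ← Finset.sum_erase_add _ _ (Finset.mem_univ j)] at hv1
      have hnn : 0 ≤ ∑ j' ∈ Finset.univ.erase j, (P.part j').eulerZ v v :=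
        Finset.sum_nonneg fun j' _ => eulerZ_nonneg P hDyn j' v
      have hz : ∑ j' ∈ Finset.univ.erase j, (P.part j').eulerZ v v = 0 := by omega
      have hsupp : ∀ k, k ∉ (P.part j).verts → v k = 0 := by
        intro k hk
        by_contra hvk
        obtain ⟨j', hj', _⟩ := P.cover k
        have h1 := eulerZ_pos P hDyn j' v k hj' hvk
        have h2 := (Finset.sum_eq_zero_iff_of_nonneg
          (fun j' _ => eulerZ_nonneg P hDyn j' v)).1 hz j' (Finset.mem_erase.2 ⟨by
            rintro rfl; exact hk hj', Finset.mem_univ _⟩)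
        omega
      have hcast : (fun k => ((v k).toNat : ℤ)) = v := by
        ext k; simp [hv0 k]
      obtain ⟨u, hu⟩ := hall j (fun k => (v k).toNat) ⟨fun k hk => by simp [hsupp k hk], by
        intro h
        have := congrFun h i
        have := hv0 i
        simp at *
        omega, by rw [hcast]; omega⟩
      exact ⟨u, by rw [← hcast, hu]⟩

theorem reineke_vanish (β : Fin r → Fin n → ℕ) (blk : Fin r → Fin ℓ) (hR : IsReinekeOrder P β blk)
    (u k : Fin r) (K δ : Fin n → ℕ) (hKδ : ∀ j, K j + δ j = β u j) (hu : u < k ∨ (u = k ∧ K ≠ 0))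
    (hpos : 0 < chi (pHd P) (pTl P) (fun j => (δ j : ℤ)) (fun j => (β k j : ℤ))) :
    Vanish (pHd P) (pTl P) K δ := by
  have hL := reineke_rootList P hDyn β blk hR
  set L := List.ofFn fun u => fun i => (β u i : ℤ) with hLdef
  have hlen : L.length = r := by simp [hLdef]
  have hk : (k : ℕ) < L.length := by rw [hlen]; exact k.2
  have hsplit : L = L.take k ++ (fun i => (β k i : ℤ)) :: L.drop (k + 1) := by
    conv_lhs => rw [← List.take_append_drop k L, List.drop_eq_getElem_cons hk]
    congr 2
    simp [hLdef]
  rw [hsplit] at hL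
  refine root_vanish (pHd P) (pTl P) _ _ _ hL K δ (fun i => (β u i : ℤ)) ?_ ?_ hpos
  · rcases hu with h | ⟨h, h'⟩
    · left
      rw [List.mem_take_iff_getElem]
      refine ⟨u, by rw [hlen]; exact lt_min h u.2, by simp [hLdef]⟩
    · right; exact ⟨by rw [h], h'⟩
  · intro j
    exact_mod_cast hKδ j
end

lemma aeval_congr_vars {A σ : Type} [CommRing A] [Algebra ℚ A] (f : MvPolynomial σ ℚ) (g g' : σ → A)
    (h : ∀ p ∈ f.vars, g p = g' p) : aeval g f = aeval g' f :=
  eval₂Hom_congr' rfl (fun i hi _ => h i hi) rfl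

lemma symm_eval {A : Type} [CommRing A] (N : ℕ) (F : MvPolynomial (Fin N) A) (hF : F.IsSymmetric)
    (x y : Fin N → A)
    (h : ∏ k, (Polynomial.X - Polynomial.C (x k)) = ∏ k, (Polynomial.X - Polynomial.C (y k))) :
    aeval x F = aeval y F := by
  obtain ⟨G, hG⟩ := esymmAlgHom_surjective (σ := Fin N) (R := A) (n := N) (by simp) ⟨F, hF⟩
  have hG' : F = aeval (fun i : Fin N => esymm (Fin N) A (i + 1)) G := by
    rw [← esymmAlgHom_apply, hG]
  have key : ∀ i : Fin N, aeval x (esymm (Fin N) A (i + 1)) = aeval y (esymm (Fin N) A (i + 1)) := by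
    intro i
    rw [aeval_esymm_eq_multiset_esymm, aeval_esymm_eq_multiset_esymm]
    have hc : ∀ z : Fin N → A, (∏ k, (Polynomial.X - Polynomial.C (z k))).coeff (N - (i + 1)) =
        (-1) ^ (i + 1 : ℕ) * (Multiset.map z Finset.univ.val).esymm (i + 1) := by
      intro z
      have := Multiset.prod_X_sub_C_coeff (Multiset.map z Finset.univ.val) (k := N - (i + 1)) (by simp)
      rw [Multiset.map_map] at this
      simp only [Multiset.card_map, Finset.card_val, Finset.card_univ, Fintype.card_fin] at this
      have e : N - (N - (i + 1)) = i + 1 := by have := i.2; omega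
      rw [e] at this
      exact this
    have h1 := congrArg (fun p => Polynomial.coeff p (N - (i + 1))) h
    simp only [hc] at h1
    have h2 : ((-1 : A) ^ (i + 1 : ℕ)) * ((-1 : A) ^ (i + 1 : ℕ)) = 1 := by
      rw [← mul_pow]; simp
    linear_combination ((-1 : A) ^ (i + 1 : ℕ)) * h1 + ((Multiset.map y Finset.univ.val).esymm (i + 1) - (Multiset.map x Finset.univ.val).esymm (i + 1)) * h2
  rw [hG', ← AlgHom.comp_apply, ← AlgHom.comp_apply, comp_aeval, comp_aeval]
  simp only [key]

lemma esym_one {A : Type} [CommRing A] [Algebra ℚ A] (γ : Fin n → ℕ) (f : PolyQ n) (hf : SymmIn γ f)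
    (i : Fin n) (g g' : Fin n × ℕ → A)
    (hne : ∀ p : Fin n × ℕ, (p.1 ≠ i ∨ γ i ≤ p.2) → g p = g' p)
    (h : rootProd (Finset.range (γ i)) (fun k => g (i, k)) =
      rootProd (Finset.range (γ i)) (fun k => g' (i, k))) : aeval g f = aeval g' f := by
  let ψ : PolyQ n →ₐ[ℚ] MvPolynomial (Fin (γ i)) A :=
    aeval fun p => if hp : p.1 = i ∧ p.2 < γ i then X ⟨p.2, hp.2⟩ else C (g p)
  have hsymm : (ψ f).IsSymmetric := by
    intro σ
    let τ : Equiv.Perm ℕ := σ.extendDomain (p := fun k => k < γ i) Fin.equivSubtype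
    have hτ1 : ∀ k (hk : k < γ i), τ k = σ ⟨k, hk⟩ := by
      intro k hk
      have := Equiv.Perm.extendDomain_apply_image σ (p := fun k => k < γ i) Fin.equivSubtype ⟨k, hk⟩
      simpa using this
    have hτ2 : ∀ k, γ i ≤ k → τ k = k := by
      intro k hk
      exact Equiv.Perm.extendDomain_apply_not_subtype _ _ (by simpa using hk)
    have h1 := hf i τ (fun j hj => by
      by_contra h2
      exact hj (hτ2 j (by omega)))
    conv_rhs => rw [← h1]
    have h2 : ((rename σ : MvPolynomial (Fin (γ i)) A →ₐ[A] _).restrictScalars ℚ).comp ψ =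
        ψ.comp (rename (vertexPerm i τ)) := by
      apply MvPolynomial.algHom_ext
      rintro ⟨j, k⟩
      simp only [AlgHom.comp_apply, ψ, aeval_X, rename_X, AlgHom.restrictScalars_apply]
      by_cases hj : j = i
      · subst hj
        by_cases hk : k < γ j
        · rw [dif_pos ⟨rfl, hk⟩, rename_X]
          simp only [vertexPerm, if_true]
          rw [dif_pos]
          · congr 1
            ext; simp [hτ1 k hk]
          · simp [hτ1 k hk]
        · have hk' : ¬ (τ k < γ j) := by rw [hτ2 k (by omega)]; exact hk
          simp only [vertexPerm, if_true, hτ2 k (by omega)]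
          rw [dif_neg (fun h => hk h.2)]
          rw [rename_C]
      · simp [vertexPerm, hj]
    exact congrArg (fun φ => φ f) h2
  have ev : ∀ G : Fin n × ℕ → A, (∀ p : Fin n × ℕ, (p.1 ≠ i ∨ γ i ≤ p.2) → g p = G p) →
      aeval G f = aeval (fun k : Fin (γ i) => G (i, k)) (ψ f) := by
    intro G hG
    have : aeval G = ((aeval (fun k : Fin (γ i) => G (i, k)) : MvPolynomial (Fin (γ i)) A →ₐ[A] A).restrictScalars ℚ).comp ψ := by
      apply MvPolynomial.algHom_ext
      rintro ⟨j, k⟩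
      simp only [AlgHom.comp_apply, ψ, aeval_X, AlgHom.restrictScalars_apply]
      by_cases hp : j = i ∧ k < γ i
      · rw [dif_pos hp, aeval_X]
        obtain ⟨rfl, _⟩ := hp
        rfl
      · rw [dif_neg hp, aeval_C]
        simp only [Algebra.algebraMap_self, RingHom.id_apply]
        rw [hG]
        by_cases hj : j = i
        · right; simp; by_contra h; exact hp ⟨hj, by omega⟩
        · left; exact hj
    rw [this]; rfl
  rw [ev g (fun _ _ => rfl), ev g' hne]
  apply symm_eval _ _ hsymm
  unfold rootProd at h
  rwa [Finset.prod_range, Finset.prod_range] at h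

theorem esym {A : Type} [CommRing A] [Algebra ℚ A] (γ : Fin n → ℕ) (f : PolyQ n) (hf : f ∈ Hspace γ)
    (g g' : Fin n × ℕ → A)
    (h : ∀ i, rootProd (Finset.range (γ i)) (fun k => g (i, k)) =
      rootProd (Finset.range (γ i)) (fun k => g' (i, k))) : aeval g f = aeval g' f := by
  let G : Finset (Fin n) → Fin n × ℕ → A := fun s p => if p.1 ∈ s ∧ p.2 < γ p.1 then g' p else g p
  have key : ∀ s, aeval g f = aeval (G s) f := by
    intro s
    induction s using Finset.induction_on with
    | empty => simp [G]
    | insert i s hi ih =>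
      rw [ih]
      refine esym_one γ f hf.2 i _ _ ?_ ?_
      · rintro ⟨j, k⟩ hp
        simp only [G, Finset.mem_insert]
        simp only at hp
        rcases hp with hp | hp
        · simp [hp]
        · by_cases hj : j = i
          · subst hj; simp [hi, Nat.not_lt.2 hp]
          · simp [hj]
      · rw [rootProd_congr (y := fun k => g (i, k)), h i]
        · refine rootProd_congr fun k hk => ?_
          simp [G, Finset.mem_range.1 hk]
        · intro k hk; simp [G, hi]
  rw [key Finset.univ]
  refine aeval_congr_vars _ _ _ fun p hp => ?_
  simp [G, hf.1 p hp]

lemma prod_sort {M : Type} [CommMonoid M] (T : Finset ℕ) (F : ℕ → M) :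
    ∏ k ∈ Finset.range T.card, F ((T.sort (· ≤ ·)).getD k 0) = ∏ j ∈ T, F j := by
  have h1 : (T.sort (· ≤ ·)).length = T.card := Finset.length_sort _
  have h2 : ∏ j ∈ T, F j = ((T.sort (· ≤ ·)).map F).prod := by
    conv_lhs => rw [← Finset.sort_toFinset T (· ≤ ·)]
    rw [List.prod_toFinset _ (Finset.sort_nodup _ _)]
  rw [h2, ← h1]
  generalize T.sort (· ≤ ·) = l
  clear h1 h2
  induction l with
  | nil => simp
  | cons a l ih =>
    rw [List.length_cons, Finset.prod_range_succ', List.map_cons, List.prod_cons, ← ih, mul_comm]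
    simp

lemma aeval_substAlong {A : Type} [CommRing A] [Algebra ℚ A] (T : Fin n → Finset ℕ) (f : PolyQ n)
    (g : Fin n × ℕ → A) : aeval g (substAlong T f) =
      aeval (fun p : Fin n × ℕ => g (p.1, ((T p.1).sort (· ≤ ·)).getD p.2 0)) f := by
  unfold substAlong
  rw [← AlgHom.comp_apply, comp_aeval]
  simp

theorem esym_subst {A : Type} [CommRing A] [Algebra ℚ A] (γ : Fin n → ℕ) (f : PolyQ n)
    (hf : f ∈ Hspace γ) (g g' : Fin n × ℕ → A) (T : Fin n → Finset ℕ) (hT : ∀ i, (T i).card = γ i)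
    (h : ∀ i, rootProd (T i) (fun k => g (i, k)) =
      rootProd (Finset.range (γ i)) (fun k => g' (i, k))) :
    aeval g (substAlong T f) = aeval g' f := by
  rw [aeval_substAlong]
  refine esym γ f hf _ _ fun i => ?_
  rw [← h i, ← hT i]
  exact prod_sort (T i) (fun k => Polynomial.X - Polynomial.C (g (i, k)))

theorem esym_subst2 {A : Type} [CommRing A] [Algebra ℚ A] (γ : Fin n → ℕ) (f : PolyQ n)
    (hf : f ∈ Hspace γ) (g g' : Fin n × ℕ → A) (T T' : Fin n → Finset ℕ) (hT : ∀ i, (T i).card = γ i)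
    (hT' : ∀ i, (T' i).card = γ i)
    (h : ∀ i, rootProd (T i) (fun k => g (i, k)) = rootProd (T' i) (fun k => g' (i, k))) :
    aeval g (substAlong T f) = aeval g' (substAlong T' f) := by
  rw [aeval_substAlong T' f]
  refine esym_subst γ f hf g _ T hT fun i => ?_
  rw [h i, ← hT' i]
  exact (prod_sort (T' i) (fun k => Polynomial.X - Polynomial.C (g' (i, k)))).symm

lemma vdm_eq {A : Type} [CommRing A] (Y : Finset ℕ) (x : ℕ → A) :
    vdm Y x = ∏ k ∈ Y, ∏ l ∈ Y, (if k < l then x l - x k else 1) := by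
  unfold vdm
  refine Finset.prod_congr rfl fun k _ => ?_
  rw [Finset.prod_filter]

noncomputable def sgnST (A : Type) [CommRing A] (S T : Finset ℕ) : A :=
  ∏ l ∈ T, ∏ k ∈ S, (if k < l then (1 : A) else -1)

lemma vdm_split {A : Type} [CommRing A] (S T : Finset ℕ) (hST : Disjoint S T) (x : ℕ → A) :
    vdm (S ∪ T) x = (sgnST A S T * vdm S x * vdm T x) * ∏ l ∈ T, ∏ k ∈ S, (x l - x k) := by
  simp only [vdm_eq]
  rw [Finset.prod_union hST]
  simp only [Finset.prod_union hST, Finset.prod_mul_distrib]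
  have hc : (∏ k ∈ S, ∏ l ∈ T, (if k < l then x l - x k else 1)) *
      (∏ k ∈ T, ∏ l ∈ S, (if k < l then x l - x k else 1)) =
      sgnST A S T * ∏ l ∈ T, ∏ k ∈ S, (x l - x k) := by
    rw [Finset.prod_comm]
    unfold sgnST
    simp only [← Finset.prod_mul_distrib]
    refine Finset.prod_congr rfl fun l hl => Finset.prod_congr rfl fun k hk => ?_
    have hne : k ≠ l := fun h => Finset.disjoint_left.1 hST hk (h ▸ hl)
    rcases lt_or_gt_of_ne hne with h | h
    · simp [h, Nat.not_lt.2 h.le]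
    · simp [h, Nat.not_lt.2 h.le]
  linear_combination (∏ k ∈ S, ∏ l ∈ S, (if k < l then x l - x k else 1)) * (∏ k ∈ T, ∏ l ∈ T, (if k < l then x l - x k else 1)) * hc

lemma vdm_range {A : Type} [CommRing A] (N : ℕ) (x : ℕ → A) :
    vdm (Finset.range N) x = (Matrix.vandermonde (fun k : Fin N => x k)).det := by
  rw [Matrix.det_vandermonde, vdm_eq, Finset.prod_range]
  refine Finset.prod_congr rfl fun k _ => ?_
  rw [Finset.prod_range, ← Finset.filter_lt_eq_Ioi, Finset.prod_filter]
  simp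

lemma vdm_perm {A : Type} [CommRing A] (N : ℕ) (σ : Equiv.Perm (Fin N)) (x y : ℕ → A)
    (h : ∀ k : Fin N, y k = x (σ k)) :
    vdm (Finset.range N) y = ((Equiv.Perm.sign σ : ℤ) : A) * vdm (Finset.range N) x := by
  rw [vdm_range, vdm_range, ← Matrix.det_permute]
  congr 1
  ext i j
  simp [Matrix.vandermonde, h]

lemma vdm_congr {A : Type} [CommRing A] {Y : Finset ℕ} {x y : ℕ → A}
    (h : ∀ k ∈ Y, x k = y k) : vdm Y x = vdm Y y := by
  unfold vdm
  refine Finset.prod_congr rfl fun k hk => Finset.prod_congr rfl fun l hl => ?_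
  rw [h k hk, h l (Finset.mem_filter.1 hl).1]

lemma vdm_map {A B : Type} [CommRing A] [CommRing B] (f : A →+* B) (Y : Finset ℕ) (x : ℕ → A) :
    f (vdm Y x) = vdm Y (fun k => f (x k)) := by
  unfold vdm; simp [map_prod]

noncomputable def Dp (Γ : Fin n → ℕ) : PolyQ n :=
  ∏ i, vdm (Finset.range (Γ i)) (fun k => (X (i, k) : PolyQ n))

noncomputable def coS (γ₁ γ₂ : Fin n → ℕ) (S : Fin n → Finset ℕ) : PolyQ n :=
  ∏ i, (sgnST (PolyQ n) (S i) (shuffleCompl γ₁ γ₂ S i) * vdm (S i) (fun k => (X (i, k) : PolyQ n)) *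
    vdm (shuffleCompl γ₁ γ₂ S i) (fun k => (X (i, k) : PolyQ n)))

lemma mem_shuffles {γ₁ γ₂ : Fin n → ℕ} {S : Fin n → Finset ℕ} :
    S ∈ shuffles γ₁ γ₂ ↔ ∀ i, S i ⊆ Finset.range (γ₁ i + γ₂ i) ∧ (S i).card = γ₁ i := by
  simp [shuffles, Fintype.mem_piFinset]

lemma card_compl {γ₁ γ₂ : Fin n → ℕ} {S : Fin n → Finset ℕ} (h : S ∈ shuffles γ₁ γ₂) (i : Fin n) :
    (shuffleCompl γ₁ γ₂ S i).card = γ₂ i := by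
  obtain ⟨h1, h2⟩ := mem_shuffles.1 h i
  unfold shuffleCompl
  rw [Finset.card_sdiff_of_subset h1, h2, Finset.card_range]; omega

lemma disj_compl (γ₁ γ₂ : Fin n → ℕ) (S : Fin n → Finset ℕ) (i : Fin n) :
    Disjoint (S i) (shuffleCompl γ₁ γ₂ S i) := Finset.disjoint_sdiff

lemma union_compl {γ₁ γ₂ : Fin n → ℕ} {S : Fin n → Finset ℕ} (h : S ∈ shuffles γ₁ γ₂) (i : Fin n) :
    S i ∪ shuffleCompl γ₁ γ₂ S i = Finset.range (γ₁ i + γ₂ i) :=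
  Finset.union_sdiff_of_subset (mem_shuffles.1 h i).1

lemma coS_mul {γ₁ γ₂ : Fin n → ℕ} {S : Fin n → Finset ℕ} (h : S ∈ shuffles γ₁ γ₂) :
    coS γ₁ γ₂ S * interactionDen γ₁ γ₂ S = Dp (γ₁ + γ₂) := by
  unfold coS interactionDen Dp
  rw [← Finset.prod_mul_distrib]
  refine Finset.prod_congr rfl fun i _ => ?_
  rw [Pi.add_apply, ← union_compl h i, vdm_split _ _ (disj_compl _ _ _ _)]

lemma vdm_ne_zero {A : Type} [CommRing A] [IsDomain A] (Y : Finset ℕ) (x : ℕ → A)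
    (h : ∀ k ∈ Y, ∀ l ∈ Y, k < l → x l ≠ x k) : vdm Y x ≠ 0 := by
  unfold vdm
  refine Finset.prod_ne_zero_iff.2 fun k hk => Finset.prod_ne_zero_iff.2 fun l hl => ?_
  rw [Finset.mem_filter] at hl
  exact sub_ne_zero.2 (h k hk l hl.1 hl.2)

lemma Dp_ne_zero (Γ : Fin n → ℕ) : Dp Γ ≠ 0 := by
  refine Finset.prod_ne_zero_iff.2 fun i _ => vdm_ne_zero _ _ fun k _ l _ hkl h => ?_
  have := X_injective h
  simp at this; omega

noncomputable def Nn (Q : FinQuiver n) (γ₁ γ₂ : Fin n → ℕ) (F f : PolyQ n) : PolyQ n :=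
  ∑ S ∈ shuffles γ₁ γ₂, substAlong S F * substAlong (shuffleCompl γ₁ γ₂ S) f *
    interactionNum Q γ₁ γ₂ S * coS γ₁ γ₂ S

noncomputable def rhoP (π : Fin n → Equiv.Perm ℕ) : PolyQ n →ₐ[ℚ] PolyQ n :=
  aeval fun p => X (p.1, π p.1 p.2)

def mapS (π : Fin n → Equiv.Perm ℕ) (S : Fin n → Finset ℕ) : Fin n → Finset ℕ :=
  fun i => (S i).map (π i).toEmbedding

lemma map_range_perm (σ : Equiv.Perm ℕ) (N : ℕ) (h : ∀ k, σ k < N ↔ k < N) :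
    (Finset.range N).map σ.toEmbedding = Finset.range N := by
  ext k
  simp only [Finset.mem_map_equiv, Finset.mem_range]
  rw [← h]; simp

section equiv
variable (γ₁ γ₂ : Fin n → ℕ) (π : Fin n → Equiv.Perm ℕ)
  (hπ : ∀ j k, π j k < γ₁ j + γ₂ j ↔ k < γ₁ j + γ₂ j)

lemma mapS_compl (hπ : ∀ j k, π j k < γ₁ j + γ₂ j ↔ k < γ₁ j + γ₂ j) (S : Fin n → Finset ℕ) :
    shuffleCompl γ₁ γ₂ (mapS π S) = mapS π (shuffleCompl γ₁ γ₂ S) := by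
  funext i
  simp only [shuffleCompl, mapS]
  conv_lhs => rw [← map_range_perm (π i) _ (hπ i)]
  rw [← Finset.map_sdiff]

lemma mapS_mem (hπ : ∀ j k, π j k < γ₁ j + γ₂ j ↔ k < γ₁ j + γ₂ j) {S : Fin n → Finset ℕ}
    (h : S ∈ shuffles γ₁ γ₂) : mapS π S ∈ shuffles γ₁ γ₂ := by
  rw [mem_shuffles] at h ⊢
  intro i
  refine ⟨?_, by simp [mapS, (h i).2]⟩
  intro k hk
  simp only [mapS, Finset.mem_map_equiv] at hk
  have := (h i).1 hk
  rw [Finset.mem_range] at this ⊢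
  rw [← hπ] at this
  simpa using this

lemma rho_subst (δ : Fin n → ℕ) (F : PolyQ n) (hF : F ∈ Hspace δ) (T : Fin n → Finset ℕ)
    (hT : ∀ i, (T i).card = δ i) : rhoP π (substAlong T F) = substAlong (mapS π T) F := by
  have h := esym_subst2 δ F hF (fun p => (X (p.1, π p.1 p.2) : PolyQ n)) X T (mapS π T) hT
    (by intro i; simp [mapS, hT]) (by
      intro i; simp only [rootProd, mapS, Finset.prod_map]; rfl)
  rw [aeval_X_left_apply] at h
  exact h

lemma rho_num (hπ : ∀ j k, π j k < γ₁ j + γ₂ j ↔ k < γ₁ j + γ₂ j) (Q : FinQuiver n)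
    (S : Fin n → Finset ℕ) :
    rhoP π (interactionNum Q γ₁ γ₂ S) = interactionNum Q γ₁ γ₂ (mapS π S) := by
  simp only [interactionNum, arrowFactor, mapS_compl γ₁ γ₂ π hπ, mapS, Finset.prod_map, map_prod, map_sub, rhoP, aeval_X]
  rfl

lemma rho_den (hπ : ∀ j k, π j k < γ₁ j + γ₂ j ↔ k < γ₁ j + γ₂ j)
    (S : Fin n → Finset ℕ) :
    rhoP π (interactionDen γ₁ γ₂ S) = interactionDen γ₁ γ₂ (mapS π S) := by
  simp only [interactionDen, mapS_compl γ₁ γ₂ π hπ, mapS, Finset.prod_map, map_prod, map_sub, rhoP, aeval_X]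
  rfl

lemma rho_Nn (hπ : ∀ j k, π j k < γ₁ j + γ₂ j ↔ k < γ₁ j + γ₂ j) (Q : FinQuiver n) (F f : PolyQ n)
    (hF : F ∈ Hspace γ₁) (hf : f ∈ Hspace γ₂) (ε : PolyQ n)
    (hε : rhoP π (Dp (γ₁ + γ₂)) = ε * Dp (γ₁ + γ₂)) :
    rhoP π (Nn Q γ₁ γ₂ F f) = ε * Nn Q γ₁ γ₂ F f := by
  have hco : ∀ S ∈ shuffles γ₁ γ₂, rhoP π (coS γ₁ γ₂ S) = ε * coS γ₁ γ₂ (mapS π S) := by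
    intro S hS
    have h1 := hε
    rw [← coS_mul hS, map_mul, rho_den γ₁ γ₂ π hπ, coS_mul hS, ← coS_mul (mapS_mem γ₁ γ₂ π hπ hS), ← mul_assoc] at h1
    refine mul_right_cancel₀ ?_ h1
    intro h0
    have := coS_mul (mapS_mem γ₁ γ₂ π hπ hS)
    rw [h0, mul_zero] at this
    exact Dp_ne_zero _ this.symm
  have hπ' : ∀ j k, (π j).symm k < γ₁ j + γ₂ j ↔ k < γ₁ j + γ₂ j := by
    intro j k; rw [← hπ]; simp
  unfold Nn
  rw [map_sum, Finset.mul_sum]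
  refine Finset.sum_bij' (fun S _ => mapS π S) (fun S _ => mapS (fun j => (π j).symm) S)
    (fun S hS => mapS_mem γ₁ γ₂ π hπ hS) (fun S hS => mapS_mem γ₁ γ₂ _ hπ' hS) ?_ ?_ ?_
  · intro S _; funext i; ext k; simp [mapS]
  · intro S _; funext i; ext k; simp [mapS]
  · intro S hS
    rw [map_mul, map_mul, map_mul, hco S hS, rho_num γ₁ γ₂ π hπ,
      rho_subst π γ₁ F hF S fun i => (mem_shuffles.1 hS i).2,
      rho_subst π γ₂ f hf _ fun i => card_compl hS i, mapS_compl γ₁ γ₂ π hπ]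
    ring
end equiv

noncomputable def vP (i : Fin n) (σ : Equiv.Perm ℕ) : Fin n → Equiv.Perm ℕ :=
  fun j => if j = i then σ else 1

lemma rho_vP (i : Fin n) (σ : Equiv.Perm ℕ) : rhoP (vP i σ) = rename (vertexPerm i σ) := by
  apply MvPolynomial.algHom_ext
  rintro ⟨j, k⟩
  simp only [rhoP, aeval_X, rename_X, vertexPerm, vP]
  by_cases h : j = i
  · simp [h]
  · simp [h]

lemma rho_Dp (Γ : Fin n → ℕ) (i : Fin n) (σ : Equiv.Perm ℕ) (τ : Equiv.Perm (Fin (Γ i)))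
    (h : ∀ k : Fin (Γ i), σ k = τ k) :
    rhoP (vP i σ) (Dp Γ) = ((Equiv.Perm.sign τ : ℤ) : PolyQ n) * Dp Γ := by
  unfold Dp
  rw [map_prod, ← Finset.mul_prod_erase _ _ (Finset.mem_univ i), ← Finset.mul_prod_erase _ _ (Finset.mem_univ i), ← mul_assoc]
  congr 1
  · have := vdm_map (rhoP (vP i σ) : PolyQ n →+* PolyQ n) (Finset.range (Γ i)) (fun k => (X (i, k) : PolyQ n))
    refine this.trans ?_
    refine vdm_perm _ τ _ _ fun k => ?_
    simp [rhoP, vP, h]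
  · refine Finset.prod_congr rfl fun j hj => ?_
    have := vdm_map (rhoP (vP i σ) : PolyQ n →+* PolyQ n) (Finset.range (Γ j)) (fun k => (X (j, k) : PolyQ n))
    refine this.trans ?_
    refine vdm_congr fun k _ => ?_
    simp [rhoP, vP, (Finset.mem_erase.1 hj).1]

noncomputable def eSub {τ : Type} (a b : τ) : MvPolynomial τ ℚ →ₐ[ℚ] MvPolynomial τ ℚ :=
  aeval fun p => if p = b then X a else X p

lemma dvd_sub_eSub {τ : Type} (a b : τ) (p : MvPolynomial τ ℚ) :
    (X b - X a : MvPolynomial τ ℚ) ∣ p - eSub a b p := by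
  rw [← Ideal.mem_span_singleton, ← Ideal.Quotient.eq]
  have : (Ideal.Quotient.mkₐ ℚ (Ideal.span {(X b - X a : MvPolynomial τ ℚ)})) =
      (Ideal.Quotient.mkₐ ℚ (Ideal.span {(X b - X a : MvPolynomial τ ℚ)})).comp (eSub a b) := by
    apply MvPolynomial.algHom_ext
    intro q
    simp only [AlgHom.comp_apply, eSub, aeval_X]
    split_ifs with h
    · subst h
      rw [Ideal.Quotient.mkₐ_eq_mk, Ideal.Quotient.eq, Ideal.mem_span_singleton]
    · rfl
  exact congrArg (fun φ => φ p) this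

lemma dvd_iff_eSub {τ : Type} (a b : τ) (p : MvPolynomial τ ℚ) :
    (X b - X a : MvPolynomial τ ℚ) ∣ p ↔ eSub a b p = 0 := by
  constructor
  · rintro ⟨q, rfl⟩
    rw [map_mul, map_sub]
    have : eSub a b (X b) - eSub a b (X a) = 0 := by
      simp [eSub]
    rw [this, zero_mul]
  · intro h
    have := dvd_sub_eSub a b p
    rwa [h, sub_zero] at this

lemma prime_XX {τ : Type} {a b : τ} (h : a ≠ b) : Prime (X b - X a : MvPolynomial τ ℚ) := by
  refine ⟨fun h0 => h (X_injective (sub_eq_zero.1 h0)).symm, ?_, ?_⟩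
  · intro hu
    have := (dvd_iff_eSub a b 1).1 hu.dvd
    simp at this
  · intro p q hpq
    rw [dvd_iff_eSub] at hpq ⊢
    rw [dvd_iff_eSub]
    rw [map_mul] at hpq
    exact mul_eq_zero.1 hpq

lemma Dp_eq (Γ : Fin n → ℕ) : Dp Γ = ∏ t ∈ (Finset.univ : Finset (Fin n)).sigma fun i =>
    (Finset.range (Γ i)).sigma fun a => (Finset.range (Γ i)).filter fun b => a < b,
      (X (t.1, t.2.2) - X (t.1, t.2.1) : PolyQ n) := by
  rw [Finset.prod_sigma]
  unfold Dp vdm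
  refine Finset.prod_congr rfl fun i _ => ?_
  rw [Finset.prod_sigma]

lemma Dp_dvd_Nn (Q : FinQuiver n) (γ₁ γ₂ : Fin n → ℕ) (F f : PolyQ n)
    (hF : F ∈ Hspace γ₁) (hf : f ∈ Hspace γ₂) : Dp (γ₁ + γ₂) ∣ Nn Q γ₁ γ₂ F f := by
  rw [Dp_eq]
  refine Finset.prod_dvd_of_isRelPrime ?_ ?_
  · rintro ⟨i, a, b⟩ ht ⟨i', a', b'⟩ ht' hne
    simp only [Finset.coe_sigma, Set.mem_sigma_iff, Finset.mem_coe, Finset.mem_univ, true_and, Finset.mem_sigma, Finset.mem_filter, Finset.mem_range] at ht ht'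
    simp only [Function.onFun]
    have hab : ((i, a) : Fin n × ℕ) ≠ (i, b) := by simp; omega
    rw [(prime_XX hab).irreducible.isRelPrime_iff_not_dvd, dvd_iff_eSub]
    simp only [eSub, map_sub, aeval_X, Prod.mk.injEq]
    intro h0
    rw [sub_eq_zero] at h0
    split_ifs at h0 with h1 h2 h2
    · omega
    · have := X_injective h0
      simp only [Prod.mk.injEq] at this
      apply hne
      obtain ⟨rfl, rfl⟩ := h1
      obtain ⟨_, rfl⟩ := this
      rfl
    · have := X_injective h0
      simp only [Prod.mk.injEq] at this
      omega
    · have := X_injective h0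
      simp only [Prod.mk.injEq] at this
      omega
  · rintro ⟨i, a, b⟩ ht
    simp only [Finset.mem_univ, true_and, Finset.mem_sigma, Finset.mem_filter, Finset.mem_range] at ht
    obtain ⟨ha, hb, hab⟩ := ht
    rw [dvd_iff_eSub]
    have hD := rho_Dp (γ₁ + γ₂) i (Equiv.swap a b) (Equiv.swap ⟨a, ha⟩ ⟨b, hb⟩) (by
      intro k
      rw [Equiv.swap_apply_def, Equiv.swap_apply_def]
      simp only [Fin.ext_iff]
      split_ifs <;> rfl)
    rw [Equiv.Perm.sign_swap (by simp; omega)] at hD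
    have hN := rho_Nn γ₁ γ₂ (vP i (Equiv.swap a b)) (by
      intro j k
      unfold vP
      split_ifs with hj
      · subst hj
        simp only [Pi.add_apply] at ha hb
        rw [Equiv.swap_apply_def]
        split_ifs with h1 h2
        · omega
        · omega
        · rfl
      · rfl) Q F f hF hf _ hD
    have hE : (eSub ((i, a) : Fin n × ℕ) (i, b)).comp (rhoP (vP i (Equiv.swap a b))) = eSub ((i, a) : Fin n × ℕ) (i, b) := by
      apply MvPolynomial.algHom_ext
      rintro ⟨j, k⟩
      simp only [AlgHom.comp_apply, rhoP, aeval_X, eSub, vP]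
      by_cases hj : j = i
      · subst hj
        simp only [if_true, Prod.mk.injEq, true_and]
        rw [Equiv.swap_apply_def]
        split_ifs <;> simp_all
      · simp [hj]
    have h1 := congrArg (fun φ => φ (Nn Q γ₁ γ₂ F f)) hE
    simp only [AlgHom.comp_apply, hN] at h1
    simp only [map_mul] at h1
    simp at h1
    have h2 : (2 : PolyQ n) * eSub ((i, a) : Fin n × ℕ) (i, b) (Nn Q γ₁ γ₂ F f) = 0 := by linear_combination (-1 : PolyQ n) * h1
    rcases mul_eq_zero.1 h2 with h3 | h3
    · exact absurd h3 two_ne_zero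
    · exact h3

lemma cohaMul_mul (Q : FinQuiver n) (γ₁ γ₂ : Fin n → ℕ) (F f : PolyQ n)
    (hF : F ∈ Hspace γ₁) (hf : f ∈ Hspace γ₂) :
    cohaMul Q γ₁ γ₂ F f * Dp (γ₁ + γ₂) = Nn Q γ₁ γ₂ F f := by
  have hinj := IsFractionRing.injective (PolyQ n) (FractionRing (PolyQ n))
  have hD : algebraMap (PolyQ n) (FractionRing (PolyQ n)) (Dp (γ₁ + γ₂)) ≠ 0 := by
    rw [Ne, map_eq_zero_iff _ hinj]; exact Dp_ne_zero _
  have hrat : cohaMulRat Q γ₁ γ₂ F f * algebraMap (PolyQ n) (FractionRing (PolyQ n)) (Dp (γ₁ + γ₂)) =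
      algebraMap _ _ (Nn Q γ₁ γ₂ F f) := by
    unfold cohaMulRat Nn
    rw [Finset.sum_mul, map_sum]
    refine Finset.sum_congr rfl fun S hS => ?_
    have hd := congrArg (algebraMap (PolyQ n) (FractionRing (PolyQ n))) (coS_mul hS)
    rw [map_mul] at hd
    rw [← hd] at hD ⊢
    have := right_ne_zero_of_mul hD
    rw [map_mul _ _ (coS γ₁ γ₂ S)]
    field_simp
  have hex : ∃ P : PolyQ n, algebraMap (PolyQ n) (FractionRing (PolyQ n)) P = cohaMulRat Q γ₁ γ₂ F f := by
    obtain ⟨P, hP⟩ := Dp_dvd_Nn Q γ₁ γ₂ F f hF hf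
    refine ⟨P, mul_right_cancel₀ hD ?_⟩
    rw [hrat, hP, map_mul, mul_comm]
  apply hinj
  rw [map_mul, ← hrat]
  congr 1
  unfold cohaMul
  rw [dif_pos hex]
  exact hex.choose_spec

lemma getD_sort_mem (T : Finset ℕ) (k : ℕ) (hk : k < T.card) : (T.sort (· ≤ ·)).getD k 0 ∈ T := by
  have h : k < (T.sort (· ≤ ·)).length := by simpa using hk
  rw [List.getD_eq_getElem _ _ h, ← Finset.mem_sort (· ≤ ·)]
  exact List.getElem_mem h

lemma cohaMul_mem (Q : FinQuiver n) (γ₁ γ₂ : Fin n → ℕ) (F f : PolyQ n)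
    (hF : F ∈ Hspace γ₁) (hf : f ∈ Hspace γ₂) : cohaMul Q γ₁ γ₂ F f ∈ Hspace (γ₁ + γ₂) := by
  have hP := cohaMul_mul Q γ₁ γ₂ F f hF hf
  set P := cohaMul Q γ₁ γ₂ F f
  refine ⟨?_, ?_⟩
  · let κ : PolyQ n →ₐ[ℚ] PolyQ n := aeval fun p => if p.2 < γ₁ p.1 + γ₂ p.1 then X p else 0
    have hκX : ∀ i k, k < γ₁ i + γ₂ i → κ (X (i, k)) = X (i, k) := by
      intro i k hk; simp [κ, hk]
    have hvdm : ∀ i (Y : Finset ℕ), Y ⊆ Finset.range (γ₁ i + γ₂ i) →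
        κ (vdm Y (fun k => (X (i, k) : PolyQ n))) = vdm Y (fun k => (X (i, k) : PolyQ n)) := by
      intro i Y hY
      refine (vdm_map (κ : PolyQ n →+* PolyQ n) _ _).trans (vdm_congr fun k hk => ?_)
      exact hκX i k (Finset.mem_range.1 (hY hk))
    have hD : κ (Dp (γ₁ + γ₂)) = Dp (γ₁ + γ₂) := by
      unfold Dp
      rw [map_prod]
      exact Finset.prod_congr rfl fun i _ => hvdm i _ (by simp)
    have hsub : ∀ (T : Fin n → Finset ℕ) (δ : Fin n → ℕ) (G : PolyQ n), G ∈ Hspace δ →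
        (∀ i, (T i).card = δ i) → (∀ i, T i ⊆ Finset.range (γ₁ i + γ₂ i)) →
        κ (substAlong T G) = substAlong T G := by
      intro T δ G hG hT hT'
      rw [aeval_substAlong]
      refine aeval_congr_vars _ _ _ fun p hp => ?_
      have h1 := getD_sort_mem (T p.1) p.2 (by rw [hT]; exact hG.1 p hp)
      have h2 := Finset.mem_range.1 (hT' _ h1)
      simp only [h2, if_true]
    have hN : κ (Nn Q γ₁ γ₂ F f) = Nn Q γ₁ γ₂ F f := by
      unfold Nn
      rw [map_sum]
      refine Finset.sum_congr rfl fun S hS => ?_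
      have hS1 := fun i => (mem_shuffles.1 hS i).1
      have hS2 : ∀ i, shuffleCompl γ₁ γ₂ S i ⊆ Finset.range (γ₁ i + γ₂ i) := fun i => Finset.sdiff_subset
      rw [map_mul, map_mul, map_mul, hsub S γ₁ F hF (fun i => (mem_shuffles.1 hS i).2) hS1,
        hsub _ γ₂ f hf (fun i => card_compl hS i) hS2]
      congr 1
      · congr 1
        unfold interactionNum arrowFactor
        simp only [map_prod, map_sub]
        refine Finset.prod_congr rfl fun a _ => Finset.prod_congr rfl fun k hk => Finset.prod_congr rfl fun l hl => ?_
        rw [hκX _ _ (Finset.mem_range.1 (hS2 _ hk)), hκX _ _ (Finset.mem_range.1 (hS1 _ hl))]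
      · unfold coS
        simp only [map_prod, map_mul]
        refine Finset.prod_congr rfl fun i _ => ?_
        rw [hvdm i _ (hS1 i), hvdm i _ (hS2 i)]
        congr 2
        unfold sgnST
        simp only [map_prod, apply_ite κ, map_one, map_neg]
    have hκP : κ P = P := by
      have h1 := congrArg κ hP
      rw [map_mul, hD, hN, ← hP] at h1
      exact mul_right_cancel₀ (Dp_ne_zero _) h1
    have hs : P ∈ supported ℚ {p : Fin n × ℕ | p.2 < γ₁ p.1 + γ₂ p.1} := by
      rw [← hκP]
      have : ∀ q, κ q ∈ supported ℚ {p : Fin n × ℕ | p.2 < γ₁ p.1 + γ₂ p.1} := by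
        intro q
        induction q using MvPolynomial.induction_on with
        | C a =>
          rw [← MvPolynomial.algebraMap_eq, AlgHom.commutes]
          exact Subalgebra.algebraMap_mem _ _
        | add p q hp hq => rw [map_add]; exact Subalgebra.add_mem _ hp hq
        | mul_X p i hp =>
          rw [map_mul]
          refine Subalgebra.mul_mem _ hp ?_
          simp only [κ, aeval_X]
          split_ifs with h
          · exact X_mem_supported.2 h
          · exact Subalgebra.zero_mem _
      exact this P
    rw [mem_supported] at hs
    intro p hp
    exact hs hp
  · intro i σ hσ
    have hσ' : ∀ k, σ k < (γ₁ + γ₂) i ↔ k < (γ₁ + γ₂) i := by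
      intro k
      by_cases h : σ k = k
      · rw [h]
      · have h1 := hσ k h
        have h2 : σ (σ k) ≠ σ k := fun h' => h (σ.injective h')
        have h3 := hσ _ h2
        exact ⟨fun _ => h1, fun _ => h3⟩
    let τ : Equiv.Perm (Fin ((γ₁ + γ₂) i)) :=
      { toFun := fun k => ⟨σ k, (hσ' k).2 k.2⟩
        invFun := fun k => ⟨σ.symm k, (hσ' _).1 (by simp)⟩
        left_inv := by intro k; simp
        right_inv := by intro k; simp }
    have hD := rho_Dp (γ₁ + γ₂) i σ τ (fun k => rfl)
    have hN := rho_Nn γ₁ γ₂ (vP i σ) (by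
      intro j k
      unfold vP
      split_ifs with hj
      · subst hj; exact hσ' k
      · rfl) Q F f hF hf _ hD
    rw [← rho_vP]
    have h1 := congrArg (rhoP (vP i σ)) hP
    rw [map_mul, hD, hN, ← hP] at h1
    refine mul_right_cancel₀ (Dp_ne_zero (γ₁ + γ₂)) ?_
    have hε : ((Equiv.Perm.sign τ : ℤ) : PolyQ n) ≠ 0 := by
      rcases Int.units_eq_one_or (Equiv.Perm.sign τ) with h | h <;> simp [h]
    refine mul_left_cancel₀ hε ?_
    linear_combination h1

/-- the cluster of indices at a vertex -/
noncomputable def Ycl {C : Type} (Γ : Fin n → ℕ) (cl : Fin n × ℕ → C) (i : Fin n) (c : C) : Finset ℕ :=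
  (Finset.range (Γ i)).filter fun k => cl (i, k) = c

lemma mem_Ycl {C : Type} {Γ : Fin n → ℕ} {cl : Fin n × ℕ → C} {i : Fin n} {c : C} {k : ℕ} :
    k ∈ Ycl Γ cl i c ↔ k < Γ i ∧ cl (i, k) = c := by simp [Ycl]

theorem clusterRing {C : Type} (Γ : Fin n → ℕ) (cl : Fin n × ℕ → C) (s : Finset (Fin n × C)) :
    ∃ (R : Type) (_ : CommRing R) (_ : Algebra (MvPolynomial C ℚ) R) (ξ : Fin n → ℕ → R),
      (∀ q ∈ s, rootProd (Ycl Γ cl q.1 q.2) (ξ q.1) = Polynomial.X ^ (Ycl Γ cl q.1 q.2).card) ∧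
      ∀ a : MvPolynomial C ℚ, algebraMap _ R a * ∏ q ∈ s, vdm (Ycl Γ cl q.1 q.2) (ξ q.1) = 0 → a = 0 := by
  induction s using Finset.induction_on with
  | empty =>
    refine ⟨MvPolynomial C ℚ, inferInstance, inferInstance, fun _ _ => 0, by simp, ?_⟩
    intro a ha; simpa using ha
  | insert q s hq ih =>
    obtain ⟨R, _, _, ξ, h1, h2⟩ := ih
    obtain ⟨i, c⟩ := q
    obtain ⟨B, _, _, x, h3, h4, h5⟩ := splitRing (Ycl Γ cl i c) R (Polynomial.X ^ (Ycl Γ cl i c).card)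
      (Polynomial.monic_X_pow _) (by
        have : Nontrivial R := by
          refine ⟨1, 0, fun h => ?_⟩
          have h0 : (1 : MvPolynomial C ℚ) = 0 := h2 1 (by rw [map_one, h, zero_mul])
          exact one_ne_zero h0
        simp)
    have hu : ∀ k : ℕ, k ≠ 0 → IsUnit (k : R) := by
      intro k hk
      have : IsUnit ((k : ℚ)) := by simpa using hk
      have := (this.map (algebraMap ℚ (MvPolynomial C ℚ))).map (algebraMap (MvPolynomial C ℚ) R)
      simpa using this
    letI : Algebra (MvPolynomial C ℚ) B := Algebra.compHom B (algebraMap (MvPolynomial C ℚ) R)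
    let ξ' : Fin n → ℕ → B := fun j k => if j = i ∧ cl (j, k) = c then x k else algebraMap R B (ξ j k)
    have e1 : ∀ k ∈ Ycl Γ cl i c, ξ' i k = x k := by
      intro k hk
      have := (mem_Ycl.1 hk).2
      simp [ξ', this]
    have e2 : ∀ q ∈ s, ∀ k ∈ Ycl Γ cl q.1 q.2, ξ' q.1 k = algebraMap R B (ξ q.1 k) := by
      rintro ⟨j, c'⟩ hq' k hk
      have := (mem_Ycl.1 hk).2
      simp only [ξ']
      rw [if_neg]
      rintro ⟨rfl, h⟩
      apply hq
      simp only at this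
      rw [← h, this]; exact hq'
    refine ⟨B, inferInstance, inferInstance, ξ', ?_, ?_⟩
    · intro q' hq'
      rcases Finset.mem_insert.1 hq' with rfl | hq'
      · simp only
        rw [rootProd_congr e1, h3]; simp
      · rw [rootProd_congr (e2 q' hq'), ← rootProd_map, h1 q' hq']; simp
    · intro a ha
      apply h2
      apply h5 hu
      rw [Finset.prod_insert hq] at ha
      simp only at ha
      rw [vdm_congr e1, Finset.prod_congr rfl fun q' hq' => vdm_congr (e2 q' hq')] at ha
      rw [map_mul, map_prod, Finset.prod_congr rfl fun q' _ => vdm_map (algebraMap R B) _ _]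
      have e3 : algebraMap (MvPolynomial C ℚ) B a = algebraMap R B (algebraMap (MvPolynomial C ℚ) R a) := rfl
      rw [e3] at ha
      linear_combination ha

lemma dbl_prod {A : Type} [CommRing A] (Z W : Finset ℕ) (y y' x x' : ℕ → A)
    (h1 : rootProd Z y = rootProd Z y') (h2 : rootProd W x = rootProd W x') :
    ∏ k ∈ Z, ∏ l ∈ W, (y k - x l) = ∏ k ∈ Z, ∏ l ∈ W, (y' k - x' l) := by
  have e1 : ∏ k ∈ Z, ∏ l ∈ W, (y k - x l) = ∏ k ∈ Z, ∏ l ∈ W, (y k - x' l) := by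
    simp only [← rootProd_eval, h2]
  rw [e1, Finset.prod_comm, Finset.prod_comm (s := Z)]
  refine Finset.prod_congr rfl fun l _ => ?_
  have e3 : ∀ z : ℕ → A, ∏ k ∈ Z, (z k - x' l) = (-1) ^ Z.card * (rootProd Z z).eval (x' l) := by
    intro z
    rw [rootProd_eval, ← Finset.prod_const, ← Finset.prod_mul_distrib]
    refine Finset.prod_congr rfl fun k _ => ?_
    ring
  rw [e3, e3, h1]

lemma rootProd_shift {A : Type} [CommRing A] (Y : Finset ℕ) (ξ : ℕ → A) (t : A)
    (h : rootProd Y ξ = Polynomial.X ^ Y.card) :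
    rootProd Y (fun k => t + ξ k) = rootProd Y (fun _ => t) := by
  have := congrArg (fun p => Polynomial.comp p (Polynomial.X - Polynomial.C t)) h
  simp only [rootProd, Polynomial.prod_comp, Polynomial.sub_comp, Polynomial.X_comp, Polynomial.C_comp, Polynomial.pow_comp] at this
  simp only [rootProd, Finset.prod_const, map_add]
  rw [← this]
  refine Finset.prod_congr rfl fun k _ => ?_
  ring

lemma cluster_nilp {A : Type} [CommRing A] (Y : Finset ℕ) (ξ : ℕ → A)
    (h : rootProd Y ξ = Polynomial.X ^ Y.card) (k : ℕ) (hk : k ∈ Y) : IsNilpotent (ξ k) := by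
  refine ⟨Y.card, ?_⟩
  have := congrArg (fun p => Polynomial.eval (ξ k) p) h
  simp only [rootProd_eval, Polynomial.eval_pow, Polynomial.eval_X] at this
  rw [← this]
  exact Finset.prod_eq_zero hk (sub_self _)

section good
variable {T R : Type} [CommRing T] [IsDomain T] [CommRing R] [Algebra T R]

def Good (T : Type) {R : Type} [CommRing T] [CommRing R] [Algebra T R] (y : R) : Prop :=
  ∃ a : T, a ≠ 0 ∧ y ∣ algebraMap T R a

lemma Good.one : Good T (1 : R) := ⟨1, one_ne_zero, one_dvd _⟩

lemma Good.mul {x y : R} (hx : Good T x) (hy : Good T y) : Good T (x * y) := by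
  obtain ⟨a, ha, h1⟩ := hx
  obtain ⟨b, hb, h2⟩ := hy
  exact ⟨a * b, mul_ne_zero ha hb, by rw [map_mul]; exact mul_dvd_mul h1 h2⟩

lemma Good.prod {ι : Type} (s : Finset ι) (f : ι → R) (h : ∀ i ∈ s, Good T (f i)) : Good T (∏ i ∈ s, f i) :=
  Finset.prod_induction f (Good T) (fun _ _ => Good.mul) Good.one h

lemma Good.of_nilp (a : T) (ha : a ≠ 0) (η : R) (h : IsNilpotent η) : Good T (algebraMap T R a + η) := by
  obtain ⟨N, hN⟩ := h
  refine ⟨a ^ N, pow_ne_zero _ ha, ?_⟩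
  have := sub_dvd_pow_sub_pow (algebraMap T R a) (-η) N
  rw [neg_pow, hN, mul_zero, sub_zero, sub_neg_eq_add, ← map_pow] at this
  exact this
end good

/-- Main localisation at the initial shuffle. -/
theorem step_core {C : Type} (Q : FinQuiver n) {E : Finset Q.Arr} (γ₁ γ₂ : Fin n → ℕ)
    (cl : Fin n × ℕ → C) (F f : PolyQ n) (hF : F ∈ Hspace γ₁) (hf : f ∈ Hspace γ₂)
    (S0 : Fin n → Finset ℕ) (hS0 : S0 = fun i => Finset.range (γ₁ i))
    (hcl : ∀ i k l, k < γ₁ i → γ₁ i ≤ l → l < γ₁ i + γ₂ i → cl (i, k) ≠ cl (i, l))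
    (hV : ∀ S ∈ shuffles γ₁ γ₂, S ≠ S0 → ∃ c, Vanish (fun a : {a : Q.Arr // a ∈ E} => Q.hd a.1)
      (fun a : {a : Q.Arr // a ∈ E} => Q.tl a.1)
      (fun j => (S j ∩ Ycl (γ₁ + γ₂) cl j c).card)
      (fun j => (shuffleCompl γ₁ γ₂ S j ∩ Ycl (γ₁ + γ₂) cl j c).card)) :
    rename cl (cohaMul Q γ₁ γ₂ F f) * rename cl (interactionDen γ₁ γ₂ S0) =
      rename cl (substAlong S0 F) * rename cl (substAlong (shuffleCompl γ₁ γ₂ S0) f) *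
        rename cl (interactionNum Q γ₁ γ₂ S0) := by
  set Γ := γ₁ + γ₂ with hΓ
  let I : Finset C := Finset.univ.biUnion fun i => (Finset.range (Γ i)).image fun k => cl (i, k)
  have hI : ∀ i k, k < Γ i → cl (i, k) ∈ I := by
    intro i k hk
    simp only [I, Finset.mem_biUnion, Finset.mem_image, Finset.mem_range, Finset.mem_univ, true_and]
    exact ⟨i, k, hk, rfl⟩
  obtain ⟨R, _, _, ξ, hξ0, htf⟩ := clusterRing Γ cl (Finset.univ ×ˢ I)
  have hξ : ∀ i c, rootProd (Ycl Γ cl i c) (ξ i) = Polynomial.X ^ (Ycl Γ cl i c).card := by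
    intro i c
    by_cases hc : c ∈ I
    · exact hξ0 (i, c) (by simp [hc])
    · have : Ycl Γ cl i c = ∅ := by
        ext k
        simp only [mem_Ycl, Finset.notMem_empty, iff_false, not_and]
        intro hk h
        exact hc (h ▸ hI i k hk)
      rw [this]; simp [rootProd]
  letI : Algebra ℚ R := Algebra.compHom R (algebraMap ℚ (MvPolynomial C ℚ))
  haveI : IsScalarTower ℚ (MvPolynomial C ℚ) R := IsScalarTower.of_algebraMap_eq fun _ => rfl
  let am := algebraMap (MvPolynomial C ℚ) R
  let v0 : Fin n × ℕ → R := fun p => am (X (cl p))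
  let v1 : Fin n × ℕ → R := fun p => am (X (cl p)) + ξ p.1 p.2
  let φ : PolyQ n →ₐ[ℚ] R := aeval v1
  have hι : ∀ p : PolyQ n, am (rename cl p) = aeval v0 p := by
    intro p
    have : ((IsScalarTower.toAlgHom ℚ (MvPolynomial C ℚ) R).comp (rename cl)) = aeval v0 := by
      apply MvPolynomial.algHom_ext
      intro q
      simp [v0, am]
    exact congrArg (fun ψ => ψ p) this
  -- cluster-saturated sets
  have hsat : ∀ (i : Fin n) (Z : Finset ℕ), Z ⊆ Finset.range (Γ i) →
      (∀ k ∈ Z, ∀ l < Γ i, cl (i, l) = cl (i, k) → l ∈ Z) →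
      rootProd Z (fun k => v1 (i, k)) = rootProd Z (fun k => v0 (i, k)) := by
    intro i Z hZ hZs
    unfold rootProd
    have hmap : ∀ k ∈ Z, cl (i, k) ∈ Z.image (fun k => cl (i, k)) := fun k hk =>
      Finset.mem_image_of_mem _ hk
    rw [← Finset.prod_fiberwise_of_maps_to hmap, ← Finset.prod_fiberwise_of_maps_to hmap]
    refine Finset.prod_congr rfl fun c hc => ?_
    obtain ⟨k0, hk0, rfl⟩ := Finset.mem_image.1 hc
    have hfib : Z.filter (fun k => cl (i, k) = cl (i, k0)) = Ycl Γ cl i (cl (i, k0)) := by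
      ext k
      rw [mem_Ycl, Finset.mem_filter]
      exact ⟨fun h => ⟨Finset.mem_range.1 (hZ h.1), h.2⟩, fun h => ⟨hZs k0 hk0 k h.1 h.2, h.2⟩⟩
    rw [hfib]
    have e := rootProd_shift _ _ (am (X (cl (i, k0)))) (hξ i (cl (i, k0)))
    unfold rootProd at e
    refine Eq.trans ?_ (e.trans ?_)
    · refine Finset.prod_congr rfl fun k hk => ?_
      simp only [v1, (mem_Ycl.1 hk).2]
    · refine Finset.prod_congr rfl fun k hk => ?_
      simp only [v0, (mem_Ycl.1 hk).2]
  have hS0m : S0 ∈ shuffles γ₁ γ₂ := by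
    rw [mem_shuffles, hS0]; intro i; simp
  have hc0 : ∀ i k, k ∈ shuffleCompl γ₁ γ₂ S0 i ↔ γ₁ i ≤ k ∧ k < Γ i := by
    intro i k; rw [hS0]; simp [shuffleCompl, hΓ]; omega
  have hS0i : ∀ i k, k ∈ S0 i ↔ k < γ₁ i := by intro i k; rw [hS0]; simp
  have hsatS : ∀ i, rootProd (S0 i) (fun k => v1 (i, k)) = rootProd (S0 i) (fun k => v0 (i, k)) := by
    intro i
    refine hsat i _ (mem_shuffles.1 hS0m i).1 ?_
    intro k hk l hl h
    rw [hS0i] at hk ⊢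
    by_contra hl2
    exact hcl i k l hk (by omega) hl h.symm
  have hsatC : ∀ i, rootProd (shuffleCompl γ₁ γ₂ S0 i) (fun k => v1 (i, k)) =
      rootProd (shuffleCompl γ₁ γ₂ S0 i) (fun k => v0 (i, k)) := by
    intro i
    refine hsat i _ Finset.sdiff_subset ?_
    intro k hk l hl h
    rw [hc0] at hk ⊢
    refine ⟨?_, hl⟩
    by_contra hl2
    exact hcl i l k (by omega) hk.1 hk.2 h
  have hφF : φ (substAlong S0 F) = am (rename cl (substAlong S0 F)) := by
    rw [hι]
    exact esym_subst2 γ₁ F hF _ _ _ _ (fun i => (mem_shuffles.1 hS0m i).2)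
      (fun i => (mem_shuffles.1 hS0m i).2) hsatS
  have hφf : φ (substAlong (shuffleCompl γ₁ γ₂ S0) f) = am (rename cl (substAlong (shuffleCompl γ₁ γ₂ S0) f)) := by
    rw [hι]
    exact esym_subst2 γ₂ f hf _ _ _ _ (fun i => card_compl hS0m i)
      (fun i => card_compl hS0m i) hsatC
  have hφnum : φ (interactionNum Q γ₁ γ₂ S0) = am (rename cl (interactionNum Q γ₁ γ₂ S0)) := by
    rw [hι]
    unfold interactionNum arrowFactor
    simp only [map_prod, map_sub, φ, aeval_X]
    exact Finset.prod_congr rfl fun a _ => dbl_prod _ _ _ _ _ _ (hsatC _) (hsatS _)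
  have hφden : φ (interactionDen γ₁ γ₂ S0) = am (rename cl (interactionDen γ₁ γ₂ S0)) := by
    rw [hι]
    unfold interactionDen
    simp only [map_prod, map_sub, φ, aeval_X]
    exact Finset.prod_congr rfl fun a _ => dbl_prod _ _ _ _ _ _ (hsatC _) (hsatS _)
  have hφP : φ (cohaMul Q γ₁ γ₂ F f) = am (rename cl (cohaMul Q γ₁ γ₂ F f)) := by
    rw [hι]
    refine esym Γ _ (cohaMul_mem Q γ₁ γ₂ F f hF hf) _ _ fun i => ?_
    exact hsat i _ (by simp) fun k _ l hl _ => Finset.mem_range.2 hl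
  -- vanishing of other shuffles
  have hvan : ∀ S ∈ shuffles γ₁ γ₂, S ≠ S0 → φ (interactionNum Q γ₁ γ₂ S) = 0 := by
    intro S hS hne
    obtain ⟨c, hc⟩ := hV S hS hne
    have h0 := hc R (fun j => rootProd (S j ∩ Ycl Γ cl j c) (ξ j))
      (fun j l => ξ j (((shuffleCompl γ₁ γ₂ S j ∩ Ycl Γ cl j c).sort (· ≤ ·)).getD l 0)) (by
        intro j
        have e1 : rootProd (Finset.range (shuffleCompl γ₁ γ₂ S j ∩ Ycl Γ cl j c).card)
            (fun l => ξ j (((shuffleCompl γ₁ γ₂ S j ∩ Ycl Γ cl j c).sort (· ≤ ·)).getD l 0)) =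
            rootProd (shuffleCompl γ₁ γ₂ S j ∩ Ycl Γ cl j c) (ξ j) :=
          prod_sort _ (fun k => Polynomial.X - Polynomial.C (ξ j k))
        have hd : Disjoint (S j ∩ Ycl Γ cl j c) (shuffleCompl γ₁ γ₂ S j ∩ Ycl Γ cl j c) :=
          (disj_compl γ₁ γ₂ S j).mono Finset.inter_subset_left Finset.inter_subset_left
        have hu : (S j ∩ Ycl Γ cl j c) ∪ (shuffleCompl γ₁ γ₂ S j ∩ Ycl Γ cl j c) = Ycl Γ cl j c := by
          rw [← Finset.union_inter_distrib_right, union_compl hS]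
          exact Finset.inter_eq_right.2 (Finset.filter_subset _ _)
        simp only
        rw [e1, ← Finset.card_union_of_disjoint hd, hu, ← hξ j c]
        unfold rootProd
        rw [← Finset.prod_union hd, hu])
    have h1 : ∏ a : {a : Q.Arr // a ∈ E}, ∏ k ∈ shuffleCompl γ₁ γ₂ S (Q.hd a.1) ∩ Ycl Γ cl (Q.hd a.1) c,
        ∏ l ∈ S (Q.tl a.1) ∩ Ycl Γ cl (Q.tl a.1) c, (v1 (Q.hd a.1, k) - v1 (Q.tl a.1, l)) = 0 := by
      rw [← h0]
      refine Finset.prod_congr rfl fun a _ => ?_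
      have e2 := prod_sort (shuffleCompl γ₁ γ₂ S (Q.hd a.1) ∩ Ycl Γ cl (Q.hd a.1) c)
        (fun k => (rootProd (S (Q.tl a.1) ∩ Ycl Γ cl (Q.tl a.1) c) (ξ (Q.tl a.1))).eval (ξ (Q.hd a.1) k))
      refine Eq.trans ?_ e2.symm
      refine Finset.prod_congr rfl fun k hk => ?_
      rw [rootProd_eval]
      refine Finset.prod_congr rfl fun l hl => ?_
      have hk' := (mem_Ycl.1 (Finset.mem_inter.1 hk).2).2
      have hl' := (mem_Ycl.1 (Finset.mem_inter.1 hl).2).2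
      simp only [v1, hk', hl']
      ring
    rw [← zero_dvd_iff, ← h1]
    unfold interactionNum arrowFactor
    simp only [map_prod, map_sub, φ, aeval_X]
    have e3 : ∏ a : {a : Q.Arr // a ∈ E}, ∏ k ∈ shuffleCompl γ₁ γ₂ S (Q.hd a.1) ∩ Ycl Γ cl (Q.hd a.1) c,
        ∏ l ∈ S (Q.tl a.1) ∩ Ycl Γ cl (Q.tl a.1) c, (v1 (Q.hd a.1, k) - v1 (Q.tl a.1, l)) =
        ∏ a ∈ E, ∏ k ∈ shuffleCompl γ₁ γ₂ S (Q.hd a) ∩ Ycl Γ cl (Q.hd a) c,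
        ∏ l ∈ S (Q.tl a) ∩ Ycl Γ cl (Q.tl a) c, (v1 (Q.hd a, k) - v1 (Q.tl a, l)) :=
      Finset.prod_coe_sort E (fun a => ∏ k ∈ shuffleCompl γ₁ γ₂ S (Q.hd a) ∩ Ycl Γ cl (Q.hd a) c,
        ∏ l ∈ S (Q.tl a) ∩ Ycl Γ cl (Q.tl a) c, (v1 (Q.hd a, k) - v1 (Q.tl a, l)))
    rw [e3]
    refine (Finset.prod_dvd_prod_of_dvd _ _ fun a _ => ?_).trans
      (Finset.prod_dvd_prod_of_subset _ _ _ (Finset.subset_univ E))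
    refine (Finset.prod_dvd_prod_of_dvd _ _ fun k _ => ?_).trans
      (Finset.prod_dvd_prod_of_subset _ _ _ Finset.inter_subset_left)
    exact Finset.prod_dvd_prod_of_subset _ _ _ Finset.inter_subset_left
  -- torsion-freeness of D
  have hD : ∃ g : R, Good (MvPolynomial C ℚ) g ∧
      φ (Dp Γ) = (∏ q ∈ Finset.univ ×ˢ I, vdm (Ycl Γ cl q.1 q.2) (ξ q.1)) * g := by
    refine ⟨∏ i, ∏ k ∈ Finset.range (Γ i), ∏ l ∈ Finset.range (Γ i),
      (if k < l ∧ cl (i, l) ≠ cl (i, k) then v1 (i, l) - v1 (i, k) else 1), ?_, ?_⟩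
    · refine Good.prod _ _ fun i _ => Good.prod _ _ fun k hk => Good.prod _ _ fun l hl => ?_
      split_ifs with h
      · have hn := fun k (hk : k ∈ Finset.range (Γ i)) => cluster_nilp _ _ (hξ i (cl (i, k))) k
          (mem_Ycl.2 ⟨Finset.mem_range.1 hk, rfl⟩)
        have := Good.of_nilp (R := R) (X (cl (i, l)) - X (cl (i, k)) : MvPolynomial C ℚ)
          (sub_ne_zero.2 fun h' => h.2 (X_injective h')) (ξ i l - ξ i k)
          ((Commute.all _ _).isNilpotent_sub (hn l hl) (hn k hk))
        rw [map_sub] at this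
        convert this using 1
        simp only [v1, am]; ring
      · exact Good.one
    · rw [Finset.prod_product, ← Finset.prod_mul_distrib]
      unfold Dp
      rw [map_prod]
      refine Finset.prod_congr rfl fun i _ => ?_
      have e1 : φ (vdm (Finset.range (Γ i)) (fun k => (X (i, k) : PolyQ n))) =
          vdm (Finset.range (Γ i)) (fun k => v1 (i, k)) := by
        refine (vdm_map (φ : PolyQ n →+* R) _ _).trans (vdm_congr fun k _ => ?_)
        simp [φ]
      rw [e1, vdm_eq]
      have e2 : ∏ c ∈ I, vdm (Ycl Γ cl i c) (ξ i) = ∏ k ∈ Finset.range (Γ i), ∏ l ∈ Finset.range (Γ i),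
          (if k < l ∧ cl (i, l) = cl (i, k) then v1 (i, l) - v1 (i, k) else 1) := by
        have hmap : ∀ k ∈ Finset.range (Γ i), cl (i, k) ∈ I := fun k hk => hI i k (Finset.mem_range.1 hk)
        rw [← Finset.prod_fiberwise_of_maps_to hmap]
        refine Finset.prod_congr rfl fun c _ => ?_
        rw [vdm_eq]
        refine Finset.prod_congr rfl fun k hk => ?_
        have hk' := (mem_Ycl.1 hk).2
        unfold Ycl
        rw [Finset.prod_filter]
        refine Finset.prod_congr rfl fun l _ => ?_
        rw [hk']
        by_cases h1 : cl (i, l) = c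
        · simp only [h1, if_true, and_true, v1, hk']
          split_ifs
          · ring
          · rfl
        · simp [h1]
      rw [e2, ← Finset.prod_mul_distrib]
      refine Finset.prod_congr rfl fun k _ => ?_
      rw [← Finset.prod_mul_distrib]
      refine Finset.prod_congr rfl fun l _ => ?_
      by_cases h1 : k < l
      · by_cases h2 : cl (i, l) = cl (i, k)
        · simp [h1, h2]
        · simp [h1, h2]
      · simp [h1]
  have hDtf : ∀ a : MvPolynomial C ℚ, am a * φ (Dp Γ) = 0 → a = 0 := by
    intro a ha
    obtain ⟨g, ⟨b, hb, z, hz⟩, hg⟩ := hD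
    have : a * b = 0 := by
      apply htf
      rw [map_mul, hz]
      rw [hg] at ha
      linear_combination z * ha
    exact (mul_eq_zero.1 this).resolve_right hb
  -- conclusion
  have hN := congrArg φ (cohaMul_mul Q γ₁ γ₂ F f hF hf)
  unfold Nn at hN
  rw [map_mul, map_sum, Finset.sum_eq_single_of_mem S0 hS0m (fun S hS hne => by
    simp only [map_mul]; rw [hvan S hS hne]; ring)] at hN
  simp only [map_mul] at hN
  have hco := congrArg φ (coS_mul hS0m)
  rw [map_mul] at hco
  rw [hφP, hφF, hφf, hφnum] at hN
  rw [hφden] at hco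
  rw [← sub_eq_zero]
  apply hDtf
  simp only [map_sub, map_mul]
  linear_combination am (rename cl (interactionDen γ₁ γ₂ S0)) * hN + (am (rename cl (substAlong S0 F)) * am (rename cl (substAlong (shuffleCompl γ₁ γ₂ S0) f)) *
        am (rename cl (interactionNum Q γ₁ γ₂ S0))) * hco

/-- prefix dimension vectors -/
noncomputable def GN {r : ℕ} (m : Fin r → ℕ) (β : Fin r → Fin n → ℕ) (N : ℕ) (i : Fin n) : ℕ :=
  ∑ u ∈ Finset.univ.filter (fun u : Fin r => u.val < N), m u * β u i

lemma filter_succ {r : ℕ} (N : ℕ) (h : N < r) :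
    Finset.univ.filter (fun u : Fin r => u.val < N + 1) =
      insert ⟨N, h⟩ (Finset.univ.filter (fun u : Fin r => u.val < N)) := by
  ext u
  simp only [Finset.mem_filter, Finset.mem_univ, true_and, Finset.mem_insert, Fin.ext_iff]
  omega

lemma GN_succ {r : ℕ} (m : Fin r → ℕ) (β : Fin r → Fin n → ℕ) (N : ℕ) (h : N < r) (i : Fin n) :
    GN m β (N + 1) i = GN m β N i + m ⟨N, h⟩ * β ⟨N, h⟩ i := by
  unfold GN
  rw [filter_succ N h, Finset.sum_insert (by simp), add_comm]

lemma GN_mono {r : ℕ} (m : Fin r → ℕ) (β : Fin r → Fin n → ℕ) {N M : ℕ} (h : N ≤ M) (i : Fin n) :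
    GN m β N i ≤ GN m β M i := by
  unfold GN
  refine Finset.sum_le_sum_of_subset ?_
  intro u
  simp only [Finset.mem_filter, Finset.mem_univ, true_and]
  omega

/-- interval property -/
def VM {r : ℕ} (m : Fin r → ℕ) (β : Fin r → Fin n → ℕ) (vmap : Fin n × ℕ → Fin r × ℕ) : Prop :=
  ∀ (i : Fin n) (u : Fin r) (v : ℕ), v < m u → ∀ p, GN m β u.val i + v * β u i ≤ p →
    p < GN m β u.val i + v * β u i + β u i → vmap (i, p) = (u, v)

lemma GN_lt {r : ℕ} (m : Fin r → ℕ) (β : Fin r → Fin n → ℕ) {u : Fin r} {M v : ℕ} (h : u.val < M)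
    (hM : M ≤ r) (hv : v < m u) (i : Fin n) :
    GN m β u.val i + v * β u i + β u i ≤ GN m β M i := by
  have h1 := GN_mono m β (Nat.succ_le_of_lt h) i
  rw [GN_succ m β u.val u.2] at h1
  have h2 : (v + 1) * β u i ≤ m u * β u i := Nat.mul_le_mul_right _ hv
  rw [add_mul, one_mul] at h2
  simp only [Fin.eta] at h1
  omega

lemma vm_exists {r : ℕ} (m : Fin r → ℕ) (β : Fin r → Fin n → ℕ) (i : Fin n) (p : ℕ) :
    ∀ N, N ≤ r → p < GN m β N i → ∃ (u : Fin r) (v : ℕ), u.val < N ∧ v < m u ∧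
      GN m β u.val i + v * β u i ≤ p ∧ p < GN m β u.val i + v * β u i + β u i := by
  intro N
  induction N with
  | zero => intro _ hp; simp [GN] at hp
  | succ N ih =>
    intro hN hp
    by_cases h : p < GN m β N i
    · obtain ⟨u, v, h1, h2⟩ := ih (by omega) h
      exact ⟨u, v, by omega, h2⟩
    · rw [GN_succ m β N hN] at hp
      set b := β ⟨N, hN⟩ i with hb
      have hb0 : 0 < b := by
        rcases Nat.eq_zero_or_pos b with h0 | h0
        · rw [h0, mul_zero] at hp; omega
        · exact h0
      refine ⟨⟨N, hN⟩, (p - GN m β N i) / b, by simp, ?_, ?_, ?_⟩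
      · rw [Nat.div_lt_iff_lt_mul hb0]; omega
      · have := Nat.div_mul_le_self (p - GN m β N i) b
        simp only
        rw [← hb]
        omega
      · have := Nat.lt_div_mul_add hb0 (a := p - GN m β N i)
        simp only
        rw [← hb]
        omega

lemma vm_decode {r : ℕ} (m : Fin r → ℕ) (β : Fin r → Fin n → ℕ) (vmap : Fin n × ℕ → Fin r × ℕ)
    (hV : VM m β vmap) (i : Fin n) (p N : ℕ) (hN : N ≤ r) (hp : p < GN m β N i) :
    (vmap (i, p)).1.val < N ∧ (vmap (i, p)).2 < m (vmap (i, p)).1 ∧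
      GN m β (vmap (i, p)).1.val i + (vmap (i, p)).2 * β (vmap (i, p)).1 i ≤ p ∧
      p < GN m β (vmap (i, p)).1.val i + (vmap (i, p)).2 * β (vmap (i, p)).1 i + β (vmap (i, p)).1 i := by
  obtain ⟨u, v, h1, h2, h3, h4⟩ := vm_exists m β i p N hN hp
  rw [hV i u v h2 p h3 h4]
  exact ⟨h1, h2, h3, h4⟩

lemma Ycl_card {r : ℕ} (m : Fin r → ℕ) (β : Fin r → Fin n → ℕ) (vmap : Fin n × ℕ → Fin r × ℕ)
    (hV : VM m β vmap) (N : ℕ) (hN : N ≤ r) (i : Fin n) (u : Fin r) (v : ℕ) (hu : u.val < N) (hv : v < m u) :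
    (Ycl (GN m β N) vmap i (u, v)).card = β u i := by
  have : Ycl (GN m β N) vmap i (u, v) =
      Finset.Ico (GN m β u.val i + v * β u i) (GN m β u.val i + v * β u i + β u i) := by
    ext p
    rw [mem_Ycl, Finset.mem_Ico]
    constructor
    · rintro ⟨h1, h2⟩
      have := vm_decode m β vmap hV i p N hN h1
      rw [h2] at this
      exact this.2.2
    · rintro ⟨h1, h2⟩
      exact ⟨lt_of_lt_of_le h2 (GN_lt m β hu hN hv i), hV i u v hv p h1 h2⟩
  rw [this]; simp

lemma chi_sum_left {E ι : Type} [Fintype E] (hd tl : E → Fin n) (s : Finset ι) (x : ι → Fin n → ℤ)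
    (z : Fin n → ℤ) : chi hd tl (∑ c ∈ s, x c) z = ∑ c ∈ s, chi hd tl (x c) z := by
  induction s using Finset.induction_on with
  | empty => simp [chi]
  | insert a s ha ih => rw [Finset.sum_insert ha, Finset.sum_insert ha, chi_add_left, ih]

theorem reineke_hV {ℓ r : ℕ} {Q : FinQuiver n} (P : SubqPartition Q ℓ) (hDyn : P.Dynkin)
    (β : Fin r → Fin n → ℕ) (blk : Fin r → Fin ℓ) (hR : IsReinekeOrder P β blk) (m : Fin r → ℕ)
    (vmap : Fin n × ℕ → Fin r × ℕ) (hV : VM m β vmap) (k : Fin r)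
    (γ₁ γ₂ : Fin n → ℕ) (h1 : γ₁ = GN m β k.val) (h2 : γ₂ = fun i => m k * β k i)
    (S : Fin n → Finset ℕ) (hS : S ∈ shuffles γ₁ γ₂) (hne : S ≠ fun i => Finset.range (γ₁ i)) :
    ∃ c, Vanish (pHd P) (pTl P)
      (fun j => (S j ∩ Ycl (γ₁ + γ₂) vmap j c).card)
      (fun j => (shuffleCompl γ₁ γ₂ S j ∩ Ycl (γ₁ + γ₂) vmap j c).card) := by
  have hk1 : k.val + 1 ≤ r := k.2
  have hΓ : γ₁ + γ₂ = GN m β (k.val + 1) := by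
    funext i; rw [GN_succ m β k.val k.2, h1, h2]; rfl
  have hq : chi (pHd P) (pTl P) (fun i => (β k i : ℤ)) (fun i => (β k i : ℤ)) = 1 :=
    (((reineke_rootList P hDyn β blk hR).mem _).1 (List.mem_ofFn.2 ⟨k, rfl⟩)).2
  by_contra hcon
  push Not at hcon
  let Kc : Fin r × ℕ → Fin n → ℕ := fun c j => (S j ∩ Ycl (γ₁ + γ₂) vmap j c).card
  let δ : Fin r × ℕ → Fin n → ℕ := fun c j => (shuffleCompl γ₁ γ₂ S j ∩ Ycl (γ₁ + γ₂) vmap j c).card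
  let J : Finset (Fin r × ℕ) := (Finset.univ.filter fun u : Fin r => u.val < k.val + 1).biUnion
    fun u => (Finset.range (m u)).image fun v => (u, v)
  have hJ : ∀ u v, (u, v) ∈ J ↔ u.val < k.val + 1 ∧ v < m u := by
    intro u v
    simp only [J, Finset.mem_biUnion, Finset.mem_filter, Finset.mem_univ, true_and, Finset.mem_image, Finset.mem_range, Prod.mk.injEq]
    constructor
    · rintro ⟨u', h, v', h', rfl, rfl⟩; exact ⟨h, h'⟩
    · rintro ⟨h, h'⟩; exact ⟨u, h, v, h', rfl, rfl⟩
  have hKδ : ∀ c ∈ J, ∀ j, Kc c j + δ c j = β c.1 j := by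
    rintro ⟨u, v⟩ hc j
    obtain ⟨hu, hv⟩ := (hJ u v).1 hc
    have hd : Disjoint (S j ∩ Ycl (γ₁ + γ₂) vmap j (u, v)) (shuffleCompl γ₁ γ₂ S j ∩ Ycl (γ₁ + γ₂) vmap j (u, v)) :=
      (disj_compl γ₁ γ₂ S j).mono Finset.inter_subset_left Finset.inter_subset_left
    have huu : (S j ∩ Ycl (γ₁ + γ₂) vmap j (u, v)) ∪ (shuffleCompl γ₁ γ₂ S j ∩ Ycl (γ₁ + γ₂) vmap j (u, v)) =
        Ycl (γ₁ + γ₂) vmap j (u, v) := by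
      rw [← Finset.union_inter_distrib_right, union_compl hS]
      exact Finset.inter_eq_right.2 fun p hp => Finset.mem_range.2 (mem_Ycl.1 hp).1
    simp only [Kc, δ]
    rw [← Finset.card_union_of_disjoint hd, huu, hΓ, Ycl_card m β vmap hV _ hk1 j u v hu hv]
  have hchi : ∀ c ∈ J, chi (pHd P) (pTl P) (fun j => (δ c j : ℤ)) (fun j => (β k j : ℤ)) ≤
      if c.1 = k ∧ Kc c = 0 then 1 else 0 := by
    rintro ⟨u, v⟩ hc
    obtain ⟨hu, hv⟩ := (hJ u v).1 hc
    split_ifs with h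
    · obtain ⟨rfl, hK⟩ := h
      have : ∀ j, δ (u, v) j = β u j := by
        intro j
        have := hKδ _ hc j
        rw [hK] at this; simpa using this
      simp only [this]
      exact hq.le
    · by_contra hpos
      push Not at hpos
      refine hcon (u, v) (reineke_vanish P hDyn β blk hR u k (Kc (u, v)) (δ (u, v)) (hKδ _ hc) ?_ hpos)
      rcases Nat.lt_succ_iff_lt_or_eq.1 hu with h' | h'
      · exact Or.inl h'
      · refine Or.inr ⟨Fin.ext h', fun h0 => h ⟨Fin.ext h', h0⟩⟩
  have hsum : ∀ j, ∑ c ∈ J, δ c j = γ₂ j := by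
    intro j
    rw [← card_compl hS j]
    have hmap : ∀ p ∈ shuffleCompl γ₁ γ₂ S j, vmap (j, p) ∈ J := by
      intro p hp
      have hp' : p < GN m β (k.val + 1) j := by
        rw [← hΓ]; exact Finset.mem_range.1 (Finset.mem_sdiff.1 hp).1
      have := vm_decode m β vmap hV j p _ hk1 hp'
      rw [← Prod.mk.eta (p := vmap (j, p)), hJ]
      exact ⟨this.1, this.2.1⟩
    rw [Finset.card_eq_sum_card_fiberwise hmap]
    refine Finset.sum_congr rfl fun c _ => ?_
    simp only [δ]
    congr 1
    ext p
    simp only [Finset.mem_inter, mem_Ycl, Finset.mem_filter]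
    constructor
    · rintro ⟨a, _, b⟩; exact ⟨a, b⟩
    · rintro ⟨a, b⟩; exact ⟨a, Finset.mem_range.1 (Finset.mem_sdiff.1 a).1, b⟩
  have htot : (m k : ℤ) = ∑ c ∈ J, chi (pHd P) (pTl P) (fun j => (δ c j : ℤ)) (fun j => (β k j : ℤ)) := by
    rw [← chi_sum_left]
    have : (∑ c ∈ J, fun j => (δ c j : ℤ)) = (m k : ℤ) • (fun j => (β k j : ℤ)) := by
      funext j
      rw [Finset.sum_apply, Pi.smul_apply, smul_eq_mul]
      have := hsum j
      rw [h2] at this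
      exact_mod_cast this
    rw [this, chi_smul_left, hq, mul_one]
  have hle : (m k : ℤ) ≤ ∑ c ∈ J, if c.1 = k ∧ Kc c = 0 then 1 else 0 := by
    rw [htot]; exact Finset.sum_le_sum hchi
  rw [Finset.sum_boole] at hle
  have hle' : m k ≤ (J.filter fun c => c.1 = k ∧ Kc c = 0).card := by exact_mod_cast hle
  have hsub : (J.filter fun c => c.1 = k ∧ Kc c = 0) ⊆ (Finset.range (m k)).image fun v => (k, v) := by
    rintro ⟨u, v⟩ hc
    rw [Finset.mem_filter] at hc
    obtain ⟨hc, hu, _⟩ := hc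
    simp only at hu
    subst hu
    exact Finset.mem_image_of_mem _ (Finset.mem_range.2 ((hJ u v).1 hc).2)
  have hcard : ((Finset.range (m k)).image fun v => (k, v)).card = m k := by
    rw [Finset.card_image_of_injective _ (fun a b h => (Prod.mk.inj h).2), Finset.card_range]
  have heq := Finset.eq_of_subset_of_card_le hsub (by rw [hcard]; exact hle')
  have hK0 : ∀ v < m k, Kc (k, v) = 0 := by
    intro v hv
    have : (k, v) ∈ (Finset.range (m k)).image fun v => (k, v) :=
      Finset.mem_image_of_mem _ (Finset.mem_range.2 hv)
    rw [← heq, Finset.mem_filter] at this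
    exact this.2.2
  apply hne
  funext i
  refine Finset.eq_of_subset_of_card_le ?_ (by rw [(mem_shuffles.1 hS i).2]; simp)
  intro p hp
  have hp1 := Finset.mem_range.1 ((mem_shuffles.1 hS i).1 hp)
  have hp' : p < GN m β (k.val + 1) i := by rw [← hΓ]; exact hp1
  obtain ⟨d1, d2, d3, d4⟩ := vm_decode m β vmap hV i p _ hk1 hp'
  rw [Finset.mem_range, h1]
  rcases Nat.lt_succ_iff_lt_or_eq.1 d1 with h' | h'
  · exact lt_of_lt_of_le d4 (GN_lt m β h' (by omega) d2 i)
  · exfalso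
    have hk' : (vmap (i, p)).1 = k := Fin.ext h'
    rw [hk'] at d2
    have h0 := congrFun (hK0 _ d2) i
    simp only [Kc, Pi.zero_apply, Finset.card_eq_zero] at h0
    have : p ∈ S i ∩ Ycl (γ₁ + γ₂) vmap i (k, (vmap (i, p)).2) := by
      rw [Finset.mem_inter, mem_Ycl]
      refine ⟨hp, hp1, ?_⟩
      rw [← hk']
    rw [h0] at this
    exact absurd this (Finset.notMem_empty _)

lemma rename_eq_aev {σ τ : Type} (g : σ → τ) (p : MvPolynomial σ ℚ) :
    rename g p = aeval (fun q => (X (g q) : MvPolynomial τ ℚ)) p := by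
  have : (rename g : MvPolynomial σ ℚ →ₐ[ℚ] _) = aeval (fun q => (X (g q) : MvPolynomial τ ℚ)) := by
    apply MvPolynomial.algHom_ext; intro q; simp
  rw [this]

theorem step_final {ℓ r : ℕ} {Q : FinQuiver n} (P : SubqPartition Q ℓ) (hDyn : P.Dynkin)
    (β : Fin r → Fin n → ℕ) (blk : Fin r → Fin ℓ) (hR : IsReinekeOrder P β blk) (m : Fin r → ℕ)
    (iv : Fin r → Fin n) (hiv : ∀ u, β u (iv u) = 1)
    (vmap : Fin n × ℕ → Fin r × ℕ) (hV : VM m β vmap) (k : Fin r) :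
    ∃ D E : MvPolynomial (Fin r × ℕ) ℚ, D ≠ 0 ∧ E ≠ 0 ∧ ∀ F ∈ Hspace (GN m β k.val),
      ∀ f ∈ Aspace (β k) (iv k) (m k),
      rename vmap (cohaMul Q (GN m β k.val) (fun i => m k * β k i) F f) * D =
        rename vmap F * rename (fun p : Fin n × ℕ => (k, p.2)) f * E := by
  set γ₁ := GN m β k.val with h1
  set γ₂ : Fin n → ℕ := fun i => m k * β k i with h2
  let S0 : Fin n → Finset ℕ := fun i => Finset.range (γ₁ i)
  have hΓ : γ₁ + γ₂ = GN m β (k.val + 1) := by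
    funext i; rw [GN_succ m β k.val k.2, h1, h2]; rfl
  have hlow : ∀ i p, p < γ₁ i → (vmap (i, p)).1 < k := by
    intro i p hp
    exact (vm_decode m β vmap hV i p k.val k.2.le hp).1
  have hhigh : ∀ i p, γ₁ i ≤ p → p < γ₁ i + γ₂ i → (vmap (i, p)).1 = k := by
    intro i p hp hp2
    have hp' : p < GN m β (k.val + 1) i := by rw [← hΓ]; exact hp2
    obtain ⟨d1, d2, d3, d4⟩ := vm_decode m β vmap hV i p _ k.2 hp'
    rcases Nat.lt_succ_iff_lt_or_eq.1 d1 with h' | h'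
    · have := lt_of_lt_of_le d4 (GN_lt m β h' k.2.le d2 i)
      exact absurd this (Nat.not_lt.2 hp)
    · exact Fin.ext h'
  have hc0 : ∀ i p, p ∈ shuffleCompl γ₁ γ₂ S0 i ↔ γ₁ i ≤ p ∧ p < γ₁ i + γ₂ i := by
    intro i p; simp [shuffleCompl, S0]; omega
  have hXX : ∀ i j p q, p ∈ shuffleCompl γ₁ γ₂ S0 i → q ∈ S0 j →
      (X (vmap (i, p)) - X (vmap (j, q)) : MvPolynomial (Fin r × ℕ) ℚ) ≠ 0 := by
    intro i j p q hp hq h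
    have h3 := X_injective (sub_eq_zero.1 h)
    have h4 := hhigh i p ((hc0 i p).1 hp).1 ((hc0 i p).1 hp).2
    have h5 := hlow j q (Finset.mem_range.1 hq)
    rw [← h3, h4] at h5
    exact lt_irrefl _ h5
  refine ⟨rename vmap (interactionDen γ₁ γ₂ S0), rename vmap (interactionNum Q γ₁ γ₂ S0), ?_, ?_, ?_⟩
  · unfold interactionDen
    simp only [map_prod, map_sub, rename_X]
    exact Finset.prod_ne_zero_iff.2 fun i _ => Finset.prod_ne_zero_iff.2 fun p hp =>
      Finset.prod_ne_zero_iff.2 fun q hq => hXX i i p q hp hq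
  · unfold interactionNum arrowFactor
    simp only [map_prod, map_sub, rename_X]
    exact Finset.prod_ne_zero_iff.2 fun a _ => Finset.prod_ne_zero_iff.2 fun p hp =>
      Finset.prod_ne_zero_iff.2 fun q hq => hXX _ _ p q hp hq
  · intro F hF f hf
    have hS0m : S0 ∈ shuffles γ₁ γ₂ := by
      rw [mem_shuffles]; intro i; simp [S0]
    have := step_core Q (E := P.arrs) γ₁ γ₂ vmap F f hF hf.1 S0 rfl (by
      intro i p q hp hq hq2 h
      have h4 := hhigh i q hq hq2
      have h5 := hlow i p hp
      rw [h, h4] at h5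
      exact lt_irrefl _ h5) (fun S hS hne =>
        reineke_hV P hDyn β blk hR m vmap hV k γ₁ γ₂ h1 h2 S hS hne)
    rw [this]
    congr 2
    · rw [rename_eq_aev, rename_eq_aev]
      exact esym_subst γ₁ F hF _ _ S0 (by intro i; simp [S0]) (fun i => rfl)
    · rw [rename_eq_aev, rename_eq_aev]
      rw [esym_subst γ₂ f hf.1 _ (fun p => X (vmap (p.1, γ₁ p.1 + p.2))) _ (fun i => card_compl hS0m i) (by
        intro i
        have : shuffleCompl γ₁ γ₂ S0 i = Finset.Ico (γ₁ i) (γ₁ i + γ₂ i) := by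
          ext p; rw [hc0, Finset.mem_Ico]
        rw [this]
        unfold rootProd
        rw [Finset.prod_Ico_eq_prod_range]
        simp)]
      refine aeval_congr_vars _ _ _ fun p hp => ?_
      have hp1 : p.1 = iv k := hf.2 p hp
      have hp2 : p.2 < m k * β k p.1 := hf.1.1 p hp
      rw [hp1, hiv, mul_one] at hp2
      have := hV (iv k) k p.2 hp2 (γ₁ (iv k) + p.2) (by rw [hiv, h1]; omega) (by rw [hiv, h1]; omega)
      simp only [hp1, this]

lemma cohaProd_append (Q : FinQuiver n) (L : List ((Fin n → ℕ) × PolyQ n)) (hL : L ≠ [])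
    (y : (Fin n → ℕ) × PolyQ n) : cohaProd Q (L ++ [y]) =
      ((cohaProd Q L).1 + y.1, cohaMul Q (cohaProd Q L).1 y.1 (cohaProd Q L).2 y.2) := by
  cases L with
  | nil => exact absurd rfl hL
  | cons x xs => simp [cohaProd, List.foldl_append]

theorem prefix_main {ℓ r : ℕ} {Q : FinQuiver n} (P : SubqPartition Q ℓ) (hDyn : P.Dynkin)
    (β : Fin r → Fin n → ℕ) (blk : Fin r → Fin ℓ) (hR : IsReinekeOrder P β blk) (m : Fin r → ℕ)
    (iv : Fin r → Fin n) (hiv : ∀ u, β u (iv u) = 1)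
    (vmap : Fin n × ℕ → Fin r × ℕ) (hV : VM m β vmap) :
    ∀ N, N + 1 ≤ r → ∃ D E : MvPolynomial (Fin r × ℕ) ℚ, D ≠ 0 ∧ E ≠ 0 ∧
      ∀ f : Fin r → PolyQ n, (∀ u, f u ∈ Aspace (β u) (iv u) (m u)) →
      (cohaProd Q ((List.ofFn fun u => ((fun v => m u * β u v), f u)).take (N + 1))).1 = GN m β (N + 1) ∧
      (cohaProd Q ((List.ofFn fun u => ((fun v => m u * β u v), f u)).take (N + 1))).2 ∈ Hspace (GN m β (N + 1)) ∧
      rename vmap (cohaProd Q ((List.ofFn fun u => ((fun v => m u * β u v), f u)).take (N + 1))).2 * D =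
        (∏ u ∈ Finset.univ.filter (fun u : Fin r => u.val < N + 1),
          rename (fun p : Fin n × ℕ => (u, p.2)) (f u)) * E := by
  intro N
  have htake : ∀ (f : Fin r → PolyQ n) (M : ℕ) (hM : M < r),
      (List.ofFn fun u => ((fun v => m u * β u v), f u)).take (M + 1) =
      (List.ofFn fun u => ((fun v => m u * β u v), f u)).take M ++
        [((fun v => m ⟨M, hM⟩ * β ⟨M, hM⟩ v), f ⟨M, hM⟩)] := by
    intro f M hM
    rw [List.take_succ_eq_append_getElem (by simpa using hM)]
    simp
  induction N with
  | zero =>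
    intro h0
    refine ⟨1, 1, one_ne_zero, one_ne_zero, ?_⟩
    intro f hf
    rw [htake f 0 h0, List.take_zero, List.nil_append]
    have hG : GN m β (0 + 1) = fun v => m ⟨0, h0⟩ * β ⟨0, h0⟩ v := by
      funext v; rw [GN_succ m β 0 h0]; simp [GN]
    refine ⟨hG.symm, ?_, ?_⟩
    · rw [hG]; exact (hf ⟨0, h0⟩).1
    · rw [filter_succ 0 h0]
      simp only [Nat.not_lt_zero, Finset.filter_false, insert_empty_eq, Finset.prod_singleton, mul_one]
      simp only [cohaProd, List.foldl_nil]
      rw [rename_eq_aev, rename_eq_aev]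
      refine aeval_congr_vars _ _ _ fun p hp => ?_
      have hp1 : p.1 = iv ⟨0, h0⟩ := (hf ⟨0, h0⟩).2 p hp
      have hp2 : p.2 < m ⟨0, h0⟩ * β ⟨0, h0⟩ p.1 := (hf ⟨0, h0⟩).1.1 p hp
      rw [hp1, hiv, mul_one] at hp2
      have := hV (iv ⟨0, h0⟩) ⟨0, h0⟩ p.2 hp2 p.2 (by rw [hiv]; simp [GN]) (by rw [hiv]; omega)
      rw [← this, ← hp1]
  | succ N ih =>
    intro hN
    obtain ⟨D, E, hD, hE, h⟩ := ih (by omega)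
    obtain ⟨D', E', hD', hE', h'⟩ := step_final P hDyn β blk hR m iv hiv vmap hV ⟨N + 1, hN⟩
    refine ⟨D * D', E * E', mul_ne_zero hD hD', mul_ne_zero hE hE', ?_⟩
    intro f hf
    obtain ⟨a1, a2, a3⟩ := h f hf
    rw [htake f (N + 1) hN, cohaProd_append _ _ (by
      intro h0
      have := congrArg List.length h0
      simp at this; omega)]
    set z := cohaProd Q ((List.ofFn fun u => ((fun v => m u * β u v), f u)).take (N + 1)) with hz
    have hG : GN m β (N + 1 + 1) = GN m β (N + 1) + fun v => m ⟨N + 1, hN⟩ * β ⟨N + 1, hN⟩ v := by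
      funext v; rw [GN_succ m β (N + 1) hN]; rfl
    refine ⟨?_, ?_, ?_⟩
    · simp only; rw [a1, hG]
    · simp only
      rw [a1, hG]
      exact cohaMul_mem _ _ _ _ _ a2 (hf _).1
    · simp only
      rw [a1, filter_succ (N + 1) hN, Finset.prod_insert (by simp)]
      have h3 := h' z.2 a2 (f ⟨N + 1, hN⟩) (hf _)
      simp only at h3
      linear_combination D * h3 + (rename (fun p : Fin n × ℕ => ((⟨N + 1, hN⟩ : Fin r), p.2)) (f ⟨N + 1, hN⟩)) * E' * a3

lemma one_mem_Aspace (β : Fin n → ℕ) (i : Fin n) (m : ℕ) : (1 : PolyQ n) ∈ Aspace β i m := by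
  refine ⟨⟨?_, ?_⟩, ?_⟩
  · intro p hp; simp [vars_one] at hp
  · intro i σ _; simp
  · intro p hp; simp [vars_one] at hp

/-- With `𝒬•` an admissible, ordered, Dynkin subquiver partition of
the acyclic quiver `Q`, `β` a Reineke order with chosen vertices `iv u`
(`β u (iv u) = 1`), and `m` a `𝒬•`-partition of `γ`, let `ι*_m` be the substitution
`ω_{i,k} ↦ t_{u,v}` for `k ∈ Y_{i,u,v}`, where the `Y_{i,u,v}` are the consecutive
intervals of sizes `β_u(i)` listed in lexicographic `(u,v)` order.  Then
`g_m := ι*_m(1 * ⋯ * 1)` is a nonzero polynomial in the `t_{u,v}`, independent of the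
`f_u`, and for all `f_u ∈ 𝒜_{β_u,m_u}`,
`ι*_m(f₁ * ⋯ * f_r) = f₁(t_{1,•}) ⋯ f_r(t_{r,•}) · g_m`. -/
theorem restriction_of_coha_product {n ℓ r : ℕ} (Q : FinQuiver n) (hQ : Q.Acyclic)
    (P : SubqPartition Q ℓ) (hord : P.Ordered) (hDyn : P.Dynkin)
    (β : Fin r → Fin n → ℕ) (blk : Fin r → Fin ℓ) (hR : IsReinekeOrder P β blk)
    (iv : Fin r → Fin n) (hiv : ∀ u, β u (iv u) = 1)
    (γ : Fin n → ℕ) (m : Fin r → ℕ) (hm : (fun v => ∑ u, m u * β u v) = γ)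
    (vmap : Fin n × ℕ → Fin r × ℕ)
    (hvmap : ∀ (i : Fin n) (u : Fin r) (v : ℕ), v < m u →
      ∀ k ∈ Finset.Ico ((∑ u' ∈ Finset.univ.filter (· < u), m u' * β u' i) + v * β u i)
          ((∑ u' ∈ Finset.univ.filter (· < u), m u' * β u' i) + v * β u i + β u i),
        vmap (i, k) = (u, v)) :
    rename vmap (cohaProdFin Q (fun u v => m u * β u v) (fun _ => 1)) ≠ 0 ∧
    ∀ f : Fin r → PolyQ n, (∀ u, f u ∈ Aspace (β u) (iv u) (m u)) →
      rename vmap (cohaProdFin Q (fun u v => m u * β u v) f) =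
        (∏ u : Fin r, rename (fun p : Fin n × ℕ => (u, p.2)) (f u)) *
          rename vmap (cohaProdFin Q (fun u v => m u * β u v) (fun _ => 1)) := by
  have hV : VM m β vmap := by
    intro i u v hv p hp1 hp2
    refine hvmap i u v hv p ?_
    have e : (∑ u' ∈ Finset.univ.filter (· < u), m u' * β u' i) = GN m β u.val i := by
      unfold GN
      refine Finset.sum_congr ?_ fun _ _ => rfl
      ext u'; simp only [Finset.mem_filter, Finset.mem_univ, true_and]; exact Iff.rfl
    rw [e, Finset.mem_Ico]
    exact ⟨hp1, hp2⟩
  rcases Nat.eq_zero_or_pos r with hr | hr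
  · subst hr
    simp [cohaProdFin, cohaProd]
  · obtain ⟨N, rfl⟩ : ∃ N, r = N + 1 := ⟨r - 1, by omega⟩
    obtain ⟨D, E, hD, hE, h⟩ := prefix_main P hDyn β blk hR m iv hiv vmap hV N le_rfl
    have hu : Finset.univ.filter (fun u : Fin (N + 1) => u.val < N + 1) = Finset.univ :=
      Finset.filter_true_of_mem fun u _ => u.2
    have key : ∀ f : Fin (N + 1) → PolyQ n, (∀ u, f u ∈ Aspace (β u) (iv u) (m u)) →
        rename vmap (cohaProdFin Q (fun u v => m u * β u v) f) * D =
          (∏ u : Fin (N + 1), rename (fun p : Fin n × ℕ => (u, p.2)) (f u)) * E := by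
      intro f hf
      have := (h f hf).2.2
      rw [List.take_of_length_le (by simp), hu] at this
      exact this
    have h1 := key (fun _ => 1) fun u => one_mem_Aspace _ _ _
    simp only [map_one, Finset.prod_const_one, one_mul] at h1
    refine ⟨?_, ?_⟩
    · intro h0
      rw [h0, zero_mul] at h1
      exact hE h1.symm
    · intro f hf
      refine mul_right_cancel₀ hD ?_
      rw [key f hf, mul_assoc, h1]
end

section
/- For each r ≥ 0, the collection of left-to-right products ψ_{a₁} * ψ_{a₂} * ⋯ * ψ_{a_r}, taken over all strictly increasing sequences 0 ≤ a₁ < a₂ < ⋯ < a_r of nonnegative integers, forms a ℚ-vector-space basis of ℋ_r(A₁) (the symmetric polynomials in x₁,…,x_r over ℚ). In particular, ℋ(A₁) is generated as an algebra under * by ℋ₁(A₁): every symmetric polynomial in x₁,…,x_r over ℚ is a ℚ-linear combination of r-fold products ψ_{a₁} * ⋯ * ψ_{a_r}. -/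
open MvPolynomial
open scoped Classical

variable {n : ℕ}

/-- Generalized Vandermonde determinant. -/
noncomputable def gvan {R : Type*} [CommRing R] {r : ℕ} (x : Fin r → R) (a : Fin r → ℕ) : R :=
  Matrix.det (Matrix.of fun i j => x i ^ a j)

lemma gvan_van {R : Type*} [CommRing R] {r : ℕ} (x : Fin r → R) :
    gvan x (fun i => (i : ℕ)) = (Matrix.vandermonde x).det := rfl

lemma gvan_map {R S : Type*} [CommRing R] [CommRing S] {r : ℕ} (φ : R →+* S) (x : Fin r → R)
    (a : Fin r → ℕ) : φ (gvan x a) = gvan (fun i => φ (x i)) a := by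
  unfold gvan
  rw [RingHom.map_det]
  congr 1
  ext i j
  simp

lemma gvan_eq_zero {R : Type*} [CommRing R] {r : ℕ} (x : Fin r → R) (a : Fin r → ℕ)
    {i j : Fin r} (hij : i ≠ j) (h : x i = x j) : gvan x a = 0 :=
  Matrix.det_zero_of_row_eq hij (by ext k; simp [h])

lemma gvan_eq_zero' {R : Type*} [CommRing R] {r : ℕ} (x : Fin r → R) (a : Fin r → ℕ)
    {i j : Fin r} (hij : i ≠ j) (h : a i = a j) : gvan x a = 0 :=
  Matrix.det_zero_of_column_eq hij (by intro k; simp [h])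

lemma gvan_perm {R : Type*} [CommRing R] {r : ℕ} (x : Fin r → R) (a : Fin r → ℕ)
    (σ : Equiv.Perm (Fin r)) :
    gvan (fun i => x (σ i)) a = ((Equiv.Perm.sign σ : ℤ) : R) * gvan x a :=
  Matrix.det_permute σ (Matrix.of fun i j => x i ^ a j)

lemma gvan_perm' {R : Type*} [CommRing R] {r : ℕ} (x : Fin r → R) (a : Fin r → ℕ)
    (σ : Equiv.Perm (Fin r)) :
    gvan x (fun i => a (σ i)) = ((Equiv.Perm.sign σ : ℤ) : R) * gvan x a :=
  Matrix.det_permute' σ (Matrix.of fun i j => x i ^ a j)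

lemma gvan_expand {R : Type*} [CommRing R] {r : ℕ} (x : Fin (r+1) → R) (a : Fin (r+1) → ℕ) :
    gvan x a = ∑ k : Fin (r+1), (-1) ^ ((k : ℕ) + r) * x k ^ a (Fin.last r) *
      gvan (fun i => x (k.succAbove i)) (fun i => a i.castSucc) := by
  unfold gvan
  rw [Matrix.det_succ_column _ (Fin.last r)]
  refine Finset.sum_congr rfl fun k _ => ?_
  simp only [Fin.val_last, Matrix.of_apply]
  congr 2
  ext i j
  simp

lemma van_remove {R : Type*} [CommRing R] {r : ℕ} (x : Fin (r+1) → R) (k : Fin (r+1)) :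
    (-1) ^ ((k : ℕ) + r) * gvan x (fun i => (i : ℕ)) =
      (∏ i : Fin r, (x k - x (k.succAbove i))) *
        gvan (fun i => x (k.succAbove i)) (fun i => (i : ℕ)) := by
  have h := gvan_perm x (fun i => (i : ℕ)) k.cycleRange.symm
  rw [gvan_van, Matrix.det_vandermonde, Fin.prod_univ_succ, Fin.prod_Ioi_zero] at h
  simp only [Fin.prod_Ioi_succ, Fin.cycleRange_symm_zero, Fin.cycleRange_symm_succ] at h
  rw [gvan_van (fun i => x (k.succAbove i)), Matrix.det_vandermonde]
  have h2 : ∏ i : Fin r, (x k - x (k.succAbove i)) =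
      (-1) ^ r * ∏ i : Fin r, (x (k.succAbove i) - x k) := by
    rw [← Fin.prod_const, ← Finset.prod_mul_distrib]
    exact Finset.prod_congr rfl fun i _ => by ring
  rw [h2, mul_assoc, h]
  simp [Equiv.Perm.sign_symm, Fin.sign_cycleRange]
  ring

lemma field_step {K : Type*} [Field K] {r : ℕ} (x : Fin (r+1) → K) (hx : Function.Injective x)
    (a : Fin (r+1) → ℕ) (s : Fin (r+1) → K)
    (hs : ∀ k, gvan (fun i => x (k.succAbove i)) (fun i => (i : ℕ)) * s k =
      gvan (fun i => x (k.succAbove i)) (fun i => a i.castSucc)) :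
    gvan x (fun i => (i : ℕ)) *
      ∑ k, s k * x k ^ a (Fin.last r) / ∏ i : Fin r, (x k - x (k.succAbove i)) = gvan x a := by
  rw [gvan_expand x a, Finset.mul_sum]
  refine Finset.sum_congr rfl fun k _ => ?_
  have hp : ∏ i : Fin r, (x k - x (k.succAbove i)) ≠ 0 :=
    Finset.prod_ne_zero_iff.2 fun i _ h =>
      Fin.succAbove_ne k i (hx (sub_eq_zero.1 h)).symm
  have h := van_remove x k
  have h1 : ((-1 : K) ^ ((k : ℕ) + r)) * (-1) ^ ((k : ℕ) + r) = 1 := by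
    rw [← mul_pow]; simp
  rw [← hs k, mul_div_assoc', div_eq_iff hp]
  calc _ = (((-1 : K) ^ ((k : ℕ) + r)) * (-1) ^ ((k : ℕ) + r)) *
        (gvan x (fun i => (i : ℕ)) * (s k * x k ^ a (Fin.last r))) := by rw [h1, one_mul]
    _ = (-1) ^ ((k : ℕ) + r) * ((-1) ^ ((k : ℕ) + r) * gvan x (fun i => (i : ℕ))) *
        (s k * x k ^ a (Fin.last r)) := by ring
    _ = _ := by rw [h]; ring

lemma van_ne_zero {R : Type*} [CommRing R] [IsDomain R] {r : ℕ} (x : Fin r → R)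
    (hx : Function.Injective x) : gvan x (fun i => (i : ℕ)) ≠ 0 := by
  rw [gvan_van]
  exact Matrix.det_vandermonde_ne_zero_iff.2 hx

lemma irr_sub {r : ℕ} {i j : Fin r} (hij : i < j) :
    Irreducible (X j - X i : MvPolynomial (Fin r) ℚ) := by
  have hc : coeff (Finsupp.single j 1) (X j - X i : MvPolynomial (Fin r) ℚ) = 1 := by
    rw [coeff_sub, coeff_X, coeff_X, if_pos rfl, if_neg, sub_zero]
    intro h
    exact hij.ne (Finsupp.single_left_injective one_ne_zero h)
  apply irreducible_of_totalDegree_eq_one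
  · apply le_antisymm
    · refine (totalDegree_sub _ _).trans ?_
      simp
    · have := le_totalDegree (p := (X j - X i : MvPolynomial (Fin r) ℚ))
        (s := Finsupp.single j 1) (by rw [mem_support_iff, hc]; exact one_ne_zero)
      simpa using this
  · intro c h
    have := h (Finsupp.single j 1)
    rw [hc] at this
    exact isUnit_of_dvd_one this

lemma van_dvd {r : ℕ} (a : Fin r → ℕ) :
    gvan (X : Fin r → MvPolynomial (Fin r) ℚ) (fun i => (i : ℕ)) ∣ gvan X a := by
  rw [gvan_van, Matrix.det_vandermonde, Finset.prod_sigma']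
  apply Finset.prod_dvd_of_isRelPrime
  · rintro ⟨i, j⟩ hij ⟨k, l⟩ hkl hne
    simp at hij hkl
    change IsRelPrime (X j - X i : MvPolynomial (Fin r) ℚ) (X l - X k)
    rw [(irr_sub hij).isRelPrime_iff_not_dvd]
    rintro ⟨q, hq⟩
    have h := congrArg (eval fun m : Fin r => if m = i then ((j : ℕ) : ℚ) else ((m : ℕ) : ℚ)) hq
    simp only [map_sub, map_mul, eval_X, if_true, if_neg hij.ne', sub_self, zero_mul] at h
    rw [sub_eq_zero] at h
    split_ifs at h with h1 h2 h2
    · exact hkl.ne (h2.trans h1.symm)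
    · have : j = k := by apply Fin.ext; exact_mod_cast h
      subst h1 this
      exact absurd hkl hij.asymm
    · have : l = j := by apply Fin.ext; exact_mod_cast h
      subst h2 this
      exact hne rfl
    · have : l = k := by apply Fin.ext; exact_mod_cast h
      exact hkl.ne' this
  · rintro ⟨i, j⟩ hij
    simp at hij
    change (X j - X i : MvPolynomial (Fin r) ℚ) ∣ _
    rw [← Ideal.mem_span_singleton, ← Ideal.Quotient.eq_zero_iff_mem, gvan_map]
    refine gvan_eq_zero _ _ hij.ne' ?_
    rw [Ideal.Quotient.eq, Ideal.mem_span_singleton]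

/-- The quotient (Schur polynomial). -/
noncomputable def schurP {r : ℕ} (a : Fin r → ℕ) : MvPolynomial (Fin r) ℚ := (van_dvd a).choose

lemma schurP_spec {r : ℕ} (a : Fin r → ℕ) :
    gvan (X : Fin r → MvPolynomial (Fin r) ℚ) a = gvan X (fun i => (i : ℕ)) * schurP a :=
  (van_dvd a).choose_spec

lemma rename_gvan {r : ℕ} {τ : Type*} (e : Fin r → τ) (a : Fin r → ℕ) :
    rename e (gvan (X : Fin r → MvPolynomial (Fin r) ℚ) a) =
      gvan (fun i => (X (e i) : MvPolynomial τ ℚ)) a := by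
  have := gvan_map (rename e : MvPolynomial (Fin r) ℚ →ₐ[ℚ] MvPolynomial τ ℚ).toRingHom X a
  simpa using this

lemma vanX_ne_zero {r : ℕ} :
    gvan (X : Fin r → MvPolynomial (Fin r) ℚ) (fun i => (i : ℕ)) ≠ 0 :=
  van_ne_zero _ (X_injective)

lemma schurP_symm {r : ℕ} (a : Fin r → ℕ) : (schurP a).IsSymmetric := by
  intro σ
  have h := congrArg (rename σ) (schurP_spec a)
  rw [map_mul, rename_gvan, rename_gvan, gvan_perm, gvan_perm, schurP_spec a] at h
  have hs : (((Equiv.Perm.sign σ : ℤ) : MvPolynomial (Fin r) ℚ)) ≠ 0 := by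
    exact_mod_cast (Equiv.Perm.sign σ).ne_zero
  rw [mul_assoc] at h
  exact (mul_left_cancel₀ vanX_ne_zero (mul_left_cancel₀ hs h)).symm

lemma gvan_monomial {r : ℕ} (a : Fin r → ℕ) :
    gvan (X : Fin r → MvPolynomial (Fin r) ℚ) a =
      ∑ σ : Equiv.Perm (Fin r), ((Equiv.Perm.sign σ : ℤ) : ℚ) •
        monomial (Finsupp.equivFunOnFinite.symm (fun i => a (σ i))) (1 : ℚ) := by
  unfold gvan
  rw [← Matrix.det_transpose, Matrix.det_apply']
  refine Finset.sum_congr rfl fun σ _ => ?_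
  rw [monomial_eq, Finsupp.prod_fintype _ _ (by simp), smul_eq_C_mul]
  simp

lemma coeff_gvan {r : ℕ} (a b : Fin r → ℕ) (ha : StrictMono a) (hb : StrictMono b) :
    coeff (Finsupp.equivFunOnFinite.symm b) (gvan (X : Fin r → MvPolynomial (Fin r) ℚ) a) =
      if a = b then 1 else 0 := by
  rw [gvan_monomial, coeff_sum]
  have key : ∀ σ : Equiv.Perm (Fin r), (fun i => a (σ i)) = b → a = b ∧ σ = 1 := by
    intro σ h
    have hab : a = b := by
      apply (StrictMono.range_inj ha hb).1
      rw [← h]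
      exact (σ.surjective.range_comp a).symm
    refine ⟨hab, ?_⟩
    ext i
    have := congrFun h i
    rw [← hab] at this
    simpa using congrArg Fin.val (ha.injective this)
  rw [Finset.sum_eq_single 1]
  · simp [coeff_monomial]
  · intro σ _ hσ
    rw [coeff_smul, coeff_monomial, if_neg, smul_zero]
    intro h
    exact hσ (key σ (Finsupp.equivFunOnFinite.symm.injective h)).2
  · simp

lemma schurP_li (r : ℕ) :
    LinearIndependent ℚ (fun a : {a : Fin r → ℕ // StrictMono a} => schurP a.1) := by
  rw [linearIndependent_iff']
  intro s g hg b hb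
  have h := congrArg (fun p => coeff (Finsupp.equivFunOnFinite.symm b.1)
    (gvan (X : Fin r → MvPolynomial (Fin r) ℚ) (fun i => (i : ℕ)) * p)) hg
  simp only [Finset.mul_sum, mul_smul_comm, ← schurP_spec, coeff_sum, coeff_smul, mul_zero,
    coeff_zero] at h
  rw [Finset.sum_eq_single b] at h
  · simpa [coeff_gvan b.1 b.1 b.2 b.2] using h
  · intro a _ hab
    rw [coeff_gvan a.1 b.1 a.2 b.2, if_neg (fun h => hab (Subtype.ext h)), smul_zero]
  · intro h; exact absurd hb h

lemma schurP_mem {r : ℕ} (a : Fin r → ℕ) :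
    schurP a ∈ Submodule.span ℚ
      (Set.range fun a : {a : Fin r → ℕ // StrictMono a} => schurP a.1) := by
  by_cases ha : Function.Injective a
  · have hm : StrictMono (a ∘ Tuple.sort a) :=
      (Tuple.monotone_sort a).strictMono_of_injective (ha.comp (Tuple.sort a).injective)
    have h := gvan_perm' (X : Fin r → MvPolynomial (Fin r) ℚ) a (Tuple.sort a)
    have h' : gvan (X : Fin r → MvPolynomial (Fin r) ℚ) (fun i => a (Tuple.sort a i)) =
      gvan X (fun i => (i : ℕ)) * schurP (a ∘ Tuple.sort a) := schurP_spec _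
    rw [h', schurP_spec a, mul_left_comm] at h
    have h2 := mul_left_cancel₀ vanX_ne_zero h
    have h3 : schurP a = ((Equiv.Perm.sign (Tuple.sort a) : ℤ) : ℚ) •
        schurP (a ∘ Tuple.sort a) := by
      rw [h2, smul_eq_C_mul, ← mul_assoc]
      rcases Int.units_eq_one_or (Equiv.Perm.sign (Tuple.sort a)) with e | e <;> simp [e]
    rw [h3]
    exact Submodule.smul_mem _ _ (Submodule.subset_span ⟨⟨_, hm⟩, rfl⟩)
  · simp only [Function.Injective, not_forall] at ha
    obtain ⟨i, j, h, hij⟩ := ha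
    have h0 := schurP_spec a
    rw [gvan_eq_zero' _ _ hij h] at h0
    have : schurP a = 0 := (mul_eq_zero.1 h0.symm).resolve_left vanX_ne_zero
    rw [this]
    exact Submodule.zero_mem _

lemma antisymmetrize {r : ℕ} (p : MvPolynomial (Fin r) ℚ) :
    ∃ q ∈ Submodule.span ℚ
      (Set.range fun a : {a : Fin r → ℕ // StrictMono a} => schurP a.1),
      ∑ σ : Equiv.Perm (Fin r), ((Equiv.Perm.sign σ : ℤ) : ℚ) • rename σ p =
      gvan X (fun i => (i : ℕ)) * q := by
  induction p using MvPolynomial.induction_on' with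
  | monomial u c =>
    refine ⟨c • schurP u, Submodule.smul_mem _ _ (schurP_mem _), ?_⟩
    rw [mul_smul_comm, ← schurP_spec]
    unfold gvan
    rw [Matrix.det_apply', Finset.smul_sum]
    refine Finset.sum_congr rfl fun σ _ => ?_
    rw [monomial_eq, Finsupp.prod_fintype _ _ (by simp), smul_eq_C_mul, smul_eq_C_mul]
    simp only [map_mul, map_prod, map_pow, rename_X, rename_C, Matrix.of_apply, map_intCast]
    ring
  | add p q hp hq =>
    obtain ⟨p', hp', hp⟩ := hp
    obtain ⟨q', hq', hq⟩ := hq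
    refine ⟨p' + q', Submodule.add_mem _ hp' hq', ?_⟩
    simp only [map_add, smul_add, Finset.sum_add_distrib, hp, hq, mul_add]

lemma schurP_span {r : ℕ} (f : MvPolynomial (Fin r) ℚ) (hf : f.IsSymmetric) :
    f ∈ Submodule.span ℚ
      (Set.range fun a : {a : Fin r → ℕ // StrictMono a} => schurP a.1) := by
  obtain ⟨q, hq, h⟩ := antisymmetrize (gvan X (fun i => (i : ℕ)) * f)
  have h1 : ∀ σ : Equiv.Perm (Fin r), ((Equiv.Perm.sign σ : ℤ) : ℚ) •
      rename σ (gvan X (fun i => (i : ℕ)) * f) = gvan X (fun i => (i : ℕ)) * f := by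
    intro σ
    rw [map_mul, rename_gvan, gvan_perm, hf σ, smul_eq_C_mul]
    rcases Int.units_eq_one_or (Equiv.Perm.sign σ) with e | e <;> simp [e]
  simp only [h1] at h
  rw [Finset.sum_const, ← mul_smul_comm] at h
  have h2 := mul_left_cancel₀ vanX_ne_zero h
  rw [← h2, ← Nat.cast_smul_eq_nsmul ℚ] at hq
  refine (Submodule.smul_mem_iff _ ?_).1 hq
  rw [Finset.card_univ]
  exact_mod_cast Fintype.card_ne_zero

/-- The inclusion of variables. -/
def iotaV (r : ℕ) : Fin r → Fin 1 × ℕ := fun i => (0, (i : ℕ))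

lemma iotaV_inj (r : ℕ) : Function.Injective (iotaV r) := by
  intro i j h
  simpa [iotaV, Fin.ext_iff] using h

lemma sort_getD {k : ℕ} (f : Fin k → ℕ) (hf : StrictMono f) (S : Finset ℕ)
    (hS : S = Finset.univ.image f) (i : Fin k) : (S.sort (· ≤ ·)).getD (i : ℕ) 0 = f i := by
  have hc : S.card = k := by
    rw [hS, Finset.card_image_of_injective _ hf.injective]; simp
  have h := Finset.orderEmbOfFin_unique hc (f := f) (by intro x; simp [hS]) hf
  rw [h, Finset.orderEmbOfFin_apply]
  rw [List.getD_eq_getElem]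
  rfl

lemma compl_image {r : ℕ} (k : Fin (r+1)) :
    Finset.range (r+1) \ {(k : ℕ)} =
      Finset.univ.image (fun i : Fin r => ((k.succAbove i : Fin (r+1)) : ℕ)) := by
  ext m
  simp only [Finset.mem_sdiff, Finset.mem_range, Finset.mem_singleton, Finset.mem_image,
    Finset.mem_univ, true_and]
  constructor
  · rintro ⟨h1, h2⟩
    obtain ⟨i, hi⟩ := Fin.exists_succAbove_eq (x := ⟨m, h1⟩) (y := k)
      (fun h => h2 (congrArg Fin.val h))
    exact ⟨i, by rw [hi]⟩
  · rintro ⟨i, rfl⟩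
    exact ⟨(k.succAbove i).2, fun h => Fin.succAbove_ne k i (Fin.ext h)⟩

lemma succAbove_val_mono {r : ℕ} (k : Fin (r+1)) :
    StrictMono (fun i : Fin r => ((k.succAbove i : Fin (r+1)) : ℕ)) :=
  fun _ _ h => Fin.strictMono_succAbove k h

lemma substAlong_rename {r : ℕ} (k : Fin (r+1)) (f : MvPolynomial (Fin r) ℚ) :
    substAlong (fun _ : Fin 1 => Finset.range (r+1) \ {(k : ℕ)}) (rename (iotaV r) f) =
      rename (fun i => iotaV (r+1) (k.succAbove i)) f := by
  unfold substAlong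
  rw [aeval_rename]
  refine DFunLike.congr_fun (algHom_ext (fun i => ?_)) f
  simp only [aeval_X, rename_X, Function.comp, iotaV]
  rw [sort_getD _ (succAbove_val_mono k) _ (compl_image k)]

lemma cohaMul_eq {Q : FinQuiver n} {γ₁ γ₂ : Fin n → ℕ} {f g P : PolyQ n}
    (h : algebraMap (PolyQ n) (FractionRing (PolyQ n)) P = cohaMulRat Q γ₁ γ₂ f g) :
    cohaMul Q γ₁ γ₂ f g = P := by
  have hex : ∃ P : PolyQ n,
      algebraMap (PolyQ n) (FractionRing (PolyQ n)) P = cohaMulRat Q γ₁ γ₂ f g := ⟨P, h⟩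
  unfold cohaMul
  rw [dif_pos hex]
  exact IsFractionRing.injective (PolyQ n) (FractionRing (PolyQ n)) (hex.choose_spec.trans h.symm)

lemma cohaMulRat_eq {r : ℕ} (f : MvPolynomial (Fin r) ℚ) (p : ℕ) :
    cohaMulRat A1 (fun _ => r) oneDim (rename (iotaV r) f) (psi p) =
      ∑ k : Fin (r+1),
        algebraMap (PolyQ 1) (FractionRing (PolyQ 1))
          (rename (fun i => iotaV (r+1) (k.succAbove i)) f) *
        algebraMap (PolyQ 1) (FractionRing (PolyQ 1)) (X (iotaV (r+1) k)) ^ p /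
        ∏ i : Fin r, (algebraMap (PolyQ 1) (FractionRing (PolyQ 1)) (X (iotaV (r+1) k)) -
          algebraMap (PolyQ 1) (FractionRing (PolyQ 1)) (X (iotaV (r+1) (k.succAbove i)))) := by
  unfold cohaMulRat
  symm
  refine Finset.sum_bij (fun (k : Fin (r+1)) _ => fun _ : Fin 1 => Finset.range (r+1) \ {(k : ℕ)})
    ?_ ?_ ?_ ?_
  · intro k _
    simp only [shuffles, oneDim, Fintype.mem_piFinset, Finset.mem_filter, Finset.mem_powerset]
    intro _
    refine ⟨Finset.sdiff_subset, ?_⟩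
    rw [compl_image, Finset.card_image_of_injective _ (succAbove_val_mono k).injective]
    simp
  · intro k _ l _ h
    have h0 := congrFun h 0
    by_contra hne
    have : (k : ℕ) ∈ Finset.range (r+1) \ {(l : ℕ)} := by
      simp [Fin.val_inj, hne]
      omega
    rw [← h0] at this
    simp at this
  · intro S hS
    simp only [shuffles, oneDim, Fintype.mem_piFinset, Finset.mem_filter,
      Finset.mem_powerset] at hS
    obtain ⟨hsub, hcard⟩ := hS 0
    have hc : (Finset.range (r+1) \ S 0).card = 1 := by
      rw [Finset.card_sdiff_of_subset hsub, hcard]; simp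
    obtain ⟨m, hm⟩ := Finset.card_eq_one.1 hc
    have hmr : m < r + 1 := by
      have : m ∈ Finset.range (r+1) \ S 0 := by rw [hm]; simp
      simp at this
      omega
    refine ⟨⟨m, hmr⟩, Finset.mem_univ _, ?_⟩
    funext v
    rw [Subsingleton.elim v 0]
    simp only
    rw [← hm, Finset.sdiff_sdiff_eq_self hsub]
  · intro k _
    have hcompl : shuffleCompl (fun _ : Fin 1 => r) oneDim
        (fun _ : Fin 1 => Finset.range (r+1) \ {(k : ℕ)}) = fun _ => {(k : ℕ)} := by
      funext v
      simp only [shuffleCompl, oneDim]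
      rw [Finset.sdiff_sdiff_eq_self]
      simpa using k.is_le
    have hnum : interactionNum A1 (fun _ : Fin 1 => r) oneDim
        (fun _ : Fin 1 => Finset.range (r+1) \ {(k : ℕ)}) = 1 := by
      unfold interactionNum
      have : IsEmpty A1.Arr := inferInstanceAs (IsEmpty Empty)
      exact Finset.prod_of_isEmpty _
    have hpsi : substAlong (fun _ : Fin 1 => {(k : ℕ)}) (psi p) = X (iotaV (r+1) k) ^ p := by
      simp [substAlong, psi, iotaV]
    rw [hcompl, hnum, hpsi, substAlong_rename, mul_one, map_mul, map_pow]
    congr 1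
    unfold interactionDen
    rw [hcompl]
    simp only [Finset.prod_singleton, Finset.univ_unique, compl_image]
    rw [Finset.prod_image (fun _ _ _ _ h => (succAbove_val_mono k).injective h)]
    simp [map_prod, iotaV]

lemma cohaMul_schurP {r : ℕ} (a : Fin (r+1) → ℕ) :
    cohaMul A1 (fun _ => r) oneDim (rename (iotaV r) (schurP fun i => a i.castSucc))
      (psi (a (Fin.last r))) = rename (iotaV (r+1)) (schurP a) := by
  apply cohaMul_eq
  rw [cohaMulRat_eq]
  have hinj : Function.Injective (algebraMap (PolyQ 1) (FractionRing (PolyQ 1))) :=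
    IsFractionRing.injective _ _
  have hx : Function.Injective (fun i : Fin (r+1) =>
      algebraMap (PolyQ 1) (FractionRing (PolyQ 1)) (X (iotaV (r+1) i))) :=
    fun i j h => iotaV_inj _ (X_injective (hinj h))
  have h := field_step _ hx a (fun k => algebraMap (PolyQ 1) (FractionRing (PolyQ 1))
          (rename (fun i => iotaV (r+1) (k.succAbove i)) (schurP fun i => a i.castSucc))) (by
    intro k
    have h := congrArg (fun q => algebraMap (PolyQ 1) (FractionRing (PolyQ 1))
      (rename (fun i => iotaV (r+1) (k.succAbove i)) q)) (schurP_spec (fun i => a i.castSucc))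
    simp only [map_mul, rename_gvan, gvan_map] at h
    exact h.symm)
  have h2 := congrArg (fun q => algebraMap (PolyQ 1) (FractionRing (PolyQ 1))
      (rename (iotaV (r+1)) q)) (schurP_spec a)
  simp only [map_mul, rename_gvan, gvan_map] at h2
  exact mul_left_cancel₀ (van_ne_zero _ hx) (h2.symm.trans h.symm)

lemma cohaProd_psi : ∀ (r : ℕ) (a : Fin r → ℕ),
    cohaProd A1 (List.ofFn fun u => (oneDim, psi (a u))) =
      ((fun _ => r), rename (iotaV r) (schurP a))
  | 0, a => by
    have h : schurP a = 1 := by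
      have := schurP_spec a
      simpa [gvan] using this.symm
    simp [cohaProd, h]
  | 1, a => by
    have h : schurP a = X 0 ^ a 0 := by
      have := schurP_spec a
      simpa [gvan] using this.symm
    simp [cohaProd, h, psi, iotaV]
    rfl
  | (r+2), a => by
    have ih := cohaProd_psi (r+1) (fun i => a i.castSucc)
    rw [List.ofFn_succ']
    rw [List.ofFn_succ] at ih ⊢
    rw [List.concat_eq_append, List.cons_append]
    simp only [cohaProd] at ih ⊢
    rw [List.foldl_append, ih]
    simp only [List.foldl_cons, List.foldl_nil]
    rw [cohaMul_schurP]
    rfl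

lemma cohaProdFin_psi {r : ℕ} (a : Fin r → ℕ) :
    cohaProdFin A1 (fun _ => oneDim) (fun u => psi (a u)) = rename (iotaV r) (schurP a) := by
  unfold cohaProdFin
  rw [cohaProd_psi]

lemma rename_mem_Hspace {r : ℕ} (f : MvPolynomial (Fin r) ℚ) (hf : f.IsSymmetric) :
    rename (iotaV r) f ∈ Hspace (fun _ : Fin 1 => r) := by
  refine ⟨?_, ?_⟩
  · intro p hp
    have := vars_rename (iotaV r) f hp
    obtain ⟨i, _, rfl⟩ := Finset.mem_image.1 this
    exact i.2
  · intro v σ hσ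
    have hlt : ∀ i : Fin r, σ i < r := by
      intro i
      by_cases h : σ i = i
      · rw [h]; exact i.2
      · exact hσ _ (fun h' => h (σ.injective h'))
    let τ : Fin r → Fin r := fun i => ⟨σ i, hlt i⟩
    have hτ : Function.Injective τ := by
      intro i j h
      exact Fin.ext (σ.injective (congrArg Fin.val h))
    have h := hf (Equiv.ofBijective τ (Finite.injective_iff_bijective.1 hτ))
    conv_rhs => rw [← h]
    rw [rename_rename, rename_rename]
    congr 2
    funext i
    simp [vertexPerm, iotaV, τ, Subsingleton.elim v 0]

lemma Hspace_le {r : ℕ} (g : PolyQ 1) (hg : g ∈ Hspace (fun _ : Fin 1 => r)) :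
    ∃ f : MvPolynomial (Fin r) ℚ, f.IsSymmetric ∧ rename (iotaV r) f = g := by
  obtain ⟨h1, h2⟩ := hg
  obtain ⟨f, rfl⟩ := exists_rename_eq_of_vars_subset_range g (iotaV r) (iotaV_inj r) (by
    intro p hp
    exact ⟨⟨p.2, h1 p hp⟩, Prod.ext (Subsingleton.elim _ _) rfl⟩)
  refine ⟨f, ?_, rfl⟩
  intro e
  apply rename_injective _ (iotaV_inj r)
  have h := h2 0 (e.viaEmbedding Fin.valEmbedding) (by
    intro j hj
    by_contra hlt
    apply hj
    apply Equiv.Perm.viaEmbedding_apply_of_notMem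
    rintro ⟨i, rfl⟩
    exact hlt i.2)
  conv_rhs => rw [← h]
  rw [rename_rename, rename_rename]
  congr 2
  funext i
  have := Equiv.Perm.viaEmbedding_apply e Fin.valEmbedding i
  simp only [Fin.valEmbedding_apply] at this
  simp [vertexPerm, iotaV, this]

/-- The products `ψ_{a₁} * ⋯ * ψ_{a_r}`, over strictly increasing
sequences `a₁ < ⋯ < a_r` of nonnegative integers, form a `ℚ`-basis of `ℋ_r(A₁)`:
they are linearly independent and span the space of symmetric polynomials in
`x₁,…,x_r`.  In particular `ℋ(A₁)` is generated under `*` by `ℋ₁(A₁)`. -/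
theorem psi_products_basis (r : ℕ) :
    LinearIndependent ℚ (fun a : {a : Fin r → ℕ // StrictMono a} =>
        cohaProdFin A1 (fun _ => oneDim) (fun u => psi (a.1 u))) ∧
      Submodule.span ℚ (Set.range (fun a : {a : Fin r → ℕ // StrictMono a} =>
        cohaProdFin A1 (fun _ => oneDim) (fun u => psi (a.1 u)))) =
        Hspace (fun _ : Fin 1 => r) := by
  simp only [cohaProdFin_psi]
  constructor
  · exact (schurP_li r).map' (rename (iotaV r)).toLinearMap
      (LinearMap.ker_eq_bot.2 (rename_injective _ (iotaV_inj r)))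
  · have hr : Set.range (fun a : {a : Fin r → ℕ // StrictMono a} =>
        rename (iotaV r) (schurP a.1)) = (rename (iotaV r)).toLinearMap ''
        (Set.range fun a : {a : Fin r → ℕ // StrictMono a} => schurP a.1) := by
      rw [← Set.range_comp]
      rfl
    rw [hr, Submodule.span_image]
    apply le_antisymm
    · rw [Submodule.map_span_le]
      rintro _ ⟨a, rfl⟩
      exact rename_mem_Hspace _ (schurP_symm _)
    · intro g hg
      obtain ⟨f, hf, rfl⟩ := Hspace_le g hg
      exact ⟨f, schurP_span f hf, rfl⟩
end
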